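/- Let d ≥ 1 be an integer. There exists a constant C = C(d) > 0 such that the following holds. Let F : ℝ^d × (0,∞) → ℂ be slice-Schwartz and suppose in addition that F(·, t) = 0 for all t outside some compact subset of (0,∞). Define u(x, t) := ∫_0^∞ (2π)^{−d} ∫_{ℝ^d} e^{i x·ξ} e^{−|t−y| |ξ|} F̂(ξ, y) dξ dy, where F̂(·, y) denotes the Fourier transform of F(·, y) in the x-variable. Then for every s ∈ ℝ, 1 ≤ p, r ≤ ∞ and 1 ≤ q ≤ q₁ ≤ ∞, one has ‖u‖_{L̃^{q₁}(Ḃ^{s + 1/q₁}_{p,r})} ≤ C ‖F‖_{L̃^{q}(Ḃ^{s + 1/q − 1}_{p,r})}, with the convention 1/∞ = 0. (Duhamel-type maximal regularity estimate for the kernel e^{−|t−y||∇|} in Chemin–Lerner spaces, expressing a gain of one derivative.) -/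

import Mathlib

open MeasureTheory Filter Complex
open scoped ENNReal NNReal RealInnerProductSpace Topology

noncomputable section

abbrev Rd (d : ℕ) := EuclideanSpace ℝ (Fin d)

/-- Fourier transform with the paper's convention `F[f](ξ) = ∫ e^{-i x·ξ} f(x) dx`. -/
def FT {d : ℕ} (f : Rd d → ℂ) (ξ : Rd d) : ℂ :=
  ∫ x : Rd d, Complex.exp (-Complex.I * (↑(⟪x, ξ⟫) : ℂ)) * f x

/-- A Littlewood–Paley family: a Schwartz function `φ₀` whose Fourier transform is
real, takes values in `[0,1]`, is supported in the annulus `1/2 ≤ |ξ| ≤ 2`, and whose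
dyadic dilates sum to `1` away from the origin. -/
structure LPData (d : ℕ) where
  φ : SchwartzMap (Rd d) ℂ
  him : ∀ ξ : Rd d, (FT (⇑φ) ξ).im = 0
  h0 : ∀ ξ : Rd d, 0 ≤ (FT (⇑φ) ξ).re
  h1 : ∀ ξ : Rd d, (FT (⇑φ) ξ).re ≤ 1
  hsupp : ∀ ξ : Rd d, FT (⇑φ) ξ ≠ 0 → (1/2 : ℝ) ≤ ‖ξ‖ ∧ ‖ξ‖ ≤ 2
  hsum : ∀ ξ : Rd d, ξ ≠ 0 → HasSum (fun j : ℤ => FT (⇑φ) ((2:ℝ) ^ (-j) • ξ)) 1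

/-- Littlewood–Paley block `Δ_j f = φ_j * f`, where `φ_j(x) = 2^{dj} φ₀(2^j x)`. -/
def LP {d : ℕ} (P : LPData d) (j : ℤ) (f : Rd d → ℂ) (x : Rd d) : ℂ :=
  ∫ y : Rd d, (((2:ℝ) ^ ((d : ℤ) * j) : ℝ) : ℂ) * P.φ ((2:ℝ) ^ j • y) * f (x - y)

/-- `ℓ^r(ℤ)`-norm of a family of extended nonnegative reals. -/
def ellNorm (r : ℝ≥0∞) (a : ℤ → ℝ≥0∞) : ℝ≥0∞ :=
  if r = ∞ then ⨆ j, a j else (∑' j, a j ^ r.toReal) ^ (1 / r.toReal)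

/-- Homogeneous Besov norm `‖f‖_{Ḃ^s_{p,r}}`. -/
def besov {d : ℕ} (P : LPData d) (s : ℝ) (p r : ℝ≥0∞) (f : Rd d → ℂ) : ℝ≥0∞ :=
  ellNorm r fun j => ENNReal.ofReal ((2:ℝ) ^ (s * (j:ℝ))) * eLpNorm (LP P j f) p volume

/-- Mixed norm `L^q_t(0,∞; L^p_x)`. -/
def LqLp {d : ℕ} (q p : ℝ≥0∞) (g : ℝ → Rd d → ℂ) : ℝ≥0∞ :=
  if q = ∞ then essSup (fun t => eLpNorm (g t) p volume) (volume.restrict (Set.Ioi (0:ℝ)))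
  else (∫⁻ t in Set.Ioi (0:ℝ), (eLpNorm (g t) p volume) ^ q.toReal) ^ (1 / q.toReal)

/-- Chemin–Lerner norm `‖f‖_{L̃^q(Ḃ^s_{p,r})}` on `ℝ^d × (0,∞)`. -/
def CL {d : ℕ} (P : LPData d) (s : ℝ) (q p r : ℝ≥0∞) (f : ℝ → Rd d → ℂ) : ℝ≥0∞ :=
  ellNorm r fun j => ENNReal.ofReal ((2:ℝ) ^ (s * (j:ℝ))) * LqLp q p fun t => LP P j (f t)

/-- `f : ℝ^d × (0,∞) → ℂ` (curried as `f t x`) is slice-Schwartz: continuous on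
`ℝ^d × (0,∞)` and Schwartz in `x` for each fixed `t > 0`. -/
def SliceSchwartz {d : ℕ} (f : ℝ → Rd d → ℂ) : Prop :=
  ContinuousOn (fun z : Rd d × ℝ => f z.2 z.1) (Set.univ ×ˢ Set.Ioi 0) ∧
  ∀ t : ℝ, 0 < t → ∃ g : SchwartzMap (Rd d) ℂ, f t = ⇑g

/-!
On the block `Δ_j` the kernel `e^{-|t-y||∇|}` has `L¹` norm at most a constant times
`(1 + 2^j |t - y|)^{-2}`, uniformly in `j`. Minkowski's inequality in `x` and Young's inequality in
`t`, the scalar kernel being bounded by `1` with mass `π 2^{-j}`, therefore bound the `L^{q₁}L^p`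
norm of `Δ_j u` by `(π 2^{-j})^{1 - 1/q + 1/q₁}` times the `L^q L^p` norm of `Δ_j F`, which is the
claim block by block.

The difficulty is that `F` is Schwartz only slice by slice, without uniformity in `t`. The integral
over `y` defining `u` may diverge, in which case its value is `0`, and `Δ_j` cannot simply be
interchanged with it. If the right-hand side is finite, the dyadic blocks of `F` grow at most
polynomially in `2^|k|`, with constants integrable in time. Local boundedness of `F` and the decay
of the Poisson kernel make the high frequencies of the integrand locally integrable. The low
frequencies behave like polynomials, their finite differences of high order being small, so
convergence on a set of positive measure propagates to convergence everywhere with polynomial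
growth. Hence `u(t)` is either `0` almost everywhere or an absolutely convergent integral of
polynomial growth, and in the second case truncating the convolution kernel of `Δ_j` bounds
`‖Δ_j ∫‖` by `∫ ‖Δ_j‖`.
-/

namespace Duhamel

open scoped FourierTransform SchwartzMap

section MixedNorms

variable {α β : Type*} [MeasurableSpace α] [MeasurableSpace β] {μ : Measure α} {ν : Measure β}

lemma lintegral_mul_rpow_le {k f : α → ℝ≥0∞} (hk : Measurable k) (hf : Measurable f) {q : ℝ}
    (hq : 1 ≤ q) :
    (∫⁻ a, k a * f a ∂μ) ^ q ≤ (∫⁻ a, k a ∂μ) ^ (q - 1) * ∫⁻ a, k a * f a ^ q ∂μ := by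
  have hq0 : 0 < q := one_pos.trans_le hq
  have h := eLpNorm_le_eLpNorm_mul_rpow_measure_univ (μ := μ.withDensity k)
    (ENNReal.one_le_ofReal.2 hq) hf.aestronglyMeasurable
  rw [eLpNorm_one_eq_lintegral_enorm, eLpNorm_eq_lintegral_rpow_enorm_toReal (by simpa using hq0)
    ENNReal.ofReal_ne_top, ENNReal.toReal_ofReal hq0.le,
    lintegral_withDensity_eq_lintegral_mul _ hk hf.enorm,
    lintegral_withDensity_eq_lintegral_mul _ hk (hf.enorm.pow_const q),
    withDensity_apply _ .univ, setLIntegral_univ] at h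
  calc (∫⁻ a, k a * f a ∂μ) ^ q
      ≤ ((∫⁻ a, k a * f a ^ q ∂μ) ^ (1 / q) * (∫⁻ a, k a ∂μ) ^ (1 - 1 / q)) ^ q := by
        gcongr
        simpa using h
    _ = (∫⁻ a, k a ∂μ) ^ (q - 1) * ∫⁻ a, k a * f a ^ q ∂μ := by
        rw [ENNReal.mul_rpow_of_nonneg _ _ hq0.le, ← ENNReal.rpow_mul, ← ENNReal.rpow_mul,
          one_div_mul_cancel hq0.ne', ENNReal.rpow_one, mul_comm, sub_mul, one_mul,
          one_div_mul_cancel hq0.ne']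

lemma measurable_eLpNorm_section [SFinite μ] {h : β → α → ℝ≥0∞}
    (hh : Measurable (Function.uncurry h)) (p : ℝ≥0∞) :
    Measurable fun y => eLpNorm (h y) p μ := by
  rcases eq_or_ne p 0 with rfl | hp0
  · simp
  rcases eq_or_ne p ∞ with rfl | hp
  · refine measurable_of_Iic fun c => ?_
    have hset : (fun y => eLpNorm (h y) ∞ μ) ⁻¹' Set.Iic c = {y | μ {x | c < h y x} = 0} := by
      ext y
      have hae : (∀ᵐ x ∂μ, h y x ≤ c) ↔ μ {x | c < h y x} = 0 := by simp [ae_iff]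
      rw [Set.mem_preimage, Set.mem_Iic, Set.mem_ofPred_eq, ← hae, eLpNorm_exponent_top]
      exact ⟨fun hy => (enorm_ae_le_eLpNormEssSup (h y) μ).mono fun _ hx => hx.trans hy,
        fun hy => eLpNormEssSup_le_of_ae_enorm_bound hy⟩
    rw [hset]
    exact measurable_measure_prodMk_left (measurableSet_lt measurable_const hh)
      (measurableSet_singleton 0)
  · simp only [eLpNorm_eq_lintegral_rpow_enorm_toReal hp0 hp, enorm_eq_self]
    exact (hh.pow_const p.toReal).lintegral_prod_right'.pow_const _

lemma lintegral_mul_div_rpow_le {f : α → ℝ≥0∞} (hf : Measurable f) {p : ℝ≥0∞} (hp0 : p ≠ 0)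
    (hp_top : p ≠ ∞) {b : ℝ≥0∞} (hle : eLpNorm f p μ ≤ b) :
    ∫⁻ x, b * (f x / b) ^ p.toReal ∂μ ≤ b := by
  have hp : 0 < p.toReal := ENNReal.toReal_pos hp0 hp_top
  have hle' : ∫⁻ x, f x ^ p.toReal ∂μ ≤ b ^ p.toReal := by
    rwa [eLpNorm_eq_lintegral_rpow_enorm_toReal hp0 hp_top, one_div,
      ENNReal.rpow_inv_le_iff hp] at hle
  simp_rw [ENNReal.div_rpow_of_nonneg _ _ hp.le, div_eq_mul_inv]
  rw [lintegral_const_mul _ ((hf.pow_const _).mul_const _), lintegral_mul_const _ (hf.pow_const _),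
    ← div_eq_mul_inv]
  exact mul_le_of_le_one_right' (ENNReal.div_le_of_le_mul (by rwa [one_mul]))

-- Jensen's inequality with the weight `y ↦ b y`.
lemma eLpNorm_lintegral_le_of_le [SFinite μ] [SFinite ν] {h : β → α → ℝ≥0∞}
    (hh : Measurable (Function.uncurry h)) {p : ℝ≥0∞} (hp : 1 ≤ p) (hp_top : p ≠ ∞)
    {b : β → ℝ≥0∞} (hb : Measurable b) (hb0 : ∀ y, b y ≠ 0) (hb_top : ∀ᵐ y ∂ν, b y ≠ ∞)
    (hle : ∀ y, eLpNorm (h y) p μ ≤ b y) :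
    eLpNorm (fun x => ∫⁻ y, h y x ∂ν) p μ ≤ ∫⁻ y, b y ∂ν := by
  have hp1 : 1 ≤ p.toReal := by simpa using ENNReal.toReal_mono hp_top hp
  have hp0 : 0 < p.toReal := one_pos.trans_le hp1
  have hp' : p ≠ 0 := (one_pos.trans_le hp).ne'
  set S := ∫⁻ y, b y ∂ν
  have hquot : Measurable fun z : α × β => b z.2 * (h z.2 z.1 / b z.2) ^ p.toReal :=
    (hb.comp measurable_snd).mul
      (((hh.comp measurable_swap).div (hb.comp measurable_snd)).pow_const _)
  have jensen (x : α) : (∫⁻ y, h y x ∂ν) ^ p.toReal ≤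
      S ^ (p.toReal - 1) * ∫⁻ y, b y * (h y x / b y) ^ p.toReal ∂ν := by
    refine le_trans (le_of_eq ?_) (lintegral_mul_rpow_le hb
      (hh.of_uncurry_right.div hb) hp1)
    congr 1
    refine lintegral_congr_ae (hb_top.mono fun y hy => ?_)
    exact (ENNReal.mul_div_cancel (hb0 y) hy).symm
  rw [eLpNorm_eq_lintegral_rpow_enorm_toReal hp' hp_top, one_div, ENNReal.rpow_inv_le_iff hp0]
  calc ∫⁻ x, ‖∫⁻ y, h y x ∂ν‖ₑ ^ p.toReal ∂μ
      ≤ ∫⁻ x, S ^ (p.toReal - 1) * ∫⁻ y, b y * (h y x / b y) ^ p.toReal ∂ν ∂μ :=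
        lintegral_mono jensen
    _ = S ^ (p.toReal - 1) * ∫⁻ y, ∫⁻ x, b y * (h y x / b y) ^ p.toReal ∂μ ∂ν := by
        rw [lintegral_const_mul _ hquot.lintegral_prod_right',
          lintegral_lintegral_swap hquot.aemeasurable]
    _ ≤ S ^ (p.toReal - 1) * S := by
        gcongr
        exact lintegral_mono fun y =>
          lintegral_mul_div_rpow_le hh.of_uncurry_left hp' hp_top (hle y)
    _ = S ^ p.toReal := by
        conv_lhs => rw [← ENNReal.rpow_one S, ← ENNReal.rpow_mul, one_mul]
        rw [← ENNReal.rpow_add_of_nonneg _ _ (sub_nonneg.2 hp1) zero_le_one, sub_add_cancel]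

lemma eLpNorm_top_lintegral_le [SFinite μ] [SFinite ν] {h : β → α → ℝ≥0∞}
    (hh : Measurable (Function.uncurry h)) :
    eLpNorm (fun x => ∫⁻ y, h y x ∂ν) ∞ μ ≤ ∫⁻ y, eLpNorm (h y) ∞ μ ∂ν := by
  have hset : MeasurableSet {z : β × α | h z.1 z.2 ≤ eLpNorm (h z.1) ∞ μ} :=
    measurableSet_le hh ((measurable_eLpNorm_section hh ∞).comp measurable_fst)
  have hae : ∀ᵐ x ∂μ, ∀ᵐ y ∂ν, h y x ≤ eLpNorm (h y) ∞ μ :=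
    (Measure.ae_ae_comm hset).1 (.of_forall fun y => enorm_ae_le_eLpNormEssSup (h y) μ)
  exact eLpNormEssSup_le_of_ae_enorm_bound (hae.mono fun x hx => lintegral_mono_ae hx)

theorem eLpNorm_lintegral_le [SFinite μ] [IsFiniteMeasure ν] {h : β → α → ℝ≥0∞}
    (hh : Measurable (Function.uncurry h)) {p : ℝ≥0∞} (hp : 1 ≤ p) :
    eLpNorm (fun x => ∫⁻ y, h y x ∂ν) p μ ≤ ∫⁻ y, eLpNorm (h y) p μ ∂ν := by
  rcases eq_or_ne p ∞ with rfl | hp_top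
  · exact eLpNorm_top_lintegral_le hh
  have ha := measurable_eLpNorm_section (μ := μ) hh p
  rcases eq_or_ne (∫⁻ y, eLpNorm (h y) p μ ∂ν) ∞ with hS | hS
  · exact hS ▸ le_top
  refine ENNReal.le_of_forall_pos_le_add fun ε hε _ => ?_
  set δ : ℝ≥0 := ε / ((ν Set.univ).toNNReal + 1)
  have hδ : (δ : ℝ≥0∞) * ν Set.univ ≤ ε := by
    rw [← ENNReal.coe_toNNReal (measure_ne_top ν Set.univ), ← ENNReal.coe_mul, ENNReal.coe_le_coe,
      div_mul_eq_mul_div, div_le_iff₀ (by positivity)]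
    gcongr
    exact le_self_add
  have hδ0 : (δ : ℝ≥0∞) ≠ 0 := ENNReal.coe_ne_zero.2 (by positivity)
  calc eLpNorm (fun x => ∫⁻ y, h y x ∂ν) p μ ≤ ∫⁻ y, (eLpNorm (h y) p μ + δ) ∂ν :=
        eLpNorm_lintegral_le_of_le hh hp hp_top (ha.add_const _) (by simp [hδ0])
          ((ae_lt_top ha hS).mono fun y hy => by simp [hy.ne]) fun y => le_self_add
    _ ≤ ∫⁻ y, eLpNorm (h y) p μ ∂ν + ε := by
        rw [lintegral_add_right _ measurable_const, lintegral_const]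
        gcongr

section Young

variable {k : α → α → ℝ≥0∞} {A : ℝ≥0∞} {a : α → ℝ≥0∞} {q q₁ : ℝ≥0∞}

lemma one_sub_inv_toReal_nonneg (hq : 1 ≤ q) : 0 ≤ 1 - q.toReal⁻¹ := by
  obtain rfl | hq_top := eq_or_ne q ∞
  · simp
  · exact sub_nonneg.2 (inv_le_one_of_one_le₀ (by simpa using ENNReal.toReal_mono hq_top hq))

lemma lintegral_mul_le_rpow_mul_eLpNorm {w : α → ℝ≥0∞} (hw : Measurable w) (hw1 : ∀ y, w y ≤ 1)
    (hwA : ∫⁻ y, w y ∂μ ≤ A) (ha : Measurable a) (hq : 1 ≤ q) :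
    ∫⁻ y, w y * a y ∂μ ≤ A ^ (1 - q.toReal⁻¹) * eLpNorm a q μ := by
  have hexp := one_sub_inv_toReal_nonneg hq
  have hle : μ.withDensity w ≤ μ :=
    (withDensity_mono (.of_forall hw1)).trans_eq withDensity_one
  calc ∫⁻ y, w y * a y ∂μ = eLpNorm a 1 (μ.withDensity w) := by
        rw [eLpNorm_one_eq_lintegral_enorm, lintegral_withDensity_eq_lintegral_mul _ hw ha.enorm]
        rfl
    _ ≤ eLpNorm a q (μ.withDensity w) * (μ.withDensity w) Set.univ ^ (1 - q.toReal⁻¹) := by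
        simpa only [ENNReal.toReal_one, one_div, inv_one] using
          eLpNorm_le_eLpNorm_mul_rpow_measure_univ hq ha.aestronglyMeasurable
    _ ≤ eLpNorm a q μ * A ^ (1 - q.toReal⁻¹) := by
        rw [withDensity_apply _ .univ, setLIntegral_univ]
        gcongr
    _ = A ^ (1 - q.toReal⁻¹) * eLpNorm a q μ := mul_comm _ _

lemma lintegral_rpow_lintegral_mul_le [SFinite μ] (hk : Measurable (Function.uncurry k))
    (hrow : ∀ t, ∫⁻ y, k t y ∂μ ≤ A) (hcol : ∀ y, ∫⁻ t, k t y ∂μ ≤ A) (ha : Measurable a)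
    {Q : ℝ} (hQ : 1 ≤ Q) :
    ∫⁻ t, (∫⁻ y, k t y * a y ∂μ) ^ Q ∂μ ≤ A ^ Q * ∫⁻ y, a y ^ Q ∂μ := by
  have hm : Measurable fun z : α × α => k z.1 z.2 * a z.2 ^ Q :=
    hk.mul ((ha.comp measurable_snd).pow_const _)
  calc ∫⁻ t, (∫⁻ y, k t y * a y ∂μ) ^ Q ∂μ
      ≤ ∫⁻ t, A ^ (Q - 1) * ∫⁻ y, k t y * a y ^ Q ∂μ ∂μ := by
        refine lintegral_mono fun t => (lintegral_mul_rpow_le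
          hk.of_uncurry_left ha hQ).trans ?_
        gcongr
        exact hrow t
    _ = A ^ (Q - 1) * ∫⁻ y, ∫⁻ t, k t y * a y ^ Q ∂μ ∂μ := by
        rw [lintegral_const_mul _ hm.lintegral_prod_right',
          lintegral_lintegral_swap hm.aemeasurable]
    _ ≤ A ^ (Q - 1) * ∫⁻ y, A * a y ^ Q ∂μ := by
        gcongr with y
        rw [lintegral_mul_const (a y ^ Q) (hk.of_uncurry_right : Measurable fun t => k t y)]
        gcongr
        exact hcol y
    _ = A ^ Q * ∫⁻ y, a y ^ Q ∂μ := by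
        rw [lintegral_const_mul _ (ha.pow_const _), ← mul_assoc]
        congr 1
        conv_lhs => rw [← ENNReal.rpow_one A, ← ENNReal.rpow_mul, one_mul]
        rw [← ENNReal.rpow_add_of_nonneg _ _ (sub_nonneg.2 hQ) zero_le_one, sub_add_cancel]

lemma lintegral_rpow_le_of_le {v : α → ℝ≥0∞} (hv : Measurable v) {B : ℝ≥0∞}
    (hB : ∀ t, v t ≤ B) {Q Q₁ : ℝ} (hQ : 0 < Q) (hQQ : Q ≤ Q₁) :
    ∫⁻ t, v t ^ Q₁ ∂μ ≤ B ^ (Q₁ - Q) * ∫⁻ t, v t ^ Q ∂μ := by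
  rw [← lintegral_const_mul _ (hv.pow_const _)]
  refine lintegral_mono fun t => ?_
  calc v t ^ Q₁ = v t ^ (Q₁ - Q) * v t ^ Q := by
        rw [← ENNReal.rpow_add_of_nonneg _ _ (sub_nonneg.2 hQQ) hQ.le, sub_add_cancel]
    _ ≤ B ^ (Q₁ - Q) * v t ^ Q := by
        gcongr
        exact hB t

theorem eLpNorm_lintegral_mul_le [SFinite μ] (hk : Measurable (Function.uncurry k))
    (hk1 : ∀ t y, k t y ≤ 1) (hA0 : A ≠ 0) (hA : A ≠ ∞) (hrow : ∀ t, ∫⁻ y, k t y ∂μ ≤ A)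
    (hcol : ∀ y, ∫⁻ t, k t y ∂μ ≤ A) (ha : Measurable a) (hq : 1 ≤ q) (hqq : q ≤ q₁) :
    eLpNorm (fun t => ∫⁻ y, k t y * a y ∂μ) q₁ μ ≤
      A ^ (1 - q.toReal⁻¹ + q₁.toReal⁻¹) * eLpNorm a q μ := by
  have hsup (t : α) : ∫⁻ y, k t y * a y ∂μ ≤ A ^ (1 - q.toReal⁻¹) * eLpNorm a q μ :=
    lintegral_mul_le_rpow_mul_eLpNorm hk.of_uncurry_left (hk1 t)
      (hrow t) ha hq
  rcases eq_or_ne q₁ ∞ with rfl | hq₁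
  · simpa using eLpNormEssSup_le_of_ae_enorm_bound (.of_forall hsup)
  have hq_top : q ≠ ∞ := ne_top_of_le_ne_top hq₁ hqq
  have hQ1 : 1 ≤ q.toReal := by simpa using ENNReal.toReal_mono hq_top hq
  have hQQ : q.toReal ≤ q₁.toReal := ENNReal.toReal_mono hq₁ hqq
  have hQ0 : 0 < q.toReal := one_pos.trans_le hQ1
  have hQ₁0 : 0 < q₁.toReal := hQ0.trans_le hQQ
  have hN : ∫⁻ y, a y ^ q.toReal ∂μ = eLpNorm a q μ ^ q.toReal := by
    rw [eLpNorm_eq_lintegral_rpow_enorm_toReal (one_pos.trans_le hq).ne' hq_top,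
      ← ENNReal.rpow_mul, one_div_mul_cancel hQ0.ne', ENNReal.rpow_one]
    rfl
  set N := eLpNorm a q μ
  have hv : Measurable fun t => ∫⁻ y, k t y * a y ∂μ :=
    (hk.mul (ha.comp measurable_snd)).lintegral_prod_right'
  rw [eLpNorm_eq_lintegral_rpow_enorm_toReal (one_pos.trans_le (hq.trans hqq)).ne' hq₁, one_div,
    ENNReal.rpow_inv_le_iff hQ₁0]
  calc ∫⁻ t, (∫⁻ y, k t y * a y ∂μ) ^ q₁.toReal ∂μ
      ≤ (A ^ (1 - q.toReal⁻¹) * N) ^ (q₁.toReal - q.toReal) *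
          ∫⁻ t, (∫⁻ y, k t y * a y ∂μ) ^ q.toReal ∂μ :=
        lintegral_rpow_le_of_le hv hsup hQ0 hQQ
    _ ≤ (A ^ (1 - q.toReal⁻¹) * N) ^ (q₁.toReal - q.toReal) * (A ^ q.toReal * N ^ q.toReal) := by
        rw [← hN]
        gcongr
        exact lintegral_rpow_lintegral_mul_le hk hrow hcol ha hQ1
    _ = (A ^ (1 - q.toReal⁻¹ + q₁.toReal⁻¹) * N) ^ q₁.toReal := by
        rw [ENNReal.mul_rpow_of_nonneg _ _ (sub_nonneg.2 hQQ),
          ENNReal.mul_rpow_of_nonneg _ _ hQ₁0.le, ← ENNReal.rpow_mul, ← ENNReal.rpow_mul,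
          mul_mul_mul_comm, ← ENNReal.rpow_add _ _ hA0 hA,
          ← ENNReal.rpow_add_of_nonneg _ _ (sub_nonneg.2 hQQ) hQ0.le]
        congr 2
        · field_simp
          ring
        · ring

end Young

end MixedNorms

section SequenceNorms

lemma ellNorm_eq_eLpNorm_count {r : ℝ≥0∞} (hr : 1 ≤ r) (a : ℤ → ℝ≥0∞) :
    ellNorm r a = eLpNorm a r Measure.count := by
  unfold ellNorm
  split_ifs with h
  · simp [h, eLpNormEssSup]
  · simp [eLpNorm_eq_lintegral_rpow_enorm_toReal (one_pos.trans_le hr).ne' h,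
      lintegral_count]

lemma LqLp_eq_eLpNorm {d : ℕ} {q : ℝ≥0∞} (hq : 1 ≤ q) (p : ℝ≥0∞) (g : ℝ → Rd d → ℂ) :
    LqLp q p g = eLpNorm (fun t => eLpNorm (g t) p volume) q (volume.restrict (Set.Ioi 0)) := by
  unfold LqLp
  split_ifs with h
  · simp [h, eLpNormEssSup]
  · simp [eLpNorm_eq_lintegral_rpow_enorm_toReal (one_pos.trans_le hq).ne' h]

end SequenceNorms

section FiniteDifferences

variable {F : Type*} [NormedAddCommGroup F]

lemma enorm_le_of_enorm_fwdDiff_iter_le {N : ℕ} {b : ℕ → F} {A D : ℝ≥0∞}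
    (hA : ∀ i < N, ‖(fwdDiff 1)^[i] b 0‖ₑ ≤ A) (hD : ∀ m, ‖(fwdDiff 1)^[N] b m‖ₑ ≤ D) (m : ℕ) :
    ‖b m‖ₑ ≤ (A + D) * (1 + m) ^ N := by
  induction N generalizing b m with
  | zero => simpa using (hD m).trans le_add_self
  | succ N ih =>
    have hstep (j : ℕ) : ‖fwdDiff 1 b j‖ₑ ≤ (A + D) * (1 + j) ^ N :=
      ih (fun i hi => hA (i + 1) (by lia)) hD j
    have htel : b m = b 0 + ∑ j ∈ Finset.range m, fwdDiff 1 b j := by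
      simp only [fwdDiff, Finset.sum_range_sub, add_sub_cancel]
    calc ‖b m‖ₑ ≤ ‖b 0‖ₑ + ∑ j ∈ Finset.range m, ‖fwdDiff 1 b j‖ₑ := by
          rw [htel]
          exact (enorm_add_le _ _).trans (by gcongr; exact enorm_sum_le _ _)
      _ ≤ A + ∑ j ∈ Finset.range m, (A + D) * (1 + m) ^ N := by
          gcongr with j hj
          · exact hA 0 N.succ_pos
          · refine (hstep j).trans ?_
            gcongr
            exact (Finset.mem_range.1 hj).le
      _ ≤ (A + D) * (1 + m) ^ N + m * ((A + D) * (1 + m) ^ N) := by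
          rw [Finset.sum_const, Finset.card_range, nsmul_eq_mul]
          gcongr
          exact le_self_add.trans (le_mul_of_one_le_right' (one_le_pow₀ le_self_add))
      _ = (A + D) * (1 + m) ^ (N + 1) := by ring

variable {E : Type*} [AddCommGroup E]

lemma fwdDiff_iter_comp_add_nsmul (g : E → F) (h x : E) (i m : ℕ) :
    (fwdDiff 1)^[i] (fun j : ℕ => g (x + j • h)) m = (fwdDiff h)^[i] g (x + m • h) := by
  simp only [fwdDiff_iter_eq_sum_shift, smul_eq_mul, mul_one, add_smul, add_assoc]

lemma eq_fwdDiff_iter_sub_sum (g : E → F) (h x : E) (N : ℕ) :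
    (-1) ^ N • g x = (fwdDiff h)^[N] g x -
      ∑ j ∈ Finset.range N, ((-1 : ℤ) ^ (N - (j + 1)) * N.choose (j + 1)) •
        g (x + (j + 1) • h) := by
  rw [fwdDiff_iter_eq_sum_shift, Finset.sum_range_succ']
  simp

lemma enorm_zsmul_le_natAbs (z : ℤ) (v : F) : ‖z • v‖ₑ ≤ z.natAbs * ‖v‖ₑ := by
  have h : ‖z • v‖₊ ≤ z.natAbs * ‖v‖₊ := by
    rw [← NNReal.coe_le_coe]
    simpa [Int.norm_eq_abs, Nat.cast_natAbs] using norm_zsmul_le (n := z) (a := v)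
  simpa [enorm] using ENNReal.coe_le_coe.2 h

lemma enorm_le_sum_add_enorm_fwdDiff_iter (g : E → F) (h x : E) (N : ℕ) :
    ‖g x‖ₑ ≤ ∑ j ∈ Finset.range N, (N.choose (j + 1) : ℝ≥0∞) * ‖g (x + (j + 1) • h)‖ₑ +
      ‖(fwdDiff h)^[N] g x‖ₑ := by
  have hsign : ‖(-1 : ℤ) ^ N • g x‖ₑ = ‖g x‖ₑ := by
    rcases neg_one_pow_eq_or ℤ N with h | h <;> simp [h]
  rw [← hsign, eq_fwdDiff_iter_sub_sum g h x N, add_comm]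
  refine enorm_sub_le.trans (by
    gcongr
    refine (enorm_sum_le _ _).trans (Finset.sum_le_sum fun j _ => ?_)
    simpa [Int.natAbs_mul, Int.natAbs_pow] using enorm_zsmul_le_natAbs
      ((-1 : ℤ) ^ (N - (j + 1)) * N.choose (j + 1)) (g (x + (j + 1) • h)))

lemma enorm_fwdDiff_iter_le (g : E → F) (h x : E) (N : ℕ) {B : ℝ≥0∞}
    (hB : ∀ j ≤ N, ‖g (x + j • h)‖ₑ ≤ B) : ‖(fwdDiff h)^[N] g x‖ₑ ≤ 2 ^ N * B := by
  rw [fwdDiff_iter_eq_sum_shift]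
  calc ‖∑ k ∈ Finset.range (N + 1), ((-1 : ℤ) ^ (N - k) * N.choose k) • g (x + k • h)‖ₑ
      ≤ ∑ k ∈ Finset.range (N + 1), (N.choose k : ℝ≥0∞) * B := by
        refine (enorm_sum_le _ _).trans (Finset.sum_le_sum fun k hk => ?_)
        refine (enorm_zsmul_le_natAbs _ _).trans ?_
        simp only [Int.natAbs_mul, Int.natAbs_pow, Int.natAbs_neg, Int.natAbs_one, one_pow,
          one_mul, Int.natAbs_natCast]
        gcongr
        exact hB k (Finset.mem_range_succ_iff.1 hk)
    _ = 2 ^ N * B := by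
        rw [← Finset.sum_mul, ← Nat.cast_sum, Nat.sum_range_choose]
        simp

end FiniteDifferences

section Growth

lemma add_nsmul_mem_closedBall {E : Type*} [SeminormedAddCommGroup E] {N j : ℕ} (hj : j < N)
    {a x h : E} {r : ℝ} (hx : ‖x - a‖ ≤ r / 2) (hh : ‖h‖ ≤ r / (2 * (N + 1))) :
    x + (j + 1) • h ∈ Metric.closedBall a r := by
  have hjN : ((j + 1 : ℕ) : ℝ) ≤ N + 1 := by exact_mod_cast (Nat.succ_le_of_lt hj).trans N.le_succ
  rw [Metric.mem_closedBall, dist_eq_norm, add_sub_right_comm]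
  calc ‖x - a + (j + 1) • h‖ ≤ ‖x - a‖ + (j + 1 : ℕ) * ‖h‖ :=
        (norm_add_le _ _).trans (by gcongr; exact norm_nsmul_le)
    _ ≤ r / 2 + (N + 1) * (r / (2 * (N + 1))) := by gcongr
    _ = r := by
        field_simp
        ring

variable {E F : Type*} [NormedAddCommGroup E] [NormedSpace ℝ E] [NormedAddCommGroup F]

lemma enorm_le_mul_pow_of_enorm_fwdDiff_iter_le {N : ℕ} {g : E → F} {a : E} {ρ : ℝ} (hρ : 0 < ρ)
    {B D : ℝ≥0∞} (hB : ∀ x, ‖x - a‖ ≤ N * ρ → ‖g x‖ₑ ≤ B)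
    (hD : ∀ x h, ‖h‖ ≤ ρ → ‖(fwdDiff h)^[N] g x‖ₑ ≤ D) (x : E) :
    ‖g x‖ₑ ≤ (2 ^ N * B + D) * (1 + ⌈‖x - a‖ / ρ⌉₊) ^ N := by
  set m := ⌈‖x - a‖ / ρ⌉₊
  set h : E := (m : ℝ)⁻¹ • (x - a)
  have hmh : m • h = x - a := by
    rcases Nat.eq_zero_or_pos m with hm | hm
    · have : ‖x - a‖ ≤ 0 := by
        simpa only [div_le_iff₀ hρ, zero_mul] using Nat.ceil_eq_zero.1 hm
      simp [hm, norm_le_zero_iff.1 this]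
    · rw [← Nat.cast_smul_eq_nsmul ℝ, smul_smul, mul_inv_cancel₀ (by positivity), one_smul]
  have hh : ‖h‖ ≤ ρ := by
    rcases Nat.eq_zero_or_pos m with hm | hm
    · simp [h, hm, hρ.le]
    · rw [norm_smul, norm_inv, Real.norm_natCast, inv_mul_le_iff₀ (by positivity)]
      exact (div_le_iff₀ hρ).1 (Nat.le_ceil _)
  have hseq := enorm_le_of_enorm_fwdDiff_iter_le (b := fun j : ℕ => g (a + j • h)) (N := N)
    (A := 2 ^ N * B) (D := D) (fun i hi => ?_) (fun j => ?_) m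
  · simpa [hmh] using hseq
  · rw [fwdDiff_iter_comp_add_nsmul]
    refine (enorm_fwdDiff_iter_le g h _ i fun j hj => hB _ ?_).trans ?_
    · calc ‖a + 0 • h + j • h - a‖ = j * ‖h‖ := by simp [← Nat.cast_smul_eq_nsmul ℝ, norm_smul]
        _ ≤ N * ρ := by gcongr; lia
    · gcongr
      exact one_le_two
  · rw [fwdDiff_iter_comp_add_nsmul]
    exact hD _ h hh

variable [MeasurableSpace E] [BorelSpace E] [FiniteDimensional ℝ E] {μ : Measure E}
  [μ.IsAddHaarMeasure]

lemma addHaar_preimage_add_nsmul_le (x : E) {j : ℕ} (hj : 1 ≤ j) (s : Set E) :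
    μ ((fun h => x + j • h) ⁻¹' s) ≤ μ s := by
  have hj1 : (1 : ℝ) ≤ j := by exact_mod_cast hj
  have hpre : (fun h => x + j • h) ⁻¹' s = (fun h => (j : ℝ) • h) ⁻¹' ((fun z => x + z) ⁻¹' s) := by
    ext h
    simp [Nat.cast_smul_eq_nsmul]
  rw [hpre, Measure.addHaar_preimage_smul μ (by positivity), measure_preimage_add]
  refine mul_le_of_le_one_left' (ENNReal.ofReal_le_one.2 ?_)
  rw [abs_inv, abs_of_nonneg (by positivity)]
  exact inv_le_one_of_one_le₀ (one_le_pow₀ hj1)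

lemma exists_measure_compl_inter_closedBall_lt {s : Set E} (hs : MeasurableSet s) (hμs : μ s ≠ 0)
    {η : ℝ≥0∞} (hη : 0 < η) : ∃ a : E, ∃ r > 0, r ≤ 1 ∧
      μ (sᶜ ∩ Metric.closedBall a r) < η * μ (Metric.closedBall a r) := by
  obtain ⟨a, has, ha⟩ := Measure.exists_mem_of_measure_ne_zero_of_ae hμs
    (ae_restrict_of_ae (Besicovitch.ae_tendsto_measure_inter_div_of_measurableSet μ hs.compl))
  rw [Set.indicator_of_notMem (Set.notMem_compl_iff.2 has)] at ha
  obtain ⟨r, hr, hr0, hr1⟩ :=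
    ((ha.eventually_lt_const hη).and (Ioc_mem_nhdsGT zero_lt_one)).exists
  exact ⟨a, r, hr0, hr1, (ENNReal.div_lt_iff (.inl (Metric.measure_closedBall_pos μ a hr0).ne')
    (.inl measure_closedBall_lt_top.ne)).1 hr⟩

-- The ball is centred at a density point of `s`.
lemma exists_ball_forall_exists_progression_mem {s : Set E} (hs : MeasurableSet s) (hμs : μ s ≠ 0)
    (N : ℕ) : ∃ a : E, ∃ r > 0, ∀ x ∈ Metric.ball a r, ∃ h : E, ‖h‖ ≤ 1 ∧
      ∀ j ∈ Finset.range N, x + (j + 1) • h ∈ s := by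
  set M : ℝ := 2 * (N + 1)
  have hM : 2 ≤ M := by simp [M]
  set v : ℝ≥0∞ := ENNReal.ofReal (M ^ Module.finrank ℝ E)
  set η : ℝ≥0∞ := ((N + 1) * v)⁻¹
  have hv0 : v ≠ 0 := (ENNReal.ofReal_pos.2 (by positivity)).ne'
  have hη0 : 0 < η := ENNReal.inv_pos.2 (ENNReal.mul_ne_top (by simp) ENNReal.ofReal_ne_top)
  obtain ⟨a, r, hr0, hr1, hbad⟩ := exists_measure_compl_inter_closedBall_lt hs hμs hη0
  have hscale : μ (Metric.closedBall a r) = v * μ (Metric.closedBall 0 (r / M)) := by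
    rw [← Measure.addHaar_closedBall_mul μ a (by positivity) (by positivity),
      mul_div_cancel₀ _ (by positivity)]
  refine ⟨a, r / 2, by positivity, fun x hx => ?_⟩
  by_contra! hno
  have hcover : Metric.closedBall 0 (r / M) ⊆ ⋃ j ∈ Finset.range N,
      (fun h => x + (j + 1) • h) ⁻¹' (sᶜ ∩ Metric.closedBall a r) := by
    intro h hh
    rw [mem_closedBall_zero_iff] at hh
    obtain ⟨j, hj, hjs⟩ := hno h (hh.trans ((div_le_one (by positivity)).2 (by linarith)))
    exact Set.mem_iUnion₂.2 ⟨j, hj, hjs, add_nsmul_mem_closedBall (Finset.mem_range.1 hj)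
      (mem_ball_iff_norm.1 hx).le hh⟩
  refine lt_irrefl (μ (Metric.closedBall (0 : E) (r / M))) ?_
  calc μ (Metric.closedBall 0 (r / M))
      ≤ ∑ _ ∈ Finset.range N, μ (sᶜ ∩ Metric.closedBall a r) :=
        (measure_mono hcover).trans ((measure_biUnion_finset_le _ _).trans
          (Finset.sum_le_sum fun j _ => addHaar_preimage_add_nsmul_le x j.succ_pos _))
    _ ≤ (N + 1) * μ (sᶜ ∩ Metric.closedBall a r) := by
        rw [Finset.sum_const, Finset.card_range, nsmul_eq_mul]
        gcongr
        exact le_self_add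
    _ < (N + 1) * (η * μ (Metric.closedBall a r)) :=
        ENNReal.mul_lt_mul_right (by simp) (by simp) hbad
    _ = μ (Metric.closedBall 0 (r / M)) := by
        rw [hscale, mul_left_comm, ← mul_assoc (N + 1 : ℝ≥0∞), ← mul_assoc,
          ENNReal.inv_mul_cancel (mul_ne_zero (by simp) hv0) (ENNReal.mul_ne_top (by simp)
            ENNReal.ofReal_ne_top), one_mul]

theorem exists_ball_bounded_of_le_sum {f : E → ℝ≥0∞} (hf : Measurable f)
    (hfin : μ {x | f x ≠ ∞} ≠ 0) {N : ℕ} {D : ℝ≥0∞} (hD : D ≠ ∞)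
    (hle : ∀ x h, ‖h‖ ≤ 1 →
      f x ≤ ∑ j ∈ Finset.range N, (N.choose (j + 1) : ℝ≥0∞) * f (x + (j + 1) • h) + D) :
    ∃ a : E, ∃ r > 0, ∃ B ≠ ∞, ∀ x ∈ Metric.ball a r, f x ≤ B := by
  have hunion : {x | f x ≠ ∞} = ⋃ B : ℕ, {x | f x ≤ B} := by
    ext x
    simp only [Set.mem_ofPred_eq, Set.mem_iUnion]
    exact ⟨fun hx => (ENNReal.exists_nat_gt hx).imp fun _ => le_of_lt,
      fun ⟨B, hB⟩ => ne_top_of_le_ne_top (ENNReal.natCast_ne_top B) hB⟩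
  obtain ⟨B, hB⟩ : ∃ B : ℕ, μ {x | f x ≤ B} ≠ 0 := by
    by_contra! h
    exact hfin (hunion ▸ measure_iUnion_null h)
  obtain ⟨a, r, hr, h⟩ :=
    exists_ball_forall_exists_progression_mem (measurableSet_le hf measurable_const) hB N
  refine ⟨a, r, hr, ∑ j ∈ Finset.range N, (N.choose (j + 1) : ℝ≥0∞) * B + D,
    ENNReal.add_ne_top.2 ⟨by simp [ENNReal.sum_eq_top, ENNReal.mul_eq_top], hD⟩, fun x hx => ?_⟩
  obtain ⟨k, hk, hmem⟩ := h x hx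
  refine (hle x k hk).trans ?_
  gcongr with j hj
  exact hmem j hj

end Growth

section SchwartzFamilies

variable {ι E : Type*} [NormedAddCommGroup E] [NormedSpace ℝ E]

/-- The family `A` of Schwartz functions is `O(b)` in the Schwartz topology: each seminorm of
`A i` is at most a constant multiple of `b i`, uniformly in the index `i`. -/
def SeminormsBoundedBy (A : ι → 𝓢(E, ℂ)) (b : ι → ℝ≥0) : Prop :=
  ∀ k n : ℕ, ∃ C : ℝ≥0, ∀ i, SchwartzMap.seminorm ℂ k n (A i) ≤ C * b i

variable {A : ι → 𝓢(E, ℂ)} {b : ι → ℝ≥0}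

lemma SeminormsBoundedBy.exists_sup_le (hA : SeminormsBoundedBy A b) (s : Finset (ℕ × ℕ)) :
    ∃ C : ℝ≥0, ∀ i, s.sup (schwartzSeminormFamily ℂ E ℂ) (A i) ≤ C * b i := by
  choose D hD using fun m : ℕ × ℕ => hA m.1 m.2
  refine ⟨∑ m ∈ s, D m, fun i => ?_⟩
  refine Seminorm.finset_sup_apply_le (by positivity) fun m hm => (hD m i).trans ?_
  gcongr
  exact Finset.single_le_sum (fun m _ => by positivity) hm

lemma SeminormsBoundedBy.map (hA : SeminormsBoundedBy A b) (T : 𝓢(E, ℂ) →L[ℂ] 𝓢(E, ℂ)) :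
    SeminormsBoundedBy (fun i => T (A i)) b := by
  intro k n
  obtain ⟨s, C, -, hC⟩ := Seminorm.bound_of_continuous (schwartz_withSeminorms ℂ E ℂ)
    ((SchwartzMap.seminorm ℂ k n).comp T.toLinearMap) <| by
      exact ((schwartz_withSeminorms ℂ E ℂ).continuous_seminorm (k, n)).comp T.continuous
  obtain ⟨D, hD⟩ := hA.exists_sup_le s
  refine ⟨C * D, fun i => (hC (A i)).trans ?_⟩
  rw [NNReal.coe_mul, mul_assoc]
  exact mul_le_mul_of_nonneg_left (hD i) C.2

lemma SeminormsBoundedBy.comp {κ : Type*} (hA : SeminormsBoundedBy A b) (f : κ → ι) :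
    SeminormsBoundedBy (fun i => A (f i)) (fun i => b (f i)) :=
  fun k n => (hA k n).imp fun _ hC i => hC (f i)

lemma seminormsBoundedBy_const (A : 𝓢(E, ℂ)) :
    SeminormsBoundedBy (fun _ : Unit => A) (fun _ => 1) :=
  fun k n => ⟨(SchwartzMap.seminorm ℂ k n A).toNNReal, fun _ => by simp⟩

lemma SeminormsBoundedBy.exists_lintegral_le [MeasurableSpace E] [BorelSpace E] {μ : Measure E}
    [μ.HasTemperateGrowth] (hA : SeminormsBoundedBy A b) (N : ℕ) :
    ∃ C : ℝ≥0, ∀ i, ∫⁻ z, (1 + ‖z‖ₑ) ^ N * ‖A i z‖ₑ ∂μ ≤ C * b i := by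
  set l := μ.integrablePower
  obtain ⟨C, hC⟩ := hA.exists_sup_le (Finset.Iic (N + l, 0))
  have hfin : ∫⁻ z, ENNReal.ofReal ((1 + ‖z‖) ^ (-(l : ℝ))) ∂μ ≠ ∞ :=
    (Measure.integrable_pow_neg_integrablePower μ).lintegral_lt_top.ne
  refine ⟨2 ^ (N + l) * C * (∫⁻ z, ENNReal.ofReal ((1 + ‖z‖) ^ (-(l : ℝ))) ∂μ).toNNReal,
    fun i => ?_⟩
  have hpt (z : E) : (1 + ‖z‖ₑ) ^ N * ‖A i z‖ₑ
      ≤ (2 ^ (N + l) * C * b i : ℝ≥0) * ENNReal.ofReal ((1 + ‖z‖) ^ (-(l : ℝ))) := by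
    have h := (SchwartzMap.one_add_le_sup_seminorm_apply (𝕜 := ℂ) (m := (N + l, 0)) le_rfl le_rfl
      (A i) z).trans (mul_le_mul_of_nonneg_left (hC i) (by positivity))
    rw [norm_iteratedFDeriv_zero] at h
    rw [← ofReal_norm, ← ofReal_norm, ← ENNReal.ofReal_one,
      ← ENNReal.ofReal_add zero_le_one (norm_nonneg z), ← ENNReal.ofReal_pow (by positivity),
      ← ENNReal.ofReal_mul (by positivity), ← ENNReal.ofReal_coe_nnreal,
      ← ENNReal.ofReal_mul (by positivity), Real.rpow_neg (by positivity), Real.rpow_natCast]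
    refine ENNReal.ofReal_le_ofReal ?_
    rw [← div_eq_mul_inv, le_div_iff₀ (by positivity)]
    push_cast
    linarith [h, show (1 + ‖z‖) ^ N * ‖A i z‖ * (1 + ‖z‖) ^ l
      = (1 + ‖z‖) ^ (N + l) * ‖A i z‖ by ring]
  calc ∫⁻ z, (1 + ‖z‖ₑ) ^ N * ‖A i z‖ₑ ∂μ
      ≤ (2 ^ (N + l) * C * b i : ℝ≥0) * ∫⁻ z, ENNReal.ofReal ((1 + ‖z‖) ^ (-(l : ℝ))) ∂μ := by
        rw [← lintegral_const_mul _ (by fun_prop)]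
        exact lintegral_mono hpt
    _ = _ := by
        rw [ENNReal.coe_mul _ (ENNReal.toNNReal _), ENNReal.coe_toNNReal hfin]
        push_cast
        ring

end SchwartzFamilies

section Dilation

variable {ι E : Type*} [NormedAddCommGroup E] [NormedSpace ℝ E]

/-- The dyadic dilation `A ↦ 2^{kd} A(2^k ·)` of Schwartz functions, `d = dim E`, which preserves
the `L¹` norm. -/
def dilate (k : ℤ) : 𝓢(E, ℂ) →L[ℂ] 𝓢(E, ℂ) :=
  ((2 : ℂ) ^ (k * Module.finrank ℝ E)) • SchwartzMap.compCLMOfContinuousLinearEquiv ℂ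
    (ContinuousLinearEquiv.smulLeft (R₁ := ℝ) (Units.mk0 (2 ^ k : ℝ) (by positivity)))

lemma dilate_apply (k : ℤ) (A : 𝓢(E, ℂ)) (x : E) :
    dilate k A x = (2 : ℂ) ^ (k * Module.finrank ℝ E) * A ((2 : ℝ) ^ k • x) := rfl

lemma dilate_dilate (k l : ℤ) (A : 𝓢(E, ℂ)) : dilate k (dilate l A) = dilate (k + l) A := by
  ext x
  simp only [dilate_apply, smul_smul]
  rw [add_mul, zpow_add₀ two_ne_zero, add_comm k l, zpow_add₀ two_ne_zero]
  ring

lemma dilate_zero (A : 𝓢(E, ℂ)) : dilate 0 A = A := by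
  ext x
  simp [dilate_apply]

lemma norm_iteratedFDeriv_dilate (k : ℤ) (n : ℕ) (A : 𝓢(E, ℂ)) (x : E) :
    ‖iteratedFDeriv ℝ n (dilate k A) x‖ =
      (2 : ℝ) ^ (k * (Module.finrank ℝ E + n)) * ‖iteratedFDeriv ℝ n A ((2 : ℝ) ^ k • x)‖ := by
  have hA : ContDiff ℝ n fun x => A ((2 : ℝ) ^ k • x) := (A.smooth n).comp (contDiff_const_smul _)
  have : ⇑(dilate k A) = (2 : ℂ) ^ (k * Module.finrank ℝ E) • fun x => A ((2 : ℝ) ^ k • x) := rfl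
  rw [this, iteratedFDeriv_const_smul_apply hA.contDiffAt,
    iteratedFDeriv_comp_const_smul _ (A.smooth n), norm_smul, norm_smul, norm_zpow, norm_pow,
    norm_zpow]
  simp only [Complex.norm_ofNat, Real.norm_ofNat]
  rw [mul_add, zpow_add₀ two_ne_zero, zpow_mul _ k n, zpow_natCast, mul_assoc]

lemma seminorm_dilate_neg_le (m a n : ℕ) (A : 𝓢(E, ℂ)) :
    SchwartzMap.seminorm ℂ a n (dilate (-m) A) ≤ 2 ^ (a * m) * SchwartzMap.seminorm ℂ a n A := by
  refine SchwartzMap.seminorm_le_bound ℂ a n _ (by positivity) fun x => ?_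
  have hnorm : ‖(2 : ℝ) ^ (-m : ℤ) • x‖ = (2 ^ m)⁻¹ * ‖x‖ := by simp [norm_smul]
  have hA := SchwartzMap.le_seminorm ℂ a n A ((2 : ℝ) ^ (-m : ℤ) • x)
  rw [hnorm, mul_pow] at hA
  rw [norm_iteratedFDeriv_dilate]
  have hle : (2 : ℝ) ^ (-(m : ℤ) * (Module.finrank ℝ E + n)) ≤ 1 :=
    zpow_le_one_of_nonpos₀ one_le_two (by simp only [neg_mul]; lia)
  calc ‖x‖ ^ a * (2 ^ (-(m : ℤ) * (Module.finrank ℝ E + n)) * ‖iteratedFDeriv ℝ n A _‖)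
      ≤ ‖x‖ ^ a * (1 * ‖iteratedFDeriv ℝ n A ((2 : ℝ) ^ (-m : ℤ) • x)‖) := by gcongr
    _ = 2 ^ (a * m) * (((2 ^ m)⁻¹) ^ a * ‖x‖ ^ a * ‖iteratedFDeriv ℝ n A _‖) := by
        rw [mul_comm a m, pow_mul, inv_pow]
        field_simp
    _ ≤ _ := by gcongr

lemma norm_pow_mul_norm_iteratedFDeriv_dilate_le (k a n M : ℕ) (A : 𝓢(E, ℂ)) {x : E}
    (hx : 1 ≤ ‖x‖) : ‖x‖ ^ a * ‖iteratedFDeriv ℝ n (dilate k A) x‖ ≤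
      (2 ^ (M * k))⁻¹ * SchwartzMap.seminorm ℂ (a + Module.finrank ℝ E + n + M) n A := by
  have hnorm : ‖(2 : ℝ) ^ (k : ℤ) • x‖ = 2 ^ k * ‖x‖ := by simp [norm_smul]
  have hA := SchwartzMap.le_seminorm ℂ (a + Module.finrank ℝ E + n + M) n A ((2 : ℝ) ^ (k : ℤ) • x)
  rw [hnorm] at hA
  rw [norm_iteratedFDeriv_dilate, inv_mul_eq_div, le_div_iff₀ (by positivity)]
  refine le_trans ?_ hA
  rw [mul_pow]
  have h1 : (2 : ℝ) ^ ((k : ℤ) * (Module.finrank ℝ E + n)) * 2 ^ (M * k)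
      ≤ (2 ^ k) ^ (a + Module.finrank ℝ E + n + M) := by
    rw [← pow_mul, ← zpow_natCast (2 : ℝ) (M * k), ← zpow_add₀ two_ne_zero, ← zpow_natCast]
    refine zpow_le_zpow_right₀ one_le_two ?_
    push_cast
    nlinarith [Int.natCast_nonneg a, Int.natCast_nonneg k]
  have h2 : ‖x‖ ^ a ≤ ‖x‖ ^ (a + Module.finrank ℝ E + n + M) := pow_le_pow_right₀ hx (by lia)
  calc _ = (2 ^ ((k : ℤ) * (Module.finrank ℝ E + n)) * 2 ^ (M * k)) * ‖x‖ ^ a *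
        ‖iteratedFDeriv ℝ n A ((2 : ℝ) ^ (k : ℤ) • x)‖ := by ring
    _ ≤ _ := by gcongr

section Fourier

variable {E : Type*} [NormedAddCommGroup E] [InnerProductSpace ℝ E] [FiniteDimensional ℝ E]
  [MeasurableSpace E] [BorelSpace E]

lemma fourier_dilate (k : ℤ) (A : 𝓢(E, ℂ)) (η : E) :
    𝓕 (dilate k A) η = 𝓕 A ((2 : ℝ) ^ (-k) • η) := by
  have hsub := Measure.integral_comp_smul volume
    (fun x : E => cexp (↑(-2 * Real.pi * ⟪x, (2 : ℝ) ^ (-k) • η⟫) * I) * A x) ((2 : ℝ) ^ k)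
  have hinner (x : E) : ⟪(2 : ℝ) ^ k • x, (2 : ℝ) ^ (-k) • η⟫ = ⟪x, η⟫ := by
    rw [real_inner_smul_left, real_inner_smul_right, ← mul_assoc, ← zpow_add₀ two_ne_zero,
      add_neg_cancel, zpow_zero, one_mul]
  simp only [hinner, abs_inv, abs_pow, abs_zpow, Nat.abs_ofNat] at hsub
  simp only [SchwartzMap.fourier_coe, Real.fourier_eq', dilate_apply, smul_eq_mul,
    mul_left_comm _ ((2 : ℂ) ^ (_ : ℤ))]
  rw [integral_const_mul, hsub, Complex.real_smul, ← mul_assoc, zpow_mul]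
  push_cast
  rw [zpow_natCast, mul_inv_cancel₀ (pow_ne_zero _ (zpow_ne_zero _ two_ne_zero)), one_mul]

lemma lintegral_enorm_dilate (k : ℤ) (A : 𝓢(E, ℂ)) : ∫⁻ x, ‖dilate k A x‖ₑ = ∫⁻ x, ‖A x‖ₑ := by
  rw [← ofReal_integral_norm_eq_lintegral_enorm (dilate k A).integrable,
    ← ofReal_integral_norm_eq_lintegral_enorm A.integrable]
  simp only [dilate_apply, norm_mul, norm_zpow, Complex.norm_ofNat]
  rw [integral_const_mul, Measure.integral_comp_smul volume (fun x => ‖A x‖), smul_eq_mul,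
    ← mul_assoc, abs_inv, abs_pow, abs_zpow, Nat.abs_ofNat, zpow_mul, zpow_natCast,
    mul_inv_cancel₀ (by positivity), one_mul]

end Fourier

end Dilation

section Cutoff

variable {ι E : Type*} [NormedAddCommGroup E] [InnerProductSpace ℝ E] [FiniteDimensional ℝ E]

/-- Multiplication by a smooth function which is `1` on the unit ball and `0` outside the ball of
radius `2`. -/
def near : 𝓢(E, ℂ) →L[ℂ] 𝓢(E, ℂ) :=
  SchwartzMap.smulLeftCLM ℂ fun x => ((⟨1, 2, one_pos, one_lt_two⟩ : ContDiffBump (0 : E)) x : ℂ)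

/-- The part of a Schwartz function outside the unit ball, complementary to `near`. -/
def far : 𝓢(E, ℂ) →L[ℂ] 𝓢(E, ℂ) := ContinuousLinearMap.id ℂ _ - near

lemma near_add_far (A : 𝓢(E, ℂ)) : near A + far A = A := by
  simp [far]

open scoped ContDiff in
lemma exists_near_apply : ∃ χ : 𝓢(E, ℂ), (∀ (A : 𝓢(E, ℂ)) x, near A x = χ x * A x) ∧
    (∀ x, ‖χ x‖ ≤ 1) ∧ (∀ x, ‖x‖ ≤ 1 → χ x = 1) ∧ ∀ x, 2 ≤ ‖x‖ → χ x = 0 := by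
  let f : ContDiffBump (0 : E) := ⟨1, 2, one_pos, one_lt_two⟩
  have hc : HasCompactSupport fun x => (f x : ℂ) :=
    f.hasCompactSupport.comp_left (g := Complex.ofReal) Complex.ofReal_zero
  have hs : ContDiff ℝ ∞ fun x => (f x : ℂ) := Complex.ofRealCLM.contDiff.comp f.contDiff
  refine ⟨hc.toSchwartzMap hs, SchwartzMap.smulLeftCLM_apply_apply (hc.hasTemperateGrowth hs),
    fun x => ?_, fun x hx => ?_, fun x hx => ?_⟩
  · simpa [abs_of_nonneg f.nonneg] using f.le_one
  · have : f x = 1 := f.one_of_mem_closedBall (by simpa [f] using hx)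
    simpa using this
  · have : f x = 0 := f.zero_of_le_dist (by simpa [f] using hx)
    simpa using this

lemma enorm_near_le (A : 𝓢(E, ℂ)) (x : E) : ‖near A x‖ₑ ≤ ‖A x‖ₑ := by
  obtain ⟨χ, hχ, h1, -⟩ := exists_near_apply (E := E)
  rw [hχ, enorm_mul]
  refine mul_le_of_le_one_left' ?_
  rw [← ofReal_norm]
  exact ENNReal.ofReal_le_one.2 (h1 x)

lemma near_eq_zero (A : 𝓢(E, ℂ)) {x : E} (hx : 2 ≤ ‖x‖) : near A x = 0 := by
  obtain ⟨χ, hχ, -, -, h0⟩ := exists_near_apply (E := E)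
  rw [hχ, h0 x hx, zero_mul]

lemma exists_norm_iteratedFDeriv_far_le (n : ℕ) : ∃ C : ℝ≥0, ∀ (A : 𝓢(E, ℂ)) (x : E),
    ‖iteratedFDeriv ℝ n (far A) x‖ ≤ C * ∑ i ∈ Finset.range (n + 1), ‖iteratedFDeriv ℝ i A x‖ ∧
    (‖x‖ < 1 → iteratedFDeriv ℝ n (far A) x = 0) := by
  obtain ⟨χ, hχ, -, h1, -⟩ := exists_near_apply (E := E)
  have hfar (A : 𝓢(E, ℂ)) : ⇑(far A) = ⇑A - fun x => χ x * A x :=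
    funext fun x => congrArg (A x - ·) (hχ A x)
  refine ⟨1 + ∑ i ∈ Finset.range (n + 1), n.choose i * (SchwartzMap.seminorm ℂ 0 i χ).toNNReal,
    fun A x => ⟨?_, fun hx => ?_⟩⟩
  · have hχA : ContDiff ℝ n fun x => χ x * A x := (χ.smooth n).mul (A.smooth n)
    rw [hfar, iteratedFDeriv_sub_apply (A.smooth n).contDiffAt hχA.contDiffAt]
    push_cast
    rw [add_mul, one_mul, Finset.sum_mul]
    have hS (i : ℕ) (hi : i ∈ Finset.range (n + 1)) : ‖iteratedFDeriv ℝ i A x‖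
        ≤ ∑ i ∈ Finset.range (n + 1), ‖iteratedFDeriv ℝ i A x‖ :=
      Finset.single_le_sum (f := fun i => ‖iteratedFDeriv ℝ i A x‖) (fun i _ => norm_nonneg _) hi
    refine (norm_sub_le _ _).trans (add_le_add (hS n (by simp)) ?_)
    refine (norm_iteratedFDeriv_mul_le (χ.smooth n) (A.smooth n) x le_rfl).trans
      (Finset.sum_le_sum fun i _ => ?_)
    gcongr
    · simpa using SchwartzMap.le_seminorm ℂ 0 i χ x
    · exact hS (n - i) (Finset.mem_range.2 (by lia))
  · have : ⇑(far A) =ᶠ[𝓝 x] 0 := by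
      filter_upwards [continuous_norm.continuousAt.eventually_lt continuousAt_const hx] with y hy
      simp [hfar, h1 y hy.le]
    rw [(EventuallyEq.iteratedFDeriv ℝ this n).eq_of_nhds, iteratedFDeriv_zero, Pi.zero_apply]

lemma SeminormsBoundedBy.far_dilate {A : ι → 𝓢(E, ℂ)} {b : ι → ℝ≥0} (hA : SeminormsBoundedBy A b)
    (M : ℕ) : SeminormsBoundedBy (fun i : ι × ℕ => far (dilate i.2 (A i.1)))
      fun i => (2 ^ (M * i.2))⁻¹ * b i.1 := by
  intro a n
  obtain ⟨C, hC⟩ := exists_norm_iteratedFDeriv_far_le (E := E) n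
  choose D hD using fun j : ℕ => hA (a + Module.finrank ℝ E + j + M) j
  refine ⟨C * ∑ j ∈ Finset.range (n + 1), D j, fun ⟨i, k⟩ => ?_⟩
  refine SchwartzMap.seminorm_le_bound ℂ a n _ (by positivity) fun x => ?_
  obtain hx | hx := lt_or_ge ‖x‖ 1
  · simp only [(hC _ x).2 hx, norm_zero, mul_zero]
    positivity
  calc ‖x‖ ^ a * ‖iteratedFDeriv ℝ n (far (dilate k (A i))) x‖
      ≤ ‖x‖ ^ a * (C * ∑ j ∈ Finset.range (n + 1), ‖iteratedFDeriv ℝ j (dilate k (A i)) x‖) := by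
        gcongr
        exact (hC _ x).1
    _ = C * ∑ j ∈ Finset.range (n + 1), ‖x‖ ^ a * ‖iteratedFDeriv ℝ j (dilate k (A i)) x‖ := by
        rw [← Finset.mul_sum]
        ring
    _ ≤ C * ∑ j ∈ Finset.range (n + 1), (2 ^ (M * k) : ℝ)⁻¹ * (D j * b i) := by
        refine mul_le_mul_of_nonneg_left (Finset.sum_le_sum fun j _ => ?_) C.2
        refine (norm_pow_mul_norm_iteratedFDeriv_dilate_le k a j M (A i) hx).trans ?_
        gcongr
        exact hD j i
    _ = _ := by
        push_cast
        rw [← Finset.mul_sum, ← Finset.sum_mul]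
        ring

/-- The part of `A` outside the ball of radius `2^m`. -/
def tail (m : ℕ) (A : 𝓢(E, ℂ)) : 𝓢(E, ℂ) := dilate (-m) (far (dilate m A))

lemma seminormsBoundedBy_tail (A : 𝓢(E, ℂ)) :
    SeminormsBoundedBy (fun m => tail m A) fun m => (2 ^ m)⁻¹ := by
  intro a n
  obtain ⟨C, hC⟩ := (seminormsBoundedBy_const A).far_dilate (a + 1) a n
  refine ⟨C, fun m => (seminorm_dilate_neg_le m a n _).trans ?_⟩
  calc 2 ^ (a * m) * SchwartzMap.seminorm ℂ a n (far (dilate m A))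
      ≤ 2 ^ (a * m) * (C * ((2 ^ ((a + 1) * m))⁻¹ * 1)) := by
        gcongr
        simpa using hC ((), m)
    _ = _ := by
        rw [add_mul, one_mul, pow_add]
        push_cast
        field_simp

lemma sub_tail (m : ℕ) (A : 𝓢(E, ℂ)) : A - tail m A = dilate (-m) (near (dilate m A)) := by
  rw [sub_eq_iff_eq_add, tail, ← map_add, near_add_far, dilate_dilate, neg_add_cancel, dilate_zero]

lemma enorm_sub_tail_le (m : ℕ) (A : 𝓢(E, ℂ)) (x : E) : ‖(A - tail m A) x‖ₑ ≤ ‖A x‖ₑ := by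
  have hA : A x = dilate (-m) (dilate m A) x := by rw [dilate_dilate, neg_add_cancel, dilate_zero]
  rw [sub_tail, hA, dilate_apply, dilate_apply, enorm_mul, enorm_mul]
  gcongr
  exact enorm_near_le _ _

lemma sub_tail_eq_zero (m : ℕ) (A : 𝓢(E, ℂ)) {x : E} (hx : 2 ^ (m + 1) ≤ ‖x‖) :
    (A - tail m A) x = 0 := by
  rw [sub_tail, dilate_apply, near_eq_zero, mul_zero]
  rw [norm_smul, zpow_neg, zpow_natCast, norm_inv, norm_pow, Real.norm_ofNat,
    le_inv_mul_iff₀ (by positivity), ← pow_succ]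
  exact hx

lemma tail_eq_zero (m : ℕ) (A : 𝓢(E, ℂ)) {x : E} (hx : ‖x‖ ≤ 2 ^ m) : tail m A x = 0 := by
  obtain ⟨χ, hχ, -, h1, -⟩ := exists_near_apply (E := E)
  have hle : ‖(2 : ℝ) ^ (-m : ℤ) • x‖ ≤ 1 := by
    rw [norm_smul, zpow_neg, zpow_natCast, norm_inv, norm_pow, Real.norm_ofNat]
    exact inv_mul_le_one_of_le₀ hx (by positivity)
  rw [tail, dilate_apply, far, sub_apply, ContinuousLinearMap.id_apply, _root_.sub_apply, hχ,
    h1 _ hle, one_mul, sub_self, mul_zero]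

end Cutoff

section Convolution

variable {E : Type*} [NormedAddCommGroup E] [InnerProductSpace ℝ E] [FiniteDimensional ℝ E]
  [MeasurableSpace E] [BorelSpace E]

/-- The convolution `∫ A(z) f(x - z) dz` of complex-valued functions. -/
abbrev conv (A f : E → ℂ) : E → ℂ := convolution A f (ContinuousLinearMap.mul ℂ ℂ) volume

lemma conv_apply (A f : E → ℂ) (x : E) : conv A f x = ∫ z, A z * f (x - z) := by
  simp [convolution_def]

lemma enorm_conv_le (A f : E → ℂ) (x : E) : ‖conv A f x‖ₑ ≤ ∫⁻ z, ‖A z‖ₑ * ‖f (x - z)‖ₑ := by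
  rw [conv_apply]
  exact (enorm_integral_le_lintegral_enorm _).trans_eq (by simp only [enorm_mul])

lemma lintegral_enorm_ne_top (A : 𝓢(E, ℂ)) : ∫⁻ z, ‖A z‖ₑ ≠ ∞ := A.integrable.2.ne

lemma eLpNorm_conv_le (A : 𝓢(E, ℂ)) {f : E → ℂ} (hf : Continuous f) {p : ℝ≥0∞} (hp : 1 ≤ p) :
    eLpNorm (conv A f) p ≤ (∫⁻ z, ‖A z‖ₑ) * eLpNorm f p := by
  have hA : Measurable fun z => ‖A z‖ₑ := A.continuous.enorm.measurable
  set ν : Measure E := volume.withDensity fun z => ‖A z‖ₑ with hν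
  have : IsFiniteMeasure ν := isFiniteMeasure_withDensity (lintegral_enorm_ne_top A)
  have hm : Measurable (Function.uncurry fun z x : E => ‖f (x - z)‖ₑ) :=
    (hf.comp (continuous_snd.sub continuous_fst)).enorm.measurable
  have hpt (x : E) : ‖conv A f x‖ₑ ≤ ∫⁻ z, ‖f (x - z)‖ₑ ∂ν := by
    rw [hν, lintegral_withDensity_eq_lintegral_mul _ hA (hm.of_uncurry_right (y := x))]
    exact enorm_conv_le A f x
  have htrans (z : E) : eLpNorm (fun x => ‖f (x - z)‖ₑ) p volume = eLpNorm f p volume :=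
    (eLpNorm_enorm fun x => f (x - z)).trans (eLpNorm_comp_measurePreserving
      hf.aestronglyMeasurable (measurePreserving_sub_right volume z))
  calc eLpNorm (conv A f) p volume ≤ eLpNorm (fun x => ∫⁻ z, ‖f (x - z)‖ₑ ∂ν) p volume :=
        eLpNorm_mono_enorm hpt
    _ ≤ ∫⁻ z, eLpNorm (fun x => ‖f (x - z)‖ₑ) p volume ∂ν := eLpNorm_lintegral_le hm hp
    _ = (∫⁻ z, ‖A z‖ₑ) * eLpNorm f p volume := by
        rw [lintegral_congr htrans, lintegral_const, hν, withDensity_apply _ MeasurableSet.univ,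
          setLIntegral_univ, mul_comm]

lemma enorm_conv_le_of_le (A : 𝓢(E, ℂ)) {f : E → ℂ} {B : ℝ≥0∞} (hB : ∀ x, ‖f x‖ₑ ≤ B) (x : E) :
    ‖conv A f x‖ₑ ≤ (∫⁻ z, ‖A z‖ₑ) * B := by
  rw [← lintegral_mul_const _ A.continuous.enorm.measurable]
  exact (enorm_conv_le A f x).trans (lintegral_mono fun z => by gcongr; exact hB _)

end Convolution

section FourierInversion

variable {E : Type*} [NormedAddCommGroup E] [InnerProductSpace ℝ E] [FiniteDimensional ℝ E]
  [MeasurableSpace E] [BorelSpace E] {w : E → ℂ}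

lemma integrable_cexp_mul (hw : Integrable w) (x : E) :
    Integrable fun η => cexp (↑(2 * Real.pi * ⟪η, x⟫) * I) * w η :=
  hw.bdd_mul (c := 1) (by fun_prop) (.of_forall fun η => (norm_exp_ofReal_mul_I _).le)

lemma fourierInv_apply (w : E → ℂ) (x : E) :
    𝓕⁻ w x = ∫ η, cexp (↑(2 * Real.pi * ⟪η, x⟫) * I) * w η := by
  simp only [Real.fourierInv_eq', smul_eq_mul]

lemma enorm_fourierInv_le (w : E → ℂ) (x : E) : ‖𝓕⁻ w x‖ₑ ≤ ∫⁻ η, ‖w η‖ₑ := by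
  rw [fourierInv_apply]
  refine (enorm_integral_le_lintegral_enorm _).trans_eq (lintegral_congr fun η => ?_)
  rw [enorm_mul, ← ofReal_norm, norm_exp_ofReal_mul_I, ENNReal.ofReal_one, one_mul]

lemma continuous_fourierInv_of_integrable (hw : Integrable w) : Continuous (𝓕⁻ w) :=
  VectorFourier.fourierIntegral_continuous Real.continuous_fourierChar
    (continuous_inner.neg : Continuous fun q : E × E => -⟪q.1, q.2⟫) hw

lemma integrable_mul_fourierInv (A : 𝓢(E, ℂ)) (hw : Integrable w) (x : E) :
    Integrable fun z => A z * 𝓕⁻ w (x - z) :=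
  A.integrable.mul_bdd (c := (∫⁻ η, ‖w η‖ₑ).toReal)
    ((continuous_fourierInv_of_integrable hw).comp (by fun_prop)).aestronglyMeasurable
    (.of_forall fun z => by
      rw [← toReal_enorm]
      exact ENNReal.toReal_mono hw.2.ne (enorm_fourierInv_le w _))

lemma conv_fourierInv (A : 𝓢(E, ℂ)) (hw : Integrable w) :
    conv A (𝓕⁻ w) = 𝓕⁻ fun η => 𝓕 A η * w η := by
  ext x
  simp only [conv_apply, fourierInv_apply, ← integral_const_mul]
  rw [integral_integral_swap]
  · refine integral_congr_ae (.of_forall fun η => ?_)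
    simp only
    rw [SchwartzMap.fourier_coe, Real.fourier_eq', ← integral_mul_const, ← integral_const_mul]
    refine integral_congr_ae (.of_forall fun z => ?_)
    have hexp : cexp (↑(2 * Real.pi * ⟪η, x - z⟫) * I) =
        cexp (↑(2 * Real.pi * ⟪η, x⟫) * I) * cexp (↑(-2 * Real.pi * ⟪z, η⟫) * I) := by
      rw [← Complex.exp_add, inner_sub_right, real_inner_comm η z]
      congr 1
      push_cast
      ring
    simp only [hexp, smul_eq_mul]
    ring
  · refine (((A.integrable (μ := volume)).mul_prod hw).bdd_mul (c := 1)
      (f := fun q : E × E => cexp (↑(2 * Real.pi * ⟪q.2, x - q.1⟫) * I))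
      (by fun_prop) (.of_forall fun q => (norm_exp_ofReal_mul_I _).le)).congr
      (.of_forall fun q => ?_)
    simp only [Function.uncurry]
    ring

lemma fwdDiff_fourierInv (hw : Integrable w) (h : E) :
    fwdDiff h (𝓕⁻ w) = 𝓕⁻ fun η => (cexp (↑(2 * Real.pi * ⟪η, h⟫) * I) - 1) * w η := by
  ext x
  rw [fwdDiff, fourierInv_apply, fourierInv_apply, fourierInv_apply,
    ← integral_sub (integrable_cexp_mul hw _) (integrable_cexp_mul hw _)]
  refine integral_congr_ae (.of_forall fun η => ?_)
  simp only [inner_add_right, mul_add, ofReal_add, add_mul, Complex.exp_add]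
  ring

end FourierInversion

section Reproduction

variable {E : Type*} [NormedAddCommGroup E] [InnerProductSpace ℝ E] [FiniteDimensional ℝ E]
  [MeasurableSpace E] [BorelSpace E] {w : E → ℂ}

lemma enorm_fwdDiff_conv_le (A : 𝓢(E, ℂ)) {w : E → ℂ} (hw : Integrable w) {B : ℝ≥0∞}
    (hB : ∀ x, ‖𝓕⁻ w x‖ₑ ≤ B) (h x : E) :
    ‖fwdDiff h (conv A (𝓕⁻ w)) x‖ₑ ≤ (∫⁻ z, ‖A (z + h) - A z‖ₑ) * B := by
  have hshift : conv A (𝓕⁻ w) (x + h) = ∫ z, A (z + h) * 𝓕⁻ w (x - z) := by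
    rw [conv_apply, ← integral_add_right_eq_self _ h]
    simp only [add_sub_add_right_eq_sub]
  have hint : Integrable fun z => A (z + h) * 𝓕⁻ w (x - z) := by
    simpa using (integrable_mul_fourierInv A hw (x + h)).comp_add_right h
  rw [fwdDiff, hshift, conv_apply, ← integral_sub hint (integrable_mul_fourierInv A hw x),
    ← lintegral_mul_const _ (by fun_prop)]
  refine (enorm_integral_le_lintegral_enorm _).trans (lintegral_mono fun z => ?_)
  rw [← sub_mul, enorm_mul]
  gcongr
  exact hB _

lemma enorm_fwdDiff_iter_fourierInv_le {A : 𝓢(E, ℂ)} {w : E → ℂ} (hw : Integrable w)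
    (hA : ∀ η, 𝓕 A η * w η = w η) {B : ℝ≥0∞} (hB : ∀ x, ‖𝓕⁻ w x‖ₑ ≤ B) (h : E) (N : ℕ) (x : E) :
    ‖(fwdDiff h)^[N] (𝓕⁻ w) x‖ₑ ≤ (∫⁻ z, ‖A (z + h) - A z‖ₑ) ^ N * B := by
  induction N generalizing w B with
  | zero => simpa using hB x
  | succ N ih =>
    have hrep : conv A (𝓕⁻ w) = 𝓕⁻ w := by
      rw [conv_fourierInv A hw, funext hA]
    have hw' : Integrable fun η => (cexp (↑(2 * Real.pi * ⟪η, h⟫) * I) - 1) * w η := by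
      simpa only [sub_mul, one_mul] using! (integrable_cexp_mul hw h).sub hw
    rw [Function.iterate_succ_apply, fwdDiff_fourierInv hw h, pow_succ, mul_assoc]
    refine ih hw' (fun η => by rw [mul_left_comm, hA]) fun x => ?_
    rw [← fwdDiff_fourierInv hw h]
    conv_lhs => rw [← hrep]
    exact enorm_fwdDiff_conv_le A hw hB h x

lemma exists_lintegral_enorm_sub_le (A : 𝓢(E, ℂ)) :
    ∃ C : ℝ≥0, ∀ h, ∫⁻ z, ‖A (z + h) - A z‖ₑ ≤ C * ‖h‖ₑ := by
  have hD : ∫⁻ z, ‖fderiv ℝ A z‖ₑ ≠ ∞ := (SchwartzMap.fderivCLM ℝ E ℂ A).integrable.2.ne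
  have hc : Continuous (fderiv ℝ A) := (SchwartzMap.fderivCLM ℝ E ℂ A).continuous
  refine ⟨(∫⁻ z, ‖fderiv ℝ A z‖ₑ).toNNReal, fun h => ?_⟩
  have hpt (z : E) : ‖A (z + h) - A z‖ₑ
      ≤ ∫⁻ t in Set.Ioc (0 : ℝ) 1, ‖fderiv ℝ A (z + t • h)‖ₑ * ‖h‖ₑ := by
    have hder (t : ℝ) : HasDerivAt (fun t : ℝ => A (z + t • h)) (fderiv ℝ A (z + t • h) h) t :=
      A.differentiableAt.hasFDerivAt.comp_hasDerivAt t
        (by simpa using ((hasDerivAt_id t).smul_const h).const_add z)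
    have hftc := intervalIntegral.integral_eq_sub_of_hasDerivAt (a := 0) (b := 1)
      (fun t _ => hder t) (Continuous.intervalIntegrable (by fun_prop) _ _)
    simp only [one_smul, zero_smul, add_zero] at hftc
    rw [← hftc, intervalIntegral.integral_of_le zero_le_one]
    exact (enorm_integral_le_lintegral_enorm _).trans
      (lintegral_mono fun t => ContinuousLinearMap.le_opENorm _ _)
  calc ∫⁻ z, ‖A (z + h) - A z‖ₑ
      ≤ ∫⁻ z, ∫⁻ t in Set.Ioc (0 : ℝ) 1, ‖fderiv ℝ A (z + t • h)‖ₑ * ‖h‖ₑ := lintegral_mono hpt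
    _ = ∫⁻ t in Set.Ioc (0 : ℝ) 1, ∫⁻ z, ‖fderiv ℝ A (z + t • h)‖ₑ * ‖h‖ₑ :=
        lintegral_lintegral_swap (by unfold Function.uncurry; fun_prop)
    _ = _ := by
        have hinv (t : ℝ) : ∫⁻ z, ‖fderiv ℝ A (z + t • h)‖ₑ * ‖h‖ₑ
            = (∫⁻ z, ‖fderiv ℝ A z‖ₑ) * ‖h‖ₑ := by
          rw [lintegral_mul_const _ (by fun_prop),
            lintegral_add_right_eq_self (fun z => ‖fderiv ℝ A z‖ₑ)]
        simp [hinv, ENNReal.coe_toNNReal hD]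

lemma lintegral_enorm_dilate_sub (k : ℤ) (A : 𝓢(E, ℂ)) (h : E) :
    ∫⁻ z, ‖dilate k A (z + h) - dilate k A z‖ₑ
      = ∫⁻ z, ‖A (z + (2 : ℝ) ^ k • h) - A z‖ₑ := by
  convert lintegral_enorm_dilate k (A.compSubConstCLM ℂ (-((2 : ℝ) ^ k • h)) - A) using 3 with z z
  · simp only [dilate_apply, _root_.sub_apply, SchwartzMap.compSubConstCLM_apply, sub_neg_eq_add,
      smul_add, mul_sub]
  · simp only [_root_.sub_apply, SchwartzMap.compSubConstCLM_apply, sub_neg_eq_add]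

end Reproduction

section AnnularMultipliers

section Slices

variable {E F : Type*} [NormedAddCommGroup E] [NormedSpace ℝ E] [NormedAddCommGroup F]
  [NormedSpace ℝ F]

lemma antilipschitzWith_prodMk_left {α β : Type*} [PseudoEMetricSpace α] [PseudoEMetricSpace β]
    (a : α) : AntilipschitzWith 1 fun b : β => (a, b) := fun b c => by
  simp [Prod.edist_eq]

lemma hasTemperateGrowth_prodMk_left (s : F) : Function.HasTemperateGrowth fun η : E => (s, η) := by
  convert (Function.HasTemperateGrowth.const (s, (0 : E))).add
    (ContinuousLinearMap.inr ℝ F E).hasTemperateGrowth using 2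
  simp

/-- The restriction of a Schwartz function on a product to the fibre over `s`. -/
def slice (G : 𝓢(F × E, ℂ)) (s : F) : 𝓢(E, ℂ) :=
  SchwartzMap.compCLMOfAntilipschitz ℂ (g := fun η : E => (s, η))
    (hasTemperateGrowth_prodMk_left s) (antilipschitzWith_prodMk_left s) G

lemma slice_apply (G : 𝓢(F × E, ℂ)) (s : F) (η : E) : slice G s η = G (s, η) := rfl

lemma seminormsBoundedBy_slice (G : 𝓢(F × E, ℂ)) :
    SeminormsBoundedBy (slice G) fun _ => 1 := by
  intro k n
  refine ⟨(SchwartzMap.seminorm ℂ k n G).toNNReal, fun s => ?_⟩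
  simp only [Real.coe_toNNReal _ (apply_nonneg _ _), NNReal.coe_one, mul_one]
  refine SchwartzMap.seminorm_le_bound ℂ k n _ (apply_nonneg _ _) fun η => ?_
  have hcomp : ⇑(slice G s) = (fun y => G ((s, 0) + y)) ∘ ContinuousLinearMap.inr ℝ F E := by
    ext η
    simp [slice_apply]
  have hder : ‖iteratedFDeriv ℝ n (slice G s) η‖ ≤ ‖iteratedFDeriv ℝ n G (s, η)‖ := by
    have hsmooth : ContDiff ℝ n fun y => G ((s, 0) + y) :=
      (G.smooth n).comp (contDiff_const.add contDiff_id)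
    rw [hcomp, ContinuousLinearMap.iteratedFDeriv_comp_right _ hsmooth _ le_rfl,
      iteratedFDeriv_comp_add_left]
    refine (ContinuousMultilinearMap.norm_compContinuousLinearMap_le _ _).trans ?_
    simp only [ContinuousLinearMap.inr_apply, Prod.mk_add_mk, add_zero, zero_add]
    refine mul_le_of_le_one_right (norm_nonneg _) (Finset.prod_le_one (fun _ _ => norm_nonneg _)
      fun _ _ => ContinuousLinearMap.norm_inr_le_one ℝ F E)
  refine le_trans ?_ (SchwartzMap.le_seminorm ℂ k n G (s, η))
  gcongr
  exact norm_snd_le (s, η)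

end Slices

/-- The annulus carrying the frequencies of the zeroth Littlewood–Paley block: `1/2 ≤ |ξ| ≤ 2`, up
to the factor `2π` between the paper's Fourier transform and `𝓕`. -/
def annulus (E : Type*) [NormedAddCommGroup E] : Set E :=
  {η | (4 * Real.pi)⁻¹ ≤ ‖η‖ ∧ ‖η‖ ≤ Real.pi⁻¹}

lemma ne_zero_of_mem_annulus {E : Type*} [NormedAddCommGroup E] {η : E} (hη : η ∈ annulus E) :
    η ≠ 0 :=
  norm_pos_iff.1 ((by positivity : (0 : ℝ) < (4 * Real.pi)⁻¹).trans_le hη.1)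

variable {E : Type*} [NormedAddCommGroup E] [InnerProductSpace ℝ E] [FiniteDimensional ℝ E]

open scoped ContDiff in
lemma exists_annular_bump : ∃ Ψ : E → ℂ, ContDiff ℝ ∞ Ψ ∧ HasCompactSupport Ψ ∧ Ψ =ᶠ[𝓝 0] 0 ∧
    ∀ η ∈ annulus E, Ψ η = 1 := by
  have hπ := Real.pi_pos
  let inner : ContDiffBump (0 : E) :=
    ⟨(8 * Real.pi)⁻¹, (4 * Real.pi)⁻¹, by positivity, by gcongr; norm_num⟩
  let outer : ContDiffBump (0 : E) :=
    ⟨Real.pi⁻¹, 2 * Real.pi⁻¹, by positivity, by linarith [inv_pos.2 hπ]⟩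
  refine ⟨fun η => ((outer η * (1 - inner η) : ℝ) : ℂ), ?_, ?_, ?_, fun η hη => ?_⟩
  · exact ofRealCLM.contDiff.comp (outer.contDiff.mul (contDiff_const.sub inner.contDiff))
  · exact outer.hasCompactSupport.mul_right.comp_left (g := Complex.ofReal) Complex.ofReal_zero
  · filter_upwards [inner.eventuallyEq_one] with η hη
    simp [hη]
  · simp only
    rw [outer.one_of_mem_closedBall (by simpa using hη.2),
      inner.zero_of_le_dist (by simpa only [dist_zero_right] using hη.1)]
    simp

open scoped ContDiff in
lemma exists_seminormsBoundedBy_fourier_eq [MeasurableSpace E] [BorelSpace E] {f : ℝ × E → ℂ}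
    (hf : ∀ s η, η ≠ 0 → ContDiffAt ℝ ∞ f (s, η)) :
    ∃ A : ℝ → 𝓢(E, ℂ), SeminormsBoundedBy A (fun _ => 1) ∧
      ∀ s ∈ Set.Icc (0 : ℝ) 1, ∀ η ∈ annulus E, 𝓕 (A s) η = f (s, η) := by
  obtain ⟨Ψ, hΨ, hΨc, hΨ0, hΨ1⟩ := exists_annular_bump (E := E)
  let ρ : ContDiffBump (0 : ℝ) := ⟨1, 2, one_pos, one_lt_two⟩
  let g : ℝ × E → ℂ := fun q => (ρ q.1 * Ψ q.2) * f q
  have hsupp : HasCompactSupport fun q : ℝ × E => (ρ q.1 : ℂ) * Ψ q.2 := by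
    refine HasCompactSupport.intro (ρ.hasCompactSupport.prod hΨc) fun q hq => ?_
    rw [Set.mem_prod, not_and_or] at hq
    obtain h | h := hq
    · simp [image_eq_zero_of_notMem_tsupport h]
    · simp [image_eq_zero_of_notMem_tsupport h]
  have hsmooth : ContDiff ℝ ∞ g := by
    refine contDiff_iff_contDiffAt.2 fun ⟨s, η⟩ => ?_
    obtain rfl | hη := eq_or_ne η 0
    · refine contDiffAt_const (c := 0) |>.congr_of_eventuallyEq ?_
      filter_upwards [continuousAt_snd.eventually hΨ0] with q hq
      simp [g, hq]
    · exact ((ofRealCLM.contDiff.comp (ρ.contDiff.comp contDiff_fst)).mul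
        (hΨ.comp contDiff_snd)).contDiffAt.mul (hf s η hη)
  let G : 𝓢(ℝ × E, ℂ) := hsupp.mul_right.toSchwartzMap hsmooth
  refine ⟨fun s => 𝓕⁻ (slice G s),
    (seminormsBoundedBy_slice G).map (FourierTransform.fourierInvCLM ℂ 𝓢(E, ℂ)),
    fun s hs η hη => ?_⟩
  have hρ : ρ s = 1 := ρ.one_of_mem_closedBall (by
    simpa [abs_of_nonneg hs.1] using hs.2)
  rw [FourierTransform.fourier_fourierInv_eq, slice_apply]
  change (ρ s * Ψ η) * f (s, η) = f (s, η)
  rw [hρ, hΨ1 η hη]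
  simp

open scoped ContDiff in
lemma exists_fourier_eq [MeasurableSpace E] [BorelSpace E] {f : E → ℂ}
    (hf : ∀ η, η ≠ 0 → ContDiffAt ℝ ∞ f η) :
    ∃ A : 𝓢(E, ℂ), ∀ η ∈ annulus E, 𝓕 A η = f η := by
  obtain ⟨A, -, hA⟩ := exists_seminormsBoundedBy_fourier_eq (f := fun q : ℝ × E => f q.2)
    fun s η hη => (hf η hη).comp (s, η) contDiffAt_snd
  exact ⟨A 0, hA 0 (by simp)⟩

end AnnularMultipliers

section Poisson

variable {E : Type*} [NormedAddCommGroup E] [InnerProductSpace ℝ E] [FiniteDimensional ℝ E]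

/-- The symbol `e^{-2πτ|η|}` of the Poisson semigroup, in Mathlib's normalisation of `𝓕`. -/
def poisson (τ : ℝ) (η : E) : ℂ := (Real.exp (-(2 * Real.pi * τ * ‖η‖)) : ℝ)

/- With `s = 1/(1+σ)` and `a = 2π|η|`, the symbol `e^{-σa}` equals `s² e^a a⁻² h(s/a)`, where
`h(x) = x⁻² e^{-1/x}` extends smoothly by zero to `x ≤ 0`. -/
open scoped ContDiff in
lemma exists_poisson_kernel [MeasurableSpace E] [BorelSpace E] : ∃ κ : ℝ≥0 → 𝓢(E, ℂ),
    SeminormsBoundedBy κ (fun σ => ((1 + σ) ^ 2)⁻¹) ∧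
      ∀ σ, ∀ η ∈ annulus E, 𝓕 (κ σ) η = poisson σ η := by
  let h : ℝ → ℝ := fun x => x⁻¹ ^ 2 * expNegInvGlue x
  have hh : ContDiff ℝ ∞ h := by
    have := expNegInvGlue.contDiff_polynomial_eval_inv_mul (n := ⊤) (Polynomial.X ^ 2)
    simp only [Polynomial.eval_pow, Polynomial.eval_X] at this
    exact this
  let a : E → ℝ := fun η => 2 * Real.pi * ‖η‖
  have ha {η : E} (hη : η ≠ 0) : 0 < a η := mul_pos Real.two_pi_pos (norm_pos_iff.2 hη)
  have hadiff {s : ℝ} {η : E} (hη : η ≠ 0) : ContDiffAt ℝ ∞ (fun q : ℝ × E => a q.2) (s, η) :=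
    contDiffAt_const.mul ((contDiffAt_norm ℝ hη).comp (s, η) contDiffAt_snd)
  obtain ⟨A, hA, hAf⟩ := exists_seminormsBoundedBy_fourier_eq
    (f := fun q : ℝ × E => ((Real.exp (a q.2) * (a q.2)⁻¹ ^ 2 * h (q.1 / a q.2) : ℝ) : ℂ))
    fun s η hη => ofRealCLM.contDiff.contDiffAt.comp _ <|
      ((hadiff hη).exp.mul (((hadiff hη).inv (ha hη).ne').pow 2)).mul
        (hh.contDiffAt.comp _ (contDiffAt_fst.div (hadiff hη) (ha hη).ne'))
  refine ⟨fun σ => (((1 + σ : ℝ)⁻¹ ^ 2 : ℝ) : ℂ) • A (1 + σ)⁻¹, fun k n => ?_, fun σ η hη => ?_⟩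
  · obtain ⟨C, hC⟩ := hA k n
    refine ⟨C, fun σ => ?_⟩
    rw [map_smul_eq_mul, mul_comm, norm_real, Real.norm_of_nonneg (by positivity), inv_pow]
    push_cast
    gcongr
    simpa using hC (1 + σ : ℝ)⁻¹
  · have hη0 := ne_zero_of_mem_annulus hη
    have hpos : 0 < (1 + σ : ℝ)⁻¹ / a η := div_pos (by positivity) (ha hη0)
    have hane := (ha hη0).ne'
    rw [FourierTransform.fourier_smul, _root_.smul_apply, hAf _ ⟨by positivity,
      inv_le_one_of_one_le₀ (by simp)⟩ η hη, smul_eq_mul, ← ofReal_mul, poisson]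
    simp only [h, expNegInvGlue, if_neg hpos.not_ge]
    have hexp : Real.exp (a η) * Real.exp (-((1 + σ : ℝ)⁻¹ / a η)⁻¹)
        = Real.exp (-(2 * Real.pi * σ * ‖η‖)) := by
      rw [← Real.exp_add, inv_div, div_inv_eq_mul]
      congr 1
      ring
    rw [← hexp]
    congr 1
    field_simp

end Poisson

section Blocks

variable {d : ℕ} (P : LPData d)

lemma FT_eq_fourier (f : Rd d → ℂ) (ξ : Rd d) : FT f ξ = 𝓕 f ((2 * Real.pi)⁻¹ • ξ) := by
  rw [FT, Real.fourier_eq']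
  refine integral_congr_ae (.of_forall fun x => ?_)
  simp only [smul_eq_mul, real_inner_smul_right]
  congr 2
  push_cast
  field_simp

/-- The symbol `φ̂₀(2^{-k}ξ)` of the `k`-th Littlewood–Paley block in Mathlib's frequency variable
`η = ξ / 2π`. -/
def symbol (k : ℤ) (η : Rd d) : ℂ := 𝓕 (dilate k P.φ) η

lemma symbol_eq_fourier (k : ℤ) (η : Rd d) : symbol P k η = 𝓕 P.φ ((2 : ℝ) ^ (-k) • η) :=
  fourier_dilate k P.φ η

lemma symbol_eq_FT (k : ℤ) (η : Rd d) :
    symbol P k η = FT P.φ ((2 : ℝ) ^ (-k) • ((2 * Real.pi) • η)) := by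
  rw [symbol_eq_fourier, FT_eq_fourier, SchwartzMap.fourier_coe, smul_comm,
    inv_smul_smul₀ Real.two_pi_pos.ne']

lemma mem_annulus_of_symbol_ne_zero {k : ℤ} {η : Rd d} (h : symbol P k η ≠ 0) :
    (2 : ℝ) ^ (-k) • η ∈ annulus (Rd d) := by
  have hπ := Real.pi_pos
  rw [symbol_eq_FT, smul_comm] at h
  obtain ⟨h1, h2⟩ := P.hsupp _ h
  rw [norm_smul, Real.norm_of_nonneg (by positivity)] at h1 h2
  constructor
  · rw [inv_le_iff_one_le_mul₀ (by positivity)]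
    linarith
  · rw [← one_div, le_div_iff₀ hπ]
    linarith

lemma symbol_zero (k : ℤ) : symbol P k 0 = 0 := by
  by_contra h
  exact ne_zero_of_mem_annulus (mem_annulus_of_symbol_ne_zero P h) (smul_zero _)

lemma norm_symbol (k : ℤ) (η : Rd d) : ‖symbol P k η‖ = (symbol P k η).re := by
  have him : (symbol P k η).im = 0 := symbol_eq_FT P k η ▸ P.him _
  have hre : 0 ≤ (symbol P k η).re := symbol_eq_FT P k η ▸ P.h0 _
  rw [← abs_re_eq_norm.2 him, abs_of_nonneg hre]

lemma hasSum_symbol {η : Rd d} (hη : η ≠ 0) : HasSum (fun k => symbol P k η) 1 := by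
  simp only [symbol_eq_FT]
  exact P.hsum _ (smul_ne_zero Real.two_pi_pos.ne' hη)

lemma hasSum_norm_symbol {η : Rd d} (hη : η ≠ 0) : HasSum (fun k => ‖symbol P k η‖) 1 := by
  simpa only [norm_symbol] using! Complex.hasSum_re (hasSum_symbol P hη)

/-- The `k`-th Littlewood–Paley block of the function with Fourier transform `w`. -/
def block (k : ℤ) (w : Rd d → ℂ) : Rd d → ℂ := 𝓕⁻ fun η => symbol P k η * w η

lemma LP_eq_conv (k : ℤ) (f : Rd d → ℂ) : LP P k f = conv (dilate k P.φ) f := by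
  ext x
  rw [LP, conv_apply]
  simp only [dilate_apply, finrank_euclideanSpace_fin, mul_comm (d : ℤ)]
  push_cast
  rfl

variable {w : Rd d → ℂ}

lemma block_congr {w' : Rd d → ℂ} {k : ℤ} (h : ∀ η, symbol P k η ≠ 0 → w η = w' η) :
    block P k w = block P k w' := by
  rw [block, block]
  congr 1
  ext η
  obtain h0 | h0 := eq_or_ne (symbol P k η) 0
  · rw [h0, zero_mul, zero_mul]
  · rw [h η h0]

variable (hw : Integrable w)

include hw

lemma integrable_fourier_mul (A : 𝓢(Rd d, ℂ)) : Integrable fun η => 𝓕 A η * w η := by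
  obtain ⟨C, hC⟩ := (𝓕 A).decay 0 0
  exact hw.bdd_mul (𝓕 A).continuous.aestronglyMeasurable
    (.of_forall fun η => by simpa using hC.2 η)

lemma conv_dilate_fourierInv (k : ℤ) : conv (dilate k P.φ) (𝓕⁻ w) = block P k w :=
  conv_fourierInv _ hw

lemma LP_fourierInv (k : ℤ) : LP P k (𝓕⁻ w) = block P k w := by
  rw [LP_eq_conv, conv_dilate_fourierInv P hw]

lemma continuous_block (k : ℤ) : Continuous (block P k w) :=
  continuous_fourierInv_of_integrable (integrable_fourier_mul hw _)

lemma conv_block (A : 𝓢(Rd d, ℂ)) (k : ℤ) :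
    conv A (block P k w) = block P k fun η => 𝓕 A η * w η := by
  refine (conv_fourierInv A (integrable_fourier_mul hw _)).trans ?_
  simp only [block, symbol, mul_left_comm]

lemma block_mul_of_fourier_eq {A : 𝓢(Rd d, ℂ)} {m : Rd d → ℂ} {k : ℤ}
    (hA : ∀ η, symbol P k η ≠ 0 → 𝓕 A η = m η) :
    block P k (fun η => m η * w η) = conv A (block P k w) := by
  rw [conv_block P hw]
  exact block_congr P fun η hη => by rw [hA η hη]

lemma hasSum_block [NeZero d] (x : Rd d) : HasSum (fun k => block P k w x) (𝓕⁻ w x) := by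
  have h0 : ∀ᵐ η : Rd d, η ≠ 0 := Measure.ae_ne volume 0
  have htsum : (fun η => ∑' k, ‖symbol P k η‖ * ‖w η‖) =ᵐ[volume] fun η => ‖w η‖ := by
    filter_upwards [h0] with η hη
    rw [tsum_mul_right, (hasSum_norm_symbol P hη).tsum_eq, one_mul]
  simp only [block, fourierInv_apply]
  refine hasSum_integral_of_dominated_convergence (fun k η => ‖symbol P k η‖ * ‖w η‖)
    (fun k => (integrable_cexp_mul (integrable_fourier_mul hw _) x).1)
    (fun k => .of_forall fun η => ?_) ?_ (hw.norm.congr htsum.symm) ?_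
  · rw [norm_mul, norm_exp_ofReal_mul_I, one_mul, norm_mul]
  · filter_upwards [h0] with η hη using (hasSum_norm_symbol P hη).summable.mul_right _
  · filter_upwards [h0] with η hη
    simpa using ((hasSum_symbol P hη).mul_right (w η)).mul_left _

lemma enorm_fourierInv_le_tsum_block [NeZero d] (x : Rd d) :
    ‖𝓕⁻ w x‖ₑ ≤ ∑' k, ‖block P k w x‖ₑ := by
  rw [← (hasSum_block P hw x).tsum_eq]
  exact enorm_tsum_le_tsum_enorm

lemma enorm_fwdDiff_iter_fourierInv_le_tsum_block [NeZero d] (h : Rd d) (N : ℕ) (x : Rd d) :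
    ‖(fwdDiff h)^[N] (𝓕⁻ w) x‖ₑ ≤ ∑' k, ‖(fwdDiff h)^[N] (block P k w) x‖ₑ := by
  have hsum : HasSum (fun k => (fwdDiff h)^[N] (block P k w) x) ((fwdDiff h)^[N] (𝓕⁻ w) x) := by
    simp only [fwdDiff_iter_eq_sum_shift]
    exact hasSum_sum fun j _ => (hasSum_block P hw _).const_smul _
  rw [← hsum.tsum_eq]
  exact enorm_tsum_le_tsum_enorm

end Blocks

section BlockBounds

lemma tsum_inv_two_pow_natAbs_le : ∑' k : ℤ, ((2 : ℝ≥0∞) ^ k.natAbs)⁻¹ ≤ 4 := by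
  rw [tsum_of_nat_of_neg_add_one ENNReal.summable ENNReal.summable]
  have hgeom : ∑' k : ℕ, ((2 : ℝ≥0∞) ^ k)⁻¹ = 2 := by
    simp only [ENNReal.inv_pow, ENNReal.tsum_geometric, ENNReal.one_sub_inv_two, inv_inv]
  have hneg : ∑' k : ℕ, ((2 : ℝ≥0∞) ^ (-((k : ℤ) + 1)).natAbs)⁻¹ ≤ 2 := by
    refine (ENNReal.tsum_le_tsum fun k => ENNReal.inv_le_inv.2 ?_).trans hgeom.le
    exact pow_le_pow_right₀ (one_le_two (α := ℝ≥0∞)) (by lia : k ≤ (-((k : ℤ) + 1)).natAbs)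
  calc _ ≤ (2 : ℝ≥0∞) + 2 := add_le_add hgeom.le hneg
    _ = 4 := by norm_num

variable {d : ℕ} (P : LPData d)

/-- The blocks of the function with Fourier transform `w` are bounded by `H`, up to a factor growing
at most like `2^{n|k|}`. This is how membership in some Besov space enters pointwise estimates. -/
def BlockBound (n : ℕ) (w : Rd d → ℂ) (H : ℝ≥0∞) : Prop :=
  ∀ k x, ‖block P k w x‖ₑ ≤ 2 ^ (n * k.natAbs) * H

variable {P} {n : ℕ} {w : Rd d → ℂ} {H : ℝ≥0∞}

lemma BlockBound.enorm_block_mul_le (hb : BlockBound P n w H) (hw : Integrable w)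
    {A : 𝓢(Rd d, ℂ)} {m : Rd d → ℂ} {k : ℤ} (hA : ∀ η, symbol P k η ≠ 0 → 𝓕 A η = m η) (x : Rd d) :
    ‖block P k (fun η => m η * w η) x‖ₑ ≤ 2 ^ (n * k.natAbs) * ((∫⁻ z, ‖A z‖ₑ) * H) := by
  rw [block_mul_of_fourier_eq P hw hA, mul_left_comm]
  exact enorm_conv_le_of_le A (hb k) x

lemma BlockBound.fourier_mul (hb : BlockBound P n w H) (hw : Integrable w) (A : 𝓢(Rd d, ℂ)) :
    BlockBound P n (fun η => 𝓕 A η * w η) ((∫⁻ z, ‖A z‖ₑ) * H) :=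
  fun _ x => hb.enorm_block_mul_le hw (fun _ _ => rfl) x

variable (d) in
/-- A Schwartz function whose Fourier transform is a bump function which is `1` for
`|η| ≤ (4π)⁻¹` and `0` for `|η| ≥ (2π)⁻¹`. -/
def lowPass : 𝓢(Rd d, ℂ) :=
  let f : ContDiffBump (0 : Rd d) := ⟨(4 * Real.pi)⁻¹, (2 * Real.pi)⁻¹, by positivity, by
    have := Real.pi_pos
    gcongr
    norm_num⟩
  𝓕⁻ ((f.hasCompactSupport.comp_left (g := Complex.ofReal) Complex.ofReal_zero).toSchwartzMap
    (Complex.ofRealCLM.contDiff.comp f.contDiff))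

lemma fourier_lowPass_eq_one {η : Rd d} (hη : ‖η‖ ≤ (4 * Real.pi)⁻¹) : 𝓕 (lowPass d) η = 1 := by
  rw [lowPass, FourierTransform.fourier_fourierInv_eq]
  exact congrArg Complex.ofReal (ContDiffBump.one_of_mem_closedBall _ (by simpa using hη))

lemma fourier_lowPass_eq_zero {η : Rd d} (hη : (2 * Real.pi)⁻¹ ≤ ‖η‖) : 𝓕 (lowPass d) η = 0 := by
  rw [lowPass, FourierTransform.fourier_fourierInv_eq]
  exact congrArg Complex.ofReal (ContDiffBump.zero_of_le_dist _ (by simpa using hη))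

/-- The low frequency part of the function with Fourier transform `w`. -/
def low (w : Rd d → ℂ) : Rd d → ℂ := 𝓕⁻ fun η => 𝓕 (lowPass d) η * w η

/-- The high frequency part of the function with Fourier transform `w`. -/
def high (w : Rd d → ℂ) : Rd d → ℂ := 𝓕⁻ fun η => (1 - 𝓕 (lowPass d) η) * w η

lemma integrable_one_sub_mul (hw : Integrable w) :
    Integrable fun η => (1 - 𝓕 (lowPass d) η) * w η := by
  simpa only [sub_mul, one_mul] using! hw.sub (integrable_fourier_mul hw _)

lemma low_add_high (hw : Integrable w) (x : Rd d) : low w x + high w x = 𝓕⁻ w x := by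
  simp only [low, high, fourierInv_apply]
  rw [← integral_add (integrable_cexp_mul (integrable_fourier_mul hw _) x)
    (integrable_cexp_mul (integrable_one_sub_mul hw) x)]
  refine integral_congr_ae (.of_forall fun η => ?_)
  ring

lemma symbol_mul_lowPass_eq_zero {k : ℤ} (hk : 0 < k) (η : Rd d) :
    symbol P k η * 𝓕 (lowPass d) η = 0 := by
  by_cases h : symbol P k η = 0
  · rw [h, zero_mul]
  have hη := (mem_annulus_of_symbol_ne_zero P h).1
  rw [fourier_lowPass_eq_zero, mul_zero]
  rw [norm_smul, norm_zpow, Real.norm_ofNat, zpow_neg, le_inv_mul_iff₀ (by positivity)] at hη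
  have : (2 : ℝ) ≤ 2 ^ k := by
    simpa using zpow_le_zpow_right₀ (one_le_two (α := ℝ)) (by lia : 1 ≤ k)
  calc (2 * Real.pi)⁻¹ = 2 * (4 * Real.pi)⁻¹ := by ring
    _ ≤ 2 ^ k * (4 * Real.pi)⁻¹ := by gcongr
    _ ≤ ‖η‖ := hη

lemma symbol_mul_one_sub_lowPass_eq_zero {k : ℤ} (hk : k < -1) (η : Rd d) :
    symbol P k η * (1 - 𝓕 (lowPass d) η) = 0 := by
  by_cases h : symbol P k η = 0
  · rw [h, zero_mul]
  have hη := (mem_annulus_of_symbol_ne_zero P h).2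
  rw [fourier_lowPass_eq_one, sub_self, mul_zero]
  rw [norm_smul, norm_zpow, Real.norm_ofNat, zpow_neg, inv_mul_le_iff₀ (by positivity)] at hη
  have : (2 : ℝ) ^ k ≤ 4⁻¹ :=
    (zpow_le_zpow_right₀ one_le_two (by lia : k ≤ -2)).trans (by norm_num)
  rw [mul_inv]
  exact hη.trans (by gcongr)

lemma enorm_fwdDiff_iter_block_low_le {A : 𝓢(Rd d, ℂ)} (hA : ∀ η ∈ annulus (Rd d), 𝓕 A η = 1)
    {C : ℝ≥0} (hC : ∀ h, ∫⁻ z, ‖A (z + h) - A z‖ₑ ≤ C * ‖h‖ₑ) (hw : Integrable w)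
    (hb : BlockBound P n w H) (k : ℤ) (h x : Rd d) :
    ‖(fwdDiff h)^[n + 1] (block P k fun η => 𝓕 (lowPass d) η * w η) x‖ₑ ≤
      ((2 : ℝ≥0∞) ^ k.natAbs)⁻¹ *
        (C ^ (n + 1) * ‖h‖ₑ ^ (n + 1) * ((∫⁻ z, ‖lowPass d z‖ₑ) * H)) := by
  obtain hk | hk := lt_or_ge 0 k
  · have h0 : block P k (fun η => 𝓕 (lowPass d) η * w η) = 0 := by
      ext x
      simp [block, fourierInv_apply, ← mul_assoc,
        symbol_mul_lowPass_eq_zero hk]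
    simp [h0, fwdDiff_iter_eq_sum_shift]
  obtain ⟨m, rfl⟩ := Int.exists_eq_neg_ofNat hk
  have hstep : ∫⁻ z, ‖dilate (-m) A (z + h) - dilate (-m) A z‖ₑ ≤
      C * (((2 : ℝ≥0∞) ^ m)⁻¹ * ‖h‖ₑ) := by
    rw [lintegral_enorm_dilate_sub]
    refine (hC _).trans_eq ?_
    rw [enorm_smul, zpow_neg, zpow_natCast, enorm_inv (by positivity), enorm_pow,
      Real.enorm_eq_ofReal zero_le_two, ENNReal.ofReal_ofNat]
  have hrep (η : Rd d) : 𝓕 (dilate (-m) A) η * (symbol P (-m) η * (𝓕 (lowPass d) η * w η))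
      = symbol P (-m) η * (𝓕 (lowPass d) η * w η) := by
    obtain h | h := eq_or_ne (symbol P (-m) η) 0
    · simp [h]
    · rw [fourier_dilate, hA _ (mem_annulus_of_symbol_ne_zero P h), one_mul]
  refine (enorm_fwdDiff_iter_fourierInv_le (integrable_fourier_mul (integrable_fourier_mul hw _) _)
    hrep (hb.fourier_mul hw _ (-m)) h (n + 1) x).trans ?_
  have hpow : (((2 : ℝ≥0∞) ^ m)⁻¹) ^ (n + 1) * 2 ^ (n * m) = (2 ^ m)⁻¹ := by
    rw [mul_comm n m, pow_mul, pow_succ, mul_right_comm, ← mul_pow,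
      ENNReal.inv_mul_cancel (by simp) (by simp), one_pow, one_mul]
  calc _ ≤ (C * (((2 : ℝ≥0∞) ^ m)⁻¹ * ‖h‖ₑ)) ^ (n + 1) * (2 ^ (n * m) *
        ((∫⁻ z, ‖lowPass d z‖ₑ) * H)) := by
        rw [Int.natAbs_neg, Int.natAbs_natCast]
        gcongr
    _ = ((((2 : ℝ≥0∞) ^ m)⁻¹) ^ (n + 1) * 2 ^ (n * m)) *
        (C ^ (n + 1) * ‖h‖ₑ ^ (n + 1) * ((∫⁻ z, ‖lowPass d z‖ₑ) * H)) := by ring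
    _ = _ := by rw [hpow, Int.natAbs_neg, Int.natAbs_natCast]

variable (P n) in
theorem exists_enorm_fwdDiff_iter_low_le [NeZero d] : ∃ C : ℝ≥0, ∀ (w : Rd d → ℂ) (H : ℝ≥0∞),
    Integrable w → BlockBound P n w H → ∀ h x,
      ‖(fwdDiff h)^[n + 1] (low w) x‖ₑ ≤ C * ‖h‖ₑ ^ (n + 1) * H := by
  obtain ⟨A, hA⟩ := exists_fourier_eq (E := Rd d) (f := fun _ => 1) fun _ _ => contDiffAt_const
  obtain ⟨C, hC⟩ := exists_lintegral_enorm_sub_le A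
  refine ⟨4 * C ^ (n + 1) * (∫⁻ z, ‖lowPass d z‖ₑ).toNNReal, fun w H hw hb h x => ?_⟩
  calc ‖(fwdDiff h)^[n + 1] (low w) x‖ₑ
      ≤ ∑' k : ℤ, ((2 : ℝ≥0∞) ^ k.natAbs)⁻¹ *
        (C ^ (n + 1) * ‖h‖ₑ ^ (n + 1) * ((∫⁻ z, ‖lowPass d z‖ₑ) * H)) :=
        (enorm_fwdDiff_iter_fourierInv_le_tsum_block P (integrable_fourier_mul hw _) h _ x).trans
          (ENNReal.tsum_le_tsum fun k => enorm_fwdDiff_iter_block_low_le hA hC hw hb k h x)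
    _ ≤ 4 * (C ^ (n + 1) * ‖h‖ₑ ^ (n + 1) * ((∫⁻ z, ‖lowPass d z‖ₑ) * H)) := by
        rw [ENNReal.tsum_mul_right]
        gcongr
        exact tsum_inv_two_pow_natAbs_le
    _ = _ := by
        push_cast
        rw [ENNReal.coe_toNNReal (lintegral_enorm_ne_top _)]
        ring

/-- The Fourier multiplier with symbol `|η|^{2L}`, a power of the Laplacian up to a constant. -/
def normPow (L : ℕ) : 𝓢(Rd d, ℂ) →L[ℂ] 𝓢(Rd d, ℂ) :=
  SchwartzMap.fourierMultiplierCLM ℂ fun η : Rd d => (((‖η‖ ^ 2) ^ L : ℝ) : ℂ)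

lemma fourier_normPow (L : ℕ) (A : 𝓢(Rd d, ℂ)) (η : Rd d) :
    𝓕 (normPow L A) η = (((‖η‖ ^ 2) ^ L : ℝ) : ℂ) * 𝓕 A η := by
  have hg : Function.HasTemperateGrowth fun η : Rd d => (‖η‖ ^ 2) ^ L :=
    (Function.hasTemperateGrowth_norm_sq (Rd d)).pow L
  have hof := SchwartzMap.fourierMultiplierCLM_ofReal ℂ hg A
  rw [normPow]
  refine (congrArg (fun B : 𝓢(Rd d, ℂ) => 𝓕 B η) hof).trans ?_
  simp only [SchwartzMap.fourierMultiplierCLM_apply, FourierTransform.fourier_fourierInv_eq]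
  rw [SchwartzMap.smulLeftCLM_apply_apply hg, Complex.real_smul]

lemma inv_pow_mul_two_pow_natAbs_le (n : ℕ) {k : ℤ} (hk : -1 ≤ k) :
    ‖(((2 : ℂ) ^ k) ^ (2 * (n + 1)))⁻¹‖ₑ * 2 ^ (n * k.natAbs) ≤
      2 ^ (3 * n + 3) * ((2 : ℝ≥0∞) ^ k.natAbs)⁻¹ := by
  have h2 : ‖(2 : ℂ)‖ₑ = 2 := by simp [← ofReal_norm]
  obtain ⟨m, rfl | rfl⟩ := k.eq_nat_or_neg
  · rw [zpow_natCast, enorm_inv (pow_ne_zero _ (pow_ne_zero _ two_ne_zero)), enorm_pow, enorm_pow,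
      h2, Int.natAbs_natCast, ← div_eq_mul_inv, ENNReal.le_div_iff_mul_le (by simp) (by simp),
      mul_assoc, ENNReal.inv_mul_le_iff (by simp) (by simp)]
    simp only [← pow_mul, ← pow_add]
    exact pow_le_pow_right₀ one_le_two (by nlinarith)
  · obtain rfl | rfl : m = 0 ∨ m = 1 := by lia
    · simpa using one_le_pow₀ (one_le_two (α := ℝ≥0∞))
    · rw [Int.natAbs_neg, Int.natAbs_natCast, Nat.cast_one, zpow_neg_one, inv_pow, inv_inv,
        enorm_pow, h2, ← pow_add, pow_one, ← div_eq_mul_inv,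
        ENNReal.le_div_iff_mul_le (by simp) (by simp), ← pow_succ]
      exact pow_le_pow_right₀ one_le_two (by lia)

lemma BlockBound.one_sub_mul (hb : BlockBound P n w H) (hw : Integrable w) :
    BlockBound P n (fun η => (1 - 𝓕 (lowPass d) η) * w η) ((1 + ∫⁻ z, ‖lowPass d z‖ₑ) * H) := by
  intro k x
  have hsub : block P k (fun η => (1 - 𝓕 (lowPass d) η) * w η) x
      = block P k w x - block P k (fun η => 𝓕 (lowPass d) η * w η) x := by
    simp only [block, symbol, fourierInv_apply]
    rw [← integral_sub (integrable_cexp_mul (integrable_fourier_mul hw _) x)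
      (integrable_cexp_mul (integrable_fourier_mul (integrable_fourier_mul hw _) _) x)]
    refine integral_congr_ae (.of_forall fun η => ?_)
    ring
  rw [hsub, add_mul, one_mul, mul_add]
  exact (enorm_sub_le).trans (add_le_add (hb k x) (hb.fourier_mul hw _ k x))

lemma enorm_block_high_le {R : 𝓢(Rd d, ℂ)}
    (hR : ∀ η ∈ annulus (Rd d), 𝓕 R η = (((‖η‖ ^ 2) ^ (n + 1) : ℝ) : ℂ)⁻¹) (hw : Integrable w)
    (hb : BlockBound P n w H) (A : 𝓢(Rd d, ℂ)) (k : ℤ) (x : Rd d) :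
    ‖block P k (fun η => 𝓕 A η * ((1 - 𝓕 (lowPass d) η) * w η)) x‖ₑ ≤
      2 ^ (3 * n + 3) * ((2 : ℝ≥0∞) ^ k.natAbs)⁻¹ * ((∫⁻ z, ‖R z‖ₑ) *
        ((∫⁻ z, ‖normPow (n + 1) A z‖ₑ) * ((1 + ∫⁻ z, ‖lowPass d z‖ₑ) * H))) := by
  obtain hk | hk := lt_or_ge k (-1)
  · have h0 (η : Rd d) : symbol P k η * (𝓕 A η * ((1 - 𝓕 (lowPass d) η) * w η)) = 0 := by
      rw [mul_left_comm, ← mul_assoc (symbol P k η), symbol_mul_one_sub_lowPass_eq_zero hk,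
        zero_mul, mul_zero]
    simp [block, fourierInv_apply, h0]
  set c : ℂ := (((2 : ℂ) ^ k) ^ (2 * (n + 1)))⁻¹
  have hfactor : block P k (fun η => 𝓕 A η * ((1 - 𝓕 (lowPass d) η) * w η)) =
      block P k fun η => 𝓕 (c • dilate k R) η *
        (𝓕 (normPow (n + 1) A) η * ((1 - 𝓕 (lowPass d) η) * w η)) := by
    refine block_congr P fun η hη => ?_
    have hη0 : η ≠ 0 := fun h => hη (h ▸ symbol_zero P k)
    rw [FourierTransform.fourier_smul, _root_.smul_apply, fourier_dilate,
      hR _ (mem_annulus_of_symbol_ne_zero P hη), fourier_normPow, norm_smul, norm_zpow,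
      Real.norm_ofNat]
    have hn : (‖η‖ : ℂ) ≠ 0 := by simpa using hη0
    simp only [c, smul_eq_mul, pow_mul]
    push_cast
    rw [zpow_neg, mul_pow, mul_pow, inv_pow, inv_pow, mul_inv, inv_inv]
    field_simp
  have hv := integrable_one_sub_mul hw
  have hbound := ((hb.one_sub_mul hw).fourier_mul hv (normPow (n + 1) A)).fourier_mul
    (integrable_fourier_mul hv _) (c • dilate k R) k x
  have hR1 : ∫⁻ z, ‖(c • dilate k R) z‖ₑ = ‖c‖ₑ * ∫⁻ z, ‖R z‖ₑ := by
    simp only [_root_.smul_apply, enorm_smul]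
    rw [lintegral_const_mul _ (dilate k R).continuous.enorm.measurable, lintegral_enorm_dilate]
  rw [hfactor]
  refine hbound.trans ?_
  rw [hR1, mul_assoc ‖c‖ₑ, ← mul_assoc (2 ^ _), mul_comm (2 ^ (n * _)) ‖c‖ₑ]
  exact mul_le_mul_left (inv_pow_mul_two_pow_natAbs_le n hk) _

variable (P n) in
theorem exists_enorm_conv_high_le [NeZero d] : ∃ C : ℝ≥0, ∀ (w : Rd d → ℂ) (H : ℝ≥0∞),
    Integrable w → BlockBound P n w H → ∀ (A : 𝓢(Rd d, ℂ)) x,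
      ‖conv A (high w) x‖ₑ ≤ C * (∫⁻ z, ‖normPow (n + 1) A z‖ₑ) * H := by
  obtain ⟨R, hR⟩ := exists_fourier_eq (E := Rd d)
    (f := fun η => (((‖η‖ ^ 2) ^ (n + 1) : ℝ) : ℂ)⁻¹) fun η hη =>
      (ofRealCLM.contDiff.comp ((contDiff_norm_sq ℝ).pow (n + 1))).contDiffAt.inv
        (by simpa using hη)
  have hR1 := lintegral_enorm_ne_top R
  have hX := lintegral_enorm_ne_top (lowPass d)
  refine ⟨2 ^ (3 * n + 3) * 4 * (∫⁻ z, ‖R z‖ₑ).toNNReal *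
    (1 + (∫⁻ z, ‖lowPass d z‖ₑ).toNNReal), fun w H hw hb A x => ?_⟩
  rw [high, conv_fourierInv A (integrable_one_sub_mul hw)]
  refine (enorm_fourierInv_le_tsum_block P (integrable_fourier_mul (integrable_one_sub_mul hw) A)
    x).trans ((ENNReal.tsum_le_tsum fun k => enorm_block_high_le hR hw hb A k x).trans ?_)
  rw [ENNReal.tsum_mul_right, ENNReal.tsum_mul_left]
  push_cast
  rw [ENNReal.coe_toNNReal hR1, ENNReal.coe_toNNReal hX]
  calc _ ≤ 2 ^ (3 * n + 3) * 4 * ((∫⁻ z, ‖R z‖ₑ) *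
        ((∫⁻ z, ‖normPow (n + 1) A z‖ₑ) * ((1 + ∫⁻ z, ‖lowPass d z‖ₑ) * H))) := by
        gcongr
        exact tsum_inv_two_pow_natAbs_le
    _ = _ := by ring

end BlockBounds

section Mollifiers

variable {E : Type*} [NormedAddCommGroup E] [InnerProductSpace ℝ E] [FiniteDimensional ℝ E]
  [MeasurableSpace E] [BorelSpace E]

lemma exists_conv_eq_integral_smul (A : 𝓢(E, ℂ)) {c : ℝ} (hc : c ≠ 0) : ∃ B : 𝓢(E, ℂ),
    (∀ z, A (c⁻¹ • z) = 0 → B z = 0) ∧ ∀ f x, conv B f x = ∫ h, A h * f (x - c • h) := by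
  refine ⟨((|(c ^ Module.finrank ℝ E)⁻¹| : ℝ) : ℂ) • SchwartzMap.compCLMOfContinuousLinearEquiv ℂ
    (ContinuousLinearEquiv.smulLeft (Units.mk0 c⁻¹ (inv_ne_zero hc))) A,
    fun z hz => mul_eq_zero_of_right _ hz, fun f x => ?_⟩
  have hsub := Measure.integral_comp_smul volume (fun z => A (c⁻¹ • z) * f (x - z)) c
  simp only [inv_smul_smul₀ hc] at hsub
  rw [hsub, conv_apply, ← integral_smul]
  refine integral_congr_ae (.of_forall fun z => ?_)
  exact (mul_assoc _ _ _).trans (real_smul ..).symm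

variable (E) in
lemma exists_nonneg_bump {δ : ℝ} (hδ : 0 < δ) : ∃ A : 𝓢(E, ℂ),
    ∫ z, A z = 1 ∧ ∫⁻ z, ‖A z‖ₑ = 1 ∧ ∀ z, δ ≤ ‖z‖ → A z = 0 := by
  let f : ContDiffBump (0 : E) := ⟨δ / 2, δ, half_pos hδ, half_lt_self hδ⟩
  have hc : HasCompactSupport fun x => (f.normed volume x : ℂ) :=
    f.hasCompactSupport_normed.comp_left (g := Complex.ofReal) Complex.ofReal_zero
  set A := hc.toSchwartzMap (Complex.ofRealCLM.contDiff.comp f.contDiff_normed)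
  have hA (z : E) : A z = (f.normed volume z : ℂ) := rfl
  have hint : ∫ z, A z = 1 := by
    simp only [hA, integral_complex_ofReal, f.integral_normed, ofReal_one]
  refine ⟨A, hint, ?_, fun z hz => ?_⟩
  · rw [← ofReal_integral_norm_eq_lintegral_enorm A.integrable]
    simp only [hA, norm_real, Real.norm_of_nonneg (f.nonneg_normed _), f.integral_normed,
      ENNReal.ofReal_one]
  · have : z ∉ Function.support (f.normed volume) := by
      rw [f.support_normed_eq]
      simpa [f] using hz
    rw [hA, Function.notMem_support.1 this, ofReal_zero]

lemma integrable_mul_of_eq_zero (A : 𝓢(E, ℂ)) {δ : ℝ} (hA : ∀ z, δ ≤ ‖z‖ → A z = 0) {G : E → ℂ}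
    (hG : Continuous G) : Integrable fun z => A z * G z := by
  refine (A.continuous.mul hG).integrable_of_hasCompactSupport
    (HasCompactSupport.intro (isCompact_closedBall 0 δ) fun z hz => ?_)
  have hδz : δ ≤ ‖z‖ := (not_le.1 fun h => hz (mem_closedBall_zero_iff.2 h)).le
  rw [Pi.mul_apply, hA z hδz, zero_mul]

lemma enorm_le_of_integral_mul_eq_one {A : 𝓢(E, ℂ)} (hA : ∫ z, A z = 1) (hA1 : ∫⁻ z, ‖A z‖ₑ = 1)
    {G : E → ℂ} {v S : ℂ} {D : ℝ≥0∞} (hG : ∀ z, A z ≠ 0 → ‖G z‖ₑ ≤ D)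
    (h : ∫ z, A z * v = (∫ z, A z * G z) - S) : ‖v‖ₑ ≤ ‖S‖ₑ + D := by
  rw [integral_mul_const, hA, one_mul] at h
  rw [h, add_comm]
  refine enorm_sub_le.trans ?_
  gcongr
  calc _ ≤ ∫⁻ z, ‖A z‖ₑ * D := by
        refine (enorm_integral_le_lintegral_enorm _).trans (lintegral_mono fun z => ?_)
        rw [enorm_mul]
        by_cases hz : A z = 0
        · simp [hz]
        · gcongr
          exact hG z hz
    _ = D := by rw [lintegral_mul_const _ A.continuous.enorm.measurable, hA1, one_mul]

lemma integral_mul_neg_one_pow_smul (A : 𝓢(E, ℂ)) {δ : ℝ} (hA : ∀ z, δ ≤ ‖z‖ → A z = 0)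
    {g : E → ℂ} (hg : Continuous g) (x : E) (N : ℕ) :
    ∫ h, A h * ((-1 : ℤ) ^ N • g x) = (∫ h, A h * (fwdDiff h)^[N] g x) -
      ∑ j ∈ Finset.range N, (((-1) ^ (N - (j + 1)) * N.choose (j + 1) : ℤ) : ℂ) *
        ∫ h, A h * g (x + (j + 1) • h) := by
  have hdiff (h : E) : A h * (fwdDiff h)^[N] g x = A h * ((-1 : ℤ) ^ N • g x) +
      ∑ j ∈ Finset.range N, (((-1) ^ (N - (j + 1)) * N.choose (j + 1) : ℤ) : ℂ) *
        (A h * g (x + (j + 1) • h)) := by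
    rw [eq_fwdDiff_iter_sub_sum g h x N]
    simp only [mul_sub, Finset.mul_sum, zsmul_eq_mul, mul_left_comm]
    ring
  have hint (j : ℕ) : Integrable fun h => A h * g (x + (j + 1) • h) :=
    integrable_mul_of_eq_zero A hA (hg.comp (by fun_prop))
  simp only [hdiff]
  rw [integral_add (A.integrable.mul_const _) (integrable_finsetSum _ fun j _ =>
    (hint j).const_mul _), integral_finsetSum _ fun j _ => (hint j).const_mul _]
  simp only [integral_const_mul, add_sub_cancel_right]

variable (E) in
/-- Averaging `Δ_h^N g` over small `h` writes `g` as a remainder plus a local mean. -/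
theorem exists_enorm_le_enorm_conv_add {ρ : ℝ} (hρ : 0 < ρ) (N : ℕ) : ∃ M : 𝓢(E, ℂ),
    (∀ z, ρ ≤ ‖z‖ → M z = 0) ∧ ∀ g : E → ℂ, Continuous g → ∀ x D,
      (∀ h, ‖h‖ ≤ ρ → ‖(fwdDiff h)^[N] g x‖ₑ ≤ D) → ‖g x‖ₑ ≤ ‖conv M g x‖ₑ + D := by
  obtain ⟨A, hA, hA1, hA0⟩ := exists_nonneg_bump E (δ := ρ / (N + 1)) (by positivity)
  choose B hB0 hB using fun j : ℕ => exists_conv_eq_integral_smul A (c := -(j + 1))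
    (neg_ne_zero.2 (by positivity))
  have hB0 (j : ℕ) (hj : j < N) (z : E) (hz : ρ ≤ ‖z‖) : B j z = 0 := by
    refine hB0 j z (hA0 _ ?_)
    rw [norm_smul, norm_inv, norm_neg, Real.norm_of_nonneg (by positivity), inv_mul_eq_div]
    have : (j : ℝ) + 1 ≤ N + 1 := by exact_mod_cast (by lia : j + 1 ≤ N + 1)
    gcongr
  set c : ℕ → ℤ := fun j => (-1) ^ (N - (j + 1)) * N.choose (j + 1)
  refine ⟨∑ j ∈ Finset.range N, c j • B j, fun z hz => ?_, fun g hg x D hD => ?_⟩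
  · rw [_root_.sum_apply]
    refine Finset.sum_eq_zero fun j hj => ?_
    rw [_root_.smul_apply, hB0 j (Finset.mem_range.1 hj) z hz, smul_zero]
  have hconv : conv (⇑(∑ j ∈ Finset.range N, c j • B j)) g x =
      ∑ j ∈ Finset.range N, (c j : ℂ) * ∫ h, A h * g (x + (j + 1) • h) := by
    simp only [conv_apply, _root_.sum_apply, Finset.sum_mul, _root_.smul_apply, zsmul_eq_mul,
      mul_assoc]
    rw [integral_finsetSum _ fun j hj => (integrable_mul_of_eq_zero (B j)
      (hB0 j (Finset.mem_range.1 hj)) (G := fun z => g (x - z)) (by fun_prop)).const_mul _]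
    refine Finset.sum_congr rfl fun j _ => ?_
    rw [integral_const_mul, ← conv_apply, hB]
    simp only [neg_smul, sub_neg_eq_add, ← Nat.cast_add_one, Nat.cast_smul_eq_nsmul]
  have hsign : ‖(-1 : ℤ) ^ N • g x‖ₑ = ‖g x‖ₑ := by
    rcases neg_one_pow_eq_or ℤ N with h | h <;> simp [h]
  rw [← hsign]
  refine enorm_le_of_integral_mul_eq_one hA hA1 (G := fun h => (fwdDiff h)^[N] g x)
    (fun h hh => hD h (le_of_not_ge fun hρh => hh (hA0 h ((div_le_self hρ.le ?_).trans hρh)))) ?_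
  · exact le_add_of_nonneg_left N.cast_nonneg
  rw [hconv, integral_mul_neg_one_pow_smul A hA0 hg]

lemma enorm_conv_le_setLIntegral {A f : E → ℂ} {x : E} {S : ℝ≥0∞} {s : Set E}
    (hs : MeasurableSet s) (hAS : ∀ z, ‖A z‖ₑ ≤ S) (hA : ∀ z ∉ s, A (x - z) = 0)
    (hf : Continuous f) : ‖conv A f x‖ₑ ≤ S * ∫⁻ z in s, ‖f z‖ₑ := by
  rw [← lintegral_const_mul _ hf.enorm.measurable, ← lintegral_indicator hs]
  refine (enorm_conv_le A f x).trans ?_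
  rw [← lintegral_sub_left_eq_self _ x]
  refine lintegral_mono fun z => ?_
  rw [sub_sub_cancel]
  by_cases hz : z ∈ s
  · rw [Set.indicator_of_mem hz]
    gcongr
    exact hAS _
  · simp [hA z hz]

end Mollifiers

section LocalControl

lemma one_add_natCeil_div_le {E : Type*} [NormedAddCommGroup E] (a x : E) {ρ : ℝ} (hρ : 0 < ρ) :
    (1 : ℝ≥0∞) + ⌈‖x - a‖ / ρ⌉₊ ≤ (2 + (‖a‖₊ + 1) / ρ.toNNReal : ℝ≥0) * (1 + ‖x‖ₑ) := by
  have hceil : (1 : ℝ) + ⌈‖x - a‖ / ρ⌉₊ ≤ (2 + (‖a‖ + 1) / ρ) * (1 + ‖x‖) := by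
    have := (Nat.ceil_lt_add_one (a := ‖x - a‖ / ρ) (by positivity)).le
    have : ‖x - a‖ / ρ ≤ (‖x‖ + ‖a‖) / ρ := by
      gcongr
      exact norm_sub_le x a
    have : 0 ≤ ‖a‖ * ‖x‖ / ρ := by positivity
    have := norm_nonneg x
    rw [add_div] at *
    field_simp at *
    nlinarith
  have hnn : (1 : ℝ≥0) + ⌈‖x - a‖ / ρ⌉₊ ≤ (2 + (‖a‖₊ + 1) / ρ.toNNReal) * (1 + ‖x‖₊) := by
    rw [← NNReal.coe_le_coe]
    push_cast
    rwa [Real.coe_toNNReal ρ hρ.le]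
  have := ENNReal.coe_le_coe.2 hnn
  push_cast at this
  simpa [enorm] using! this

lemma conv_low_add_conv_high {d : ℕ} {w : Rd d → ℂ} (hw : Integrable w) (A : 𝓢(Rd d, ℂ))
    (x : Rd d) : conv A (low w) x + conv A (high w) x = conv A (𝓕⁻ w) x := by
  have hlow : Integrable fun z => A z * low w (x - z) :=
    integrable_mul_fourierInv A (integrable_fourier_mul hw _) x
  have hhigh : Integrable fun z => A z * high w (x - z) :=
    integrable_mul_fourierInv A (integrable_one_sub_mul hw) x
  simp only [conv_apply, ← integral_add hlow hhigh, ← mul_add, low_add_high hw]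

variable {d : ℕ} [NeZero d] (P : LPData d) (n : ℕ) (a : Rd d) {r : ℝ} (hr : 0 < r)

include hr

lemma exists_enorm_low_le_of_mem_closedBall : ∃ C : ℝ≥0, ∀ (w : Rd d → ℂ) (H : ℝ≥0∞),
    Integrable w → BlockBound P n w H → ∀ x, ‖x - a‖ ≤ r / 2 →
      ‖low w x‖ₑ ≤ C * ((∫⁻ z in Metric.ball a r, ‖𝓕⁻ w z‖ₑ) + H) := by
  obtain ⟨M, hM, hMle⟩ := exists_enorm_le_enorm_conv_add (Rd d) (half_pos hr) (n + 1)
  obtain ⟨C₁, hC₁⟩ := exists_enorm_fwdDiff_iter_low_le P n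
  obtain ⟨C₂, hC₂⟩ := exists_enorm_conv_high_le P n
  obtain ⟨S, hS⟩ := M.decay 0 0
  have hMS (z : Rd d) : ‖M z‖ₑ ≤ S.toNNReal := by
    rw [← ofReal_norm]
    exact ENNReal.ofReal_le_ofReal (by simpa using hS.2 z)
  set W := (∫⁻ z, ‖normPow (n + 1) M z‖ₑ).toNNReal with hW
  refine ⟨S.toNNReal + (C₂ * W + C₁ * (r / 2).toNNReal ^ (n + 1)), fun w H hw hb x hx => ?_⟩
  have hlow := eq_sub_of_add_eq (conv_low_add_conv_high hw M x)
  have hball (z : Rd d) (hz : z ∉ Metric.ball a r) : M (x - z) = 0 := by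
    rw [mem_ball_iff_norm] at hz
    exact hM _ (by linarith [norm_sub_le_norm_sub_add_norm_sub z x a, norm_sub_rev x z])
  calc ‖low w x‖ₑ ≤ ‖conv M (low w) x‖ₑ + C₁ * (r / 2).toNNReal ^ (n + 1) * H := by
        refine hMle _ (continuous_fourierInv_of_integrable (integrable_fourier_mul hw _)) x _
          fun h hh => (hC₁ w H hw hb h x).trans ?_
        gcongr
        rw [← ofReal_norm]
        exact ENNReal.ofReal_le_ofReal hh
    _ ≤ (S.toNNReal * (∫⁻ z in Metric.ball a r, ‖𝓕⁻ w z‖ₑ) + C₂ * W * H) +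
        C₁ * (r / 2).toNNReal ^ (n + 1) * H := by
        gcongr
        rw [hlow, hW, ENNReal.coe_toNNReal (lintegral_enorm_ne_top _)]
        exact enorm_sub_le.trans (add_le_add (enorm_conv_le_setLIntegral measurableSet_ball hMS
          hball (continuous_fourierInv_of_integrable hw)) (hC₂ w H hw hb M x))
    _ ≤ (S.toNNReal * ((∫⁻ z in Metric.ball a r, ‖𝓕⁻ w z‖ₑ) + H) +
          C₂ * W * ((∫⁻ z in Metric.ball a r, ‖𝓕⁻ w z‖ₑ) + H)) +
        C₁ * (r / 2).toNNReal ^ (n + 1) * ((∫⁻ z in Metric.ball a r, ‖𝓕⁻ w z‖ₑ) + H) := by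
        gcongr <;> simp
    _ = _ := by
        push_cast
        ring

/-- A function obeying a `BlockBound` is determined on a ball up to a high frequency part which is
uniformly small, and its low frequency part, like a polynomial, has controlled growth from there. -/
theorem exists_enorm_low_le : ∃ C : ℝ≥0, ∀ (w : Rd d → ℂ) (H : ℝ≥0∞),
    Integrable w → BlockBound P n w H → ∀ x, ‖low w x‖ₑ ≤
      C * (1 + ‖x‖ₑ) ^ (n + 1) * ((∫⁻ z in Metric.ball a r, ‖𝓕⁻ w z‖ₑ) + H) := by
  obtain ⟨C₁, hC₁⟩ := exists_enorm_fwdDiff_iter_low_le P n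
  obtain ⟨C₂, hC₂⟩ := exists_enorm_low_le_of_mem_closedBall P n a hr
  set ρ := r / 2 / (n + 1 : ℕ)
  have hρ : 0 < ρ := by positivity
  set K := 2 + (‖a‖₊ + 1) / ρ.toNNReal
  refine ⟨(2 ^ (n + 1) * C₂ + C₁ * ρ.toNNReal ^ (n + 1)) * K ^ (n + 1), fun w H hw hb x => ?_⟩
  set S := (∫⁻ z in Metric.ball a r, ‖𝓕⁻ w z‖ₑ) + H
  have hK := one_add_natCeil_div_le a x hρ
  have hgrowth := enorm_le_mul_pow_of_enorm_fwdDiff_iter_le (N := n + 1) (g := low w) (a := a) hρ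
    (B := C₂ * S) (D := C₁ * ρ.toNNReal ^ (n + 1) * S)
    (fun x hx => hC₂ w H hw hb x (hx.trans_eq (mul_div_cancel₀ _ (by positivity))))
    (fun x h hh => (hC₁ w H hw hb h x).trans ?_) x
  · calc _ ≤ _ := hgrowth
      _ ≤ (2 ^ (n + 1) * (C₂ * S) + C₁ * ρ.toNNReal ^ (n + 1) * S) *
          (K * (1 + ‖x‖ₑ)) ^ (n + 1) := by gcongr
      _ = _ := by
        push_cast
        rw [mul_pow]
        ring
  · have hh' : ‖h‖ₑ ≤ ρ.toNNReal := by
      rw [← ofReal_norm]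
      exact ENNReal.ofReal_le_ofReal hh
    gcongr
    exact le_add_self

/-- Sizes of a Schwartz function controlling its convolution with a function obeying a
`BlockBound`: the moment sees the low frequencies, the Laplacian the high ones. -/
def weight (N : ℕ) (A : 𝓢(Rd d, ℂ)) : ℝ≥0∞ :=
  (∫⁻ z, (1 + ‖z‖ₑ) ^ N * ‖A z‖ₑ) + ∫⁻ z, ‖normPow N A z‖ₑ

theorem exists_enorm_conv_le : ∃ C : ℝ≥0, ∀ (w : Rd d → ℂ) (H : ℝ≥0∞),
    Integrable w → BlockBound P n w H → ∀ (A : 𝓢(Rd d, ℂ)) x, ‖conv A (𝓕⁻ w) x‖ₑ ≤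
      C * (1 + ‖x‖ₑ) ^ (n + 1) * weight (n + 1) A *
        ((∫⁻ z in Metric.ball a r, ‖𝓕⁻ w z‖ₑ) + H) := by
  obtain ⟨C₁, hC₁⟩ := exists_enorm_low_le P n a hr
  obtain ⟨C₂, hC₂⟩ := exists_enorm_conv_high_le P n
  refine ⟨C₁ + C₂, fun w H hw hb A x => ?_⟩
  set S := (∫⁻ z in Metric.ball a r, ‖𝓕⁻ w z‖ₑ) + H
  have hlow : ‖conv A (low w) x‖ₑ ≤
      C₁ * (1 + ‖x‖ₑ) ^ (n + 1) * S * ∫⁻ z, (1 + ‖z‖ₑ) ^ (n + 1) * ‖A z‖ₑ := by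
    rw [← lintegral_const_mul _ (by fun_prop)]
    refine (enorm_conv_le _ _ x).trans (lintegral_mono fun z => ?_)
    have hadd : 1 + ‖x - z‖ₑ ≤ (1 + ‖x‖ₑ) * (1 + ‖z‖ₑ) := by
      calc _ ≤ 1 + (‖x‖ₑ + ‖z‖ₑ) := by
            gcongr
            exact enorm_sub_le
        _ ≤ 1 + (‖x‖ₑ + ‖z‖ₑ) + ‖x‖ₑ * ‖z‖ₑ := le_self_add
        _ = _ := by ring
    calc _ ≤ ‖A z‖ₑ * (C₁ * ((1 + ‖x‖ₑ) * (1 + ‖z‖ₑ)) ^ (n + 1) * S) := by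
          gcongr
          exact (hC₁ w H hw hb _).trans (by gcongr)
      _ = _ := by
          rw [mul_pow]
          ring
  calc ‖conv A (𝓕⁻ w) x‖ₑ
      ≤ C₁ * (1 + ‖x‖ₑ) ^ (n + 1) * S * (∫⁻ z, (1 + ‖z‖ₑ) ^ (n + 1) * ‖A z‖ₑ) +
        C₂ * (∫⁻ z, ‖normPow (n + 1) A z‖ₑ) * H := by
        rw [← conv_low_add_conv_high hw]
        exact (enorm_add_le _ _).trans (add_le_add hlow (hC₂ w H hw hb A x))
    _ ≤ C₁ * (1 + ‖x‖ₑ) ^ (n + 1) * S * weight (n + 1) A +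
        C₂ * (1 + ‖x‖ₑ) ^ (n + 1) * weight (n + 1) A * S := by
        gcongr
        · exact le_self_add
        · exact le_mul_of_one_le_right' (one_le_pow₀ le_self_add)
        · exact le_add_self
        · exact le_add_self
    _ = _ := by
        push_cast
        ring

omit [NeZero d] hr in
lemma SeminormsBoundedBy.exists_weight_le {ι : Type*} {A : ι → 𝓢(Rd d, ℂ)} {b : ι → ℝ≥0}
    (hA : SeminormsBoundedBy A b) (N : ℕ) : ∃ C : ℝ≥0, ∀ i, weight N (A i) ≤ C * b i := by
  obtain ⟨C₁, hC₁⟩ := hA.exists_lintegral_le (μ := volume) N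
  obtain ⟨C₂, hC₂⟩ := (hA.map (normPow N)).exists_lintegral_le (μ := volume) 0
  refine ⟨C₁ + C₂, fun i => ?_⟩
  push_cast
  rw [weight, add_mul]
  exact add_le_add (hC₁ i) (by simpa using! hC₂ i)

end LocalControl

section PoissonBlocks

variable {d : ℕ} {P : LPData d} {n : ℕ} {w : Rd d → ℂ} {H : ℝ≥0∞}

lemma enorm_conv_le_near_add_far {E : Type*} [NormedAddCommGroup E] [InnerProductSpace ℝ E]
    [FiniteDimensional ℝ E] [MeasurableSpace E] [BorelSpace E] (A : 𝓢(E, ℂ)) {w : E → ℂ}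
    (hw : Integrable w) {x : E} {M : ℝ≥0∞} (hM : ∀ z, ‖z‖ < 2 → ‖𝓕⁻ w (x - z)‖ₑ ≤ M) :
    ‖conv A (𝓕⁻ w) x‖ₑ ≤ (∫⁻ z, ‖A z‖ₑ) * M + ‖conv (far A) (𝓕⁻ w) x‖ₑ := by
  have hsplit : conv A (𝓕⁻ w) x = conv (near A) (𝓕⁻ w) x + conv (far A) (𝓕⁻ w) x := by
    simp only [conv_apply]
    rw [← integral_add (integrable_mul_fourierInv _ hw x) (integrable_mul_fourierInv _ hw x)]
    refine integral_congr_ae (.of_forall fun z => ?_)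
    simp only
    rw [← add_mul, ← _root_.add_apply, near_add_far]
  rw [hsplit]
  refine (enorm_add_le _ _).trans (add_le_add_left ?_ _)
  rw [← lintegral_mul_const _ A.continuous.enorm.measurable]
  refine (enorm_conv_le _ _ x).trans (lintegral_mono fun z => ?_)
  obtain hz | hz := lt_or_ge ‖z‖ 2
  · exact mul_le_mul' (enorm_near_le A z) (hM z hz)
  · simp [near_eq_zero A hz]

lemma fourier_dilate_eq_poisson {κ : 𝓢(Rd d, ℂ)} {k : ℤ} {τ : ℝ≥0}
    (hκ : ∀ η ∈ annulus (Rd d), 𝓕 κ η = poisson ((2 : ℝ≥0) ^ k * τ : ℝ≥0) η) {η : Rd d}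
    (hη : symbol P k η ≠ 0) : 𝓕 (dilate k κ) η = poisson τ η := by
  rw [fourier_dilate, hκ _ (mem_annulus_of_symbol_ne_zero P hη), poisson, poisson, norm_smul,
    norm_zpow, Real.norm_ofNat, zpow_neg]
  congr 1
  push_cast
  field_simp

lemma block_poisson_eq_conv {κ : 𝓢(Rd d, ℂ)} {k : ℤ} {τ : ℝ≥0}
    (hκ : ∀ η ∈ annulus (Rd d), 𝓕 κ η = poisson ((2 : ℝ≥0) ^ k * τ : ℝ≥0) η) (hw : Integrable w) :
    block P k (fun η => poisson τ η * w η) =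
      conv (dilate k (SchwartzMap.fourierMultiplierCLM ℂ (𝓕 P.φ : 𝓢(Rd d, ℂ)) κ)) (𝓕⁻ w) := by
  refine Eq.trans ?_ (conv_fourierInv _ hw).symm
  rw [block]
  congr 1
  ext η
  rw [fourier_dilate, SchwartzMap.fourierMultiplierCLM_apply,
    FourierTransform.fourier_fourierInv_eq,
    SchwartzMap.smulLeftCLM_apply_apply (𝓕 P.φ).hasTemperateGrowth, smul_eq_mul,
    ← symbol_eq_fourier, ← fourier_dilate]
  obtain h | h := eq_or_ne (symbol P k η) 0
  · rw [h]
    ring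
  · rw [fourier_dilate_eq_poisson hκ h]
    ring

variable (d) in
theorem exists_block_poisson_le : ∃ C : ℝ≥0, ∀ (P : LPData d) (k : ℤ) (τ : ℝ≥0) (w : Rd d → ℂ),
    Integrable w →
    (∀ p, 1 ≤ p → eLpNorm (block P k fun η => poisson τ η * w η) p volume ≤
      (((1 + 2 ^ k * τ) ^ 2)⁻¹ : ℝ≥0) * (C * eLpNorm (block P k w) p volume)) ∧
    ∀ n H, BlockBound P n w H → BlockBound P n (fun η => poisson τ η * w η) (C * H) := by
  obtain ⟨κ, hκ, hκf⟩ := exists_poisson_kernel (E := Rd d)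
  obtain ⟨C, hC⟩ := hκ.exists_lintegral_le (μ := volume) 0
  simp only [pow_zero, one_mul] at hC
  refine ⟨C, fun P k τ w hw => ⟨fun p hp => ?_, fun n H hb k x => ?_⟩⟩
  · rw [block_mul_of_fourier_eq P hw fun η hη => fourier_dilate_eq_poisson (hκf _) hη]
    refine (eLpNorm_conv_le _ (continuous_block P hw k) hp).trans ?_
    rw [lintegral_enorm_dilate, ← mul_assoc, mul_comm (_ : ℝ≥0∞) (C : ℝ≥0∞)]
    gcongr
    exact hC _
  · refine (hb.enorm_block_mul_le hw
      (fun η hη => fourier_dilate_eq_poisson (hκf _) hη) x).trans ?_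
    rw [lintegral_enorm_dilate]
    gcongr
    refine (hC _).trans (mul_le_of_le_one_right' ?_)
    exact ENNReal.coe_le_coe.2 (inv_le_one_of_one_le₀ (one_le_pow₀ le_self_add))

variable (P n) in
theorem exists_enorm_block_poisson_le [NeZero d] (a : Rd d) {r : ℝ} (hr : 0 < r) :
    ∃ C : ℝ≥0, ∀ (w : Rd d → ℂ) (H M : ℝ≥0∞), Integrable w → BlockBound P n w H →
      ∀ (k : ℕ) (τ : ℝ≥0) (x : Rd d), (∀ z, ‖z‖ < 2 → ‖𝓕⁻ w (x - z)‖ₑ ≤ M) →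
        ‖block P k (fun η => poisson τ η * w η) x‖ₑ ≤
          C * (((1 + 2 ^ k * τ) ^ 2)⁻¹ : ℝ≥0) * M +
          C * (2 ^ k)⁻¹ * (1 + ‖x‖ₑ) ^ (n + 1) * ((∫⁻ z in Metric.ball a r, ‖𝓕⁻ w z‖ₑ) + H) := by
  obtain ⟨κ, hκ, hκf⟩ := exists_poisson_kernel (E := Rd d)
  have hκP := hκ.map (SchwartzMap.fourierMultiplierCLM ℂ (𝓕 P.φ : 𝓢(Rd d, ℂ)))
  obtain ⟨C₁, hC₁⟩ := hκP.exists_lintegral_le (μ := volume) 0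
  obtain ⟨C₂, hC₂⟩ := (hκP.far_dilate 1).exists_weight_le (n + 1)
  obtain ⟨C₃, hC₃⟩ := exists_enorm_conv_le P n a hr
  simp only [pow_zero, one_mul] at hC₁ hC₂
  refine ⟨C₁ + C₃ * C₂, fun w H M hw hb k τ x hM => ?_⟩
  rw [block_poisson_eq_conv (hκf _) hw]
  refine (enorm_conv_le_near_add_far _ hw hM).trans ?_
  have hdecay : (((1 + 2 ^ k * τ) ^ 2)⁻¹ : ℝ≥0) ≤ 1 :=
    inv_le_one_of_one_le₀ (one_le_pow₀ le_self_add)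
  rw [lintegral_enorm_dilate]
  refine add_le_add (mul_le_mul_left ((hC₁ _).trans ?_) _) ((hC₃ w H hw hb _ x).trans ?_)
  · rw [zpow_natCast]
    gcongr
    exact le_self_add
  · calc _ ≤ C₃ * (1 + ‖x‖ₑ) ^ (n + 1) * (C₂ * (2 ^ k)⁻¹) *
          ((∫⁻ z in Metric.ball a r, ‖𝓕⁻ w z‖ₑ) + H) := by
          gcongr
          refine (hC₂ ((2 : ℝ≥0) ^ k * τ, k)).trans ?_
          gcongr
          refine (ENNReal.coe_le_coe.2 (mul_le_of_le_one_right' hdecay)).trans_eq ?_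
          push_cast
          rfl
      _ = C₃ * C₂ * (2 ^ k)⁻¹ * (1 + ‖x‖ₑ) ^ (n + 1) *
        ((∫⁻ z in Metric.ball a r, ‖𝓕⁻ w z‖ₑ) + H) := by ring
      _ ≤ _ := by
        push_cast
        gcongr
        exact le_add_self

lemma continuous_uncurry_poisson :
    Continuous (Function.uncurry (poisson : ℝ → Rd d → ℂ)) := by
  simp only [Function.uncurry_def, poisson]
  fun_prop

lemma norm_poisson_le_one {τ : ℝ} (hτ : 0 ≤ τ) (η : Rd d) : ‖poisson τ η‖ ≤ 1 := by
  rw [poisson, norm_real, Real.norm_of_nonneg (Real.exp_pos _).le, Real.exp_le_one_iff,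
    neg_nonpos]
  positivity

lemma integrable_poisson_mul (hw : Integrable w) {τ : ℝ} (hτ : 0 ≤ τ) :
    Integrable fun η => poisson τ η * w η :=
  hw.bdd_mul (continuous_uncurry_poisson.uncurry_left τ).aestronglyMeasurable
    (.of_forall (norm_poisson_le_one hτ))

lemma enorm_high_le_add_tsum [NeZero d] (hb : BlockBound P n w H) (hw : Integrable w) (x : Rd d) :
    ‖high w x‖ₑ ≤ 2 ^ (n + 1) * ((1 + ∫⁻ z, ‖lowPass d z‖ₑ) * H) + ∑' k : ℕ, ‖block P k w x‖ₑ := by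
  set v := fun η => (1 - 𝓕 (lowPass d) η) * w η
  set S := (1 + ∫⁻ z, ‖lowPass d z‖ₑ) * H
  have hv := hb.one_sub_mul hw
  have hpos (k : ℕ) : block P (k + 1 : ℕ) v = block P (k + 1 : ℕ) w := by
    refine block_congr P fun η hη => ?_
    have := symbol_mul_lowPass_eq_zero (P := P) (k := (k + 1 : ℕ)) (by lia) η
    simp [v, (mul_eq_zero.1 this).resolve_left hη]
  have hneg (k : ℕ) (hk : k ≠ 0) : ‖block P (-((k : ℤ) + 1)) v x‖ₑ = 0 := by
    have h0 := symbol_mul_one_sub_lowPass_eq_zero (P := P) (k := -((k : ℤ) + 1)) (by lia)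
    have hzero (η : Rd d) : symbol P (-((k : ℤ) + 1)) η * v η = 0 := by
      rw [← mul_assoc, h0, zero_mul]
    simp only [block, fourierInv_apply, hzero, mul_zero, integral_zero, enorm_zero]
  calc ‖high w x‖ₑ ≤ ∑' k, ‖block P k v x‖ₑ :=
        enorm_fourierInv_le_tsum_block P (integrable_one_sub_mul hw) x
    _ = ‖block P 0 v x‖ₑ + ∑' k : ℕ, ‖block P (k + 1 : ℕ) w x‖ₑ + ‖block P (-1) v x‖ₑ := by
        rw [tsum_of_nat_of_neg_add_one ENNReal.summable ENNReal.summable, tsum_eq_single 0 hneg,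
          tsum_eq_zero_add' ENNReal.summable]
        simp only [hpos]
        simp
    _ ≤ 2 ^ n * S + (∑' k : ℕ, ‖block P k w x‖ₑ) + 2 ^ n * S := by
        refine add_le_add (add_le_add ?_ ?_) ?_
        · exact (hv 0 x).trans (mul_le_mul_left (pow_le_pow_right₀ one_le_two (by simp)) _)
        · exact ENNReal.tsum_comp_le_tsum_of_injective Nat.succ_injective
            fun k : ℕ => ‖block P k w x‖ₑ
        · exact (hv (-1) x).trans (mul_le_mul_left (pow_le_pow_right₀ one_le_two (by simp)) _)
    _ = _ := by ring

variable (P n) in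
theorem exists_enorm_high_poisson_le [NeZero d] (a : Rd d) {r : ℝ} (hr : 0 < r) :
    ∃ C : ℝ≥0, ∀ (w : Rd d → ℂ) (H M : ℝ≥0∞), Integrable w → BlockBound P n w H →
      ∀ (τ : ℝ≥0) (x : Rd d), (∀ z, ‖z‖ < 2 → ‖𝓕⁻ w (x - z)‖ₑ ≤ M) →
        ‖high (fun η => poisson τ η * w η) x‖ₑ ≤
          C * M * (∑' k : ℕ, ((((1 + 2 ^ k * τ) ^ 2)⁻¹ : ℝ≥0) : ℝ≥0∞)) +
          C * (1 + ‖x‖ₑ) ^ (n + 1) * ((∫⁻ z in Metric.ball a r, ‖𝓕⁻ w z‖ₑ) + H) := by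
  obtain ⟨C₁, hC₁⟩ := exists_block_poisson_le d
  obtain ⟨C₂, hC₂⟩ := exists_enorm_block_poisson_le P n a hr
  obtain ⟨C₃, hC₃⟩ : ∃ C₃ : ℝ≥0, (C₃ : ℝ≥0∞) = 1 + ∫⁻ z, ‖lowPass d z‖ₑ :=
    ⟨_, ENNReal.coe_toNNReal (ENNReal.add_ne_top.2 ⟨by simp, lintegral_enorm_ne_top _⟩)⟩
  have hgeom : ∑' k : ℕ, ((2 : ℝ≥0∞) ^ k)⁻¹ = 2 := by
    simp only [ENNReal.inv_pow, ENNReal.tsum_geometric, ENNReal.one_sub_inv_two, inv_inv]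
  refine ⟨2 ^ (n + 1) * (C₃ * C₁) + 2 * C₂, fun w H M hw hb τ x hM => ?_⟩
  set S := (∫⁻ z in Metric.ball a r, ‖𝓕⁻ w z‖ₑ) + H
  set D := ∑' k : ℕ, ((((1 + 2 ^ k * τ) ^ 2)⁻¹ : ℝ≥0) : ℝ≥0∞)
  calc _ ≤ 2 ^ (n + 1) * (C₃ * (C₁ * H)) +
        ∑' k : ℕ, ‖block P k (fun η => poisson τ η * w η) x‖ₑ := by
        rw [hC₃]
        exact enorm_high_le_add_tsum ((hC₁ P 0 τ w hw).2 n H hb) (integrable_poisson_mul hw τ.2) x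
    _ ≤ 2 ^ (n + 1) * (C₃ * (C₁ * H)) + (C₂ * D * M + C₂ * 2 * (1 + ‖x‖ₑ) ^ (n + 1) * S) := by
        refine add_le_add le_rfl
          ((ENNReal.tsum_le_tsum fun k => hC₂ w H M hw hb k τ x hM).trans_eq ?_)
        simp only [ENNReal.tsum_add, ENNReal.tsum_mul_right, ENNReal.tsum_mul_left, hgeom, D, S]
    _ ≤ 2 ^ (n + 1) * (C₃ * (C₁ * ((1 + ‖x‖ₑ) ^ (n + 1) * S))) +
        (2 * C₂ * D * M + C₂ * 2 * (1 + ‖x‖ₑ) ^ (n + 1) * S) := by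
        gcongr
        · exact le_add_self.trans (le_mul_of_one_le_left' (one_le_pow₀ le_self_add))
        · exact le_mul_of_one_le_left' one_le_two
    _ ≤ 2 ^ (n + 1) * (C₃ * C₁) * M * D + 2 ^ (n + 1) * (C₃ * (C₁ * ((1 + ‖x‖ₑ) ^ (n + 1) * S))) +
        (2 * C₂ * D * M + C₂ * 2 * (1 + ‖x‖ₑ) ^ (n + 1) * S) := by
        gcongr
        exact le_add_self
    _ = _ := by
        push_cast
        ring

end PoissonBlocks

section Decay

lemma lintegral_inv_one_add_mul_sq_le {a : ℝ≥0} (ha : a ≠ 0) (t : ℝ) :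
    ∫⁻ y : ℝ, (((1 + a * ‖t - y‖₊) ^ 2)⁻¹ : ℝ≥0) ≤ (NNReal.pi * a⁻¹ : ℝ≥0) := by
  have ha' : (0 : ℝ) < a := by positivity
  have hint : Integrable fun y : ℝ => (1 + (a * (t - y)) ^ 2)⁻¹ :=
    (integrable_inv_one_add_sq.comp_mul_left' ha'.ne').comp_sub_left t
  have hval : ∫ y : ℝ, (1 + (a * (t - y)) ^ 2)⁻¹ = Real.pi * (a : ℝ)⁻¹ := by
    rw [integral_sub_left_eq_self (fun y : ℝ => (1 + (a * y) ^ 2)⁻¹) volume t,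
      Measure.integral_comp_mul_left (fun y : ℝ => (1 + y ^ 2)⁻¹), integral_univ_inv_one_add_sq,
      abs_of_pos (by positivity), smul_eq_mul, mul_comm]
  calc _ ≤ ∫⁻ y : ℝ, ENNReal.ofReal (1 + (a * (t - y)) ^ 2)⁻¹ := by
        refine lintegral_mono fun y => ?_
        rw [← ENNReal.ofReal_coe_nnreal]
        refine ENNReal.ofReal_le_ofReal ?_
        push_cast
        gcongr
        rw [Real.norm_eq_abs, mul_pow, ← sq_abs (t - y), ← mul_pow]
        nlinarith [mul_nonneg ha'.le (abs_nonneg (t - y))]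
    _ = ENNReal.ofReal (Real.pi * (a : ℝ)⁻¹) := by
        rw [← hval, ofReal_integral_eq_lintegral_ofReal hint (.of_forall fun y => by positivity)]
    _ = _ := by
        rw [← ENNReal.ofReal_coe_nnreal]
        rfl

end Decay

section TemperedFamilies

variable {Y : Type*} [MeasurableSpace Y] {ν : Measure Y} {d : ℕ} {P : LPData d} {n : ℕ}
  {g : Y → Rd d → ℂ} {H : Y → ℝ≥0∞}

lemma measurable_fourierInv (hg : Measurable (Function.uncurry g)) :
    Measurable (Function.uncurry fun y => 𝓕⁻ (g y)) := by
  have hinner : Continuous fun q : Rd d × Rd d => cexp ((2 * Real.pi * ⟪q.2, q.1⟫ : ℝ) * I) := by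
    fun_prop
  have h : Measurable fun q : (Y × Rd d) × Rd d =>
      cexp ((2 * Real.pi * ⟪q.2, q.1.2⟫ : ℝ) * I) • g q.1.1 q.2 :=
    (hinner.measurable.comp
      (by fun_prop : Measurable fun q : (Y × Rd d) × Rd d => (q.1.2, q.2))).smul
      (hg.comp (by fun_prop : Measurable fun q : (Y × Rd d) × Rd d => (q.1.1, q.2)))
  simpa only [Function.uncurry_def, Real.fourierInv_eq'] using
    h.stronglyMeasurable.integral_prod_right'.measurable

lemma measurable_mul_uncurry (hg : Measurable (Function.uncurry g)) {m : Rd d → ℂ}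
    (hm : Measurable m) : Measurable (Function.uncurry fun y η => m η * g y η) :=
  (hm.comp measurable_snd).mul hg

lemma measurable_low (hg : Measurable (Function.uncurry g)) :
    Measurable (Function.uncurry fun y => low (g y)) :=
  measurable_fourierInv (measurable_mul_uncurry hg (𝓕 (lowPass d)).continuous.measurable)

/-- A measurable family of Fourier transforms whose dyadic blocks grow at most like
`2 ^ (n * |k|)`, with an integrable constant. -/
structure TemperedFamily (P : LPData d) (n : ℕ) (ν : Measure Y) (g : Y → Rd d → ℂ)
    (H : Y → ℝ≥0∞) : Prop where
  measurable : Measurable (Function.uncurry g)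
  integrable : ∀ y, Integrable (g y)
  blockBound : ∀ y, BlockBound P n (g y) (H y)
  lintegral_ne_top : ∫⁻ y, H y ∂ν ≠ ∞

/-- The high-frequency parts of a family are locally bounded in space, integrated over the
family. -/
def HighLocallyBounded (ν : Measure Y) (g : Y → Rd d → ℂ) : Prop :=
  ∀ R : ℝ, ∃ B ≠ ∞, ∀ x, ‖x‖ ≤ R → ∫⁻ y, ‖high (g y) x‖ₑ ∂ν ≤ B

lemma HighLocallyBounded.ne_top (hg : HighLocallyBounded ν g) (x : Rd d) :
    ∫⁻ y, ‖high (g y) x‖ₑ ∂ν ≠ ∞ := by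
  obtain ⟨B, hB, hle⟩ := hg ‖x‖
  exact ne_top_of_le_ne_top hB (hle x le_rfl)

namespace TemperedFamily

lemma lintegral_enorm_low_le [NeZero d] (hg : TemperedFamily P n ν g H) : ∃ D ≠ ∞,
    ∀ x h : Rd d, ‖h‖ ≤ 1 → ∫⁻ y, ‖low (g y) x‖ₑ ∂ν ≤
      ∑ j ∈ Finset.range (n + 1), ((n + 1).choose (j + 1) : ℝ≥0∞) *
        (∫⁻ y, ‖low (g y) (x + (j + 1) • h)‖ₑ ∂ν) + D := by
  obtain ⟨C, hC⟩ := exists_enorm_fwdDiff_iter_low_le P n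
  have hm (x : Rd d) : Measurable fun y => ‖low (g y) x‖ₑ :=
    (measurable_low hg.measurable).of_uncurry_right.enorm
  refine ⟨C * ∫⁻ y, H y ∂ν, ENNReal.mul_ne_top ENNReal.coe_ne_top hg.lintegral_ne_top,
    fun x h hh => ?_⟩
  calc _ ≤ ∫⁻ y, (∑ j ∈ Finset.range (n + 1), ((n + 1).choose (j + 1) : ℝ≥0∞) *
          ‖low (g y) (x + (j + 1) • h)‖ₑ + C * H y) ∂ν := by
        refine lintegral_mono fun y => (enorm_le_sum_add_enorm_fwdDiff_iter _ h x (n + 1)).trans ?_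
        refine add_le_add le_rfl ((hC _ _ (hg.integrable y) (hg.blockBound y) h x).trans ?_)
        refine mul_le_mul_left (mul_le_of_le_one_right' (pow_le_one₀ zero_le ?_)) _
        rw [← ofReal_norm]
        exact ENNReal.ofReal_le_one.2 hh
    _ = _ := by
        rw [lintegral_add_left (Finset.measurable_fun_sum _ fun j _ => (hm _).const_mul _),
          lintegral_finsetSum _ fun j _ => (hm _).const_mul _,
          lintegral_const_mul' _ _ ENNReal.coe_ne_top]
        exact congrArg (· + _) (Finset.sum_congr rfl fun j _ => lintegral_const_mul _ (hm _))

lemma lintegral_enorm_fourierInv_le (hg : TemperedFamily P n ν g H) (x : Rd d) :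
    ∫⁻ y, ‖𝓕⁻ (g y) x‖ₑ ∂ν ≤ ∫⁻ y, ‖low (g y) x‖ₑ ∂ν + ∫⁻ y, ‖high (g y) x‖ₑ ∂ν := by
  rw [← lintegral_add_left (measurable_low hg.measurable).of_uncurry_right.enorm]
  refine lintegral_mono fun y => ?_
  rw [← low_add_high (hg.integrable y) x]
  exact enorm_add_le _ _

lemma lintegral_enorm_low_le_add (hg : TemperedFamily P n ν g H) (x : Rd d) :
    ∫⁻ y, ‖low (g y) x‖ₑ ∂ν ≤ ∫⁻ y, ‖𝓕⁻ (g y) x‖ₑ ∂ν + ∫⁻ y, ‖high (g y) x‖ₑ ∂ν := by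
  rw [← lintegral_add_left (measurable_fourierInv hg.measurable).of_uncurry_right.enorm]
  refine lintegral_mono fun y => ?_
  rw [← low_add_high (hg.integrable y) x]
  simpa using enorm_sub_le (a := low (g y) x + high (g y) x) (b := high (g y) x)

lemma exists_ball_lintegral_enorm_le [NeZero d] [SFinite ν] (hg : TemperedFamily P n ν g H)
    (hhigh : HighLocallyBounded ν g) (hfin : volume {x | ∫⁻ y, ‖𝓕⁻ (g y) x‖ₑ ∂ν ≠ ∞} ≠ 0) :
    ∃ a : Rd d, ∃ r > 0, ∃ B ≠ ∞, ∀ x ∈ Metric.ball a r, ∫⁻ y, ‖𝓕⁻ (g y) x‖ₑ ∂ν ≤ B := by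
  have hlow : volume {x | ∫⁻ y, ‖low (g y) x‖ₑ ∂ν ≠ ∞} ≠ 0 := fun h0 =>
    hfin (measure_mono_null (fun x hx => ne_top_of_le_ne_top
      (ENNReal.add_ne_top.2 ⟨hx, hhigh.ne_top x⟩) (hg.lintegral_enorm_low_le_add x)) h0)
  obtain ⟨D, hD, hle⟩ := hg.lintegral_enorm_low_le
  obtain ⟨a, r, hr, B, hB, hball⟩ := exists_ball_bounded_of_le_sum
    (measurable_low hg.measurable).enorm.lintegral_prod_left' hlow hD hle
  obtain ⟨B', hB', hle'⟩ := hhigh (‖a‖ + r)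
  refine ⟨a, r, hr, B + B', by finiteness, fun x hx =>
    (hg.lintegral_enorm_fourierInv_le x).trans (add_le_add (hball x hx)
      (hle' x (norm_lt_of_mem_ball hx).le))⟩

lemma exists_lintegral_ball_ne_top [NeZero d] [SFinite ν] (hg : TemperedFamily P n ν g H)
    (hhigh : HighLocallyBounded ν g) (hfin : volume {x | ∫⁻ y, ‖𝓕⁻ (g y) x‖ₑ ∂ν ≠ ∞} ≠ 0) :
    ∃ a : Rd d, ∃ r > 0, ∫⁻ y, ((∫⁻ z in Metric.ball a r, ‖𝓕⁻ (g y) z‖ₑ) + H y) ∂ν ≠ ∞ := by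
  have hmeas : Measurable (Function.uncurry fun y x => ‖𝓕⁻ (g y) x‖ₑ) :=
    (measurable_fourierInv hg.measurable).enorm
  obtain ⟨a, r, hr, B, hB, hball⟩ := hg.exists_ball_lintegral_enorm_le hhigh hfin
  refine ⟨a, r, hr, ?_⟩
  rw [lintegral_add_left (f := fun y => ∫⁻ z in Metric.ball a r, ‖𝓕⁻ (g y) z‖ₑ)
    hmeas.lintegral_prod_right', lintegral_lintegral_swap hmeas.aemeasurable]
  refine ENNReal.add_ne_top.2 ⟨?_, hg.lintegral_ne_top⟩
  refine ne_top_of_le_ne_top (b := ∫⁻ _ in Metric.ball a r, B) ?_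
    (setLIntegral_mono' measurableSet_ball hball)
  rw [setLIntegral_const]
  exact ENNReal.mul_ne_top hB measure_ball_lt_top.ne

end TemperedFamily

lemma enorm_conv_integral_le_of_eq_zero [SFinite ν] {A : 𝓢(Rd d, ℂ)} {ρ : ℝ}
    (hA : ∀ z, ρ ≤ ‖z‖ → A z = 0) {G : Y → Rd d → ℂ} (hG : Measurable (Function.uncurry G))
    {x : Rd d} {B : ℝ≥0∞} (hB : B ≠ ∞)
    (hGB : ∀ z, ‖z‖ ≤ ‖x‖ + ρ → ∫⁻ y, ‖G y z‖ₑ ∂ν ≤ B) :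
    ‖conv A (fun z => ∫ y, G y z ∂ν) x‖ₑ ≤ ∫⁻ y, ‖conv A (G y) x‖ₑ ∂ν := by
  have hmeas : Measurable (Function.uncurry fun z y => A z * G y (x - z)) :=
    (A.continuous.measurable.comp measurable_fst).mul
      (hG.comp (by fun_prop : Measurable fun q : Rd d × Y => (q.2, x - q.1)))
  have hint : Integrable (Function.uncurry fun z y => A z * G y (x - z)) (volume.prod ν) := by
    refine ⟨hmeas.aestronglyMeasurable, ?_⟩
    rw [HasFiniteIntegral, lintegral_prod _ hmeas.enorm.aemeasurable]
    refine (lintegral_mono (g := fun z => ‖A z‖ₑ * B) fun z => ?_).trans_lt ?_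
    · simp only [Function.uncurry_apply_pair, enorm_mul]
      rw [lintegral_const_mul' _ _ enorm_ne_top]
      obtain hz | hz := lt_or_ge ‖z‖ ρ
      · exact mul_le_mul_right (hGB _ ((norm_sub_le _ _).trans (by gcongr))) _
      · simp [hA z hz]
    · rw [lintegral_mul_const' _ _ hB]
      exact ENNReal.mul_lt_top (lintegral_enorm_ne_top A).lt_top hB.lt_top
  simp only [conv_apply, ← integral_const_mul]
  rw [integral_integral_swap hint]
  exact enorm_integral_le_lintegral_enorm _

lemma enorm_conv_le_of_forall_sub_tail {A : 𝓢(Rd d, ℂ)} {u : Rd d → ℂ}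
    (hu : AEStronglyMeasurable u) {x : Rd d} {B C : ℝ≥0∞} (hC : C ≠ ∞)
    (h : ∀ m, ‖conv (A - tail m A) u x‖ₑ ≤ B + C * (2 ^ m)⁻¹) :
    ‖conv A u x‖ₑ ≤ B := by
  by_cases hint : Integrable fun z => A z * u (x - z)
  · have hlim : Tendsto (fun m => conv (A - tail m A) u x) atTop (𝓝 (conv A u x)) := by
      simp only [conv_apply]
      refine tendsto_integral_of_dominated_convergence _ (fun m => ?_) hint.norm
        (fun m => .of_forall fun z => ?_) (.of_forall fun z => ?_)
      · exact (A - tail m A).continuous.aestronglyMeasurable.mul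
          (hu.comp_measurePreserving (Measure.measurePreserving_sub_left volume x))
      · rw [norm_mul, norm_mul]
        gcongr
        simpa [← ofReal_norm] using enorm_sub_tail_le m A z
      · refine Tendsto.congr' ?_ tendsto_const_nhds
        filter_upwards [(tendsto_pow_atTop_atTop_of_one_lt one_lt_two).eventually_ge_atTop ‖z‖]
          with m hm
        rw [_root_.sub_apply, tail_eq_zero m A hm, sub_zero]
    have hlimC : Tendsto (fun m : ℕ => B + C * ((2 : ℝ≥0∞) ^ m)⁻¹) atTop (𝓝 (B + C * 0)) := by
      refine (ENNReal.Tendsto.const_mul ?_ (.inr hC)).const_add B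
      simp only [ENNReal.inv_pow]
      exact ENNReal.tendsto_pow_atTop_nhds_zero_of_lt_one (by simp)
    simpa using le_of_tendsto_of_tendsto' hlim.enorm hlimC h
  · rw [conv_apply, integral_undef hint, enorm_zero]
    exact zero_le

namespace TemperedFamily

section

variable [NeZero d] (hg : TemperedFamily P n ν g H) {a : Rd d} {r : ℝ} (hr : 0 < r)
  (hS : ∫⁻ y, ((∫⁻ z in Metric.ball a r, ‖𝓕⁻ (g y) z‖ₑ) + H y) ∂ν ≠ ∞)

include hg hr hS

lemma exists_lintegral_enorm_le (hhigh : HighLocallyBounded ν g) (R : ℝ) :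
    ∃ B ≠ ∞, ∀ x : Rd d, ‖x‖ ≤ R → ∫⁻ y, ‖𝓕⁻ (g y) x‖ₑ ∂ν ≤ B := by
  obtain ⟨C, hC⟩ := exists_enorm_low_le P n a hr
  obtain ⟨B, hB, hle⟩ := hhigh R
  refine ⟨C * (1 + ENNReal.ofReal R) ^ (n + 1) * _ + B,
    ENNReal.add_ne_top.2 ⟨ENNReal.mul_ne_top (by finiteness) hS, hB⟩,
    fun x hx => (hg.lintegral_enorm_fourierInv_le x).trans (add_le_add ?_ (hle x hx))⟩
  rw [← lintegral_const_mul' _ _ (by finiteness)]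
  refine lintegral_mono fun y => (hC _ _ (hg.integrable y) (hg.blockBound y) x).trans ?_
  gcongr
  rw [← ofReal_norm]
  exact ENNReal.ofReal_le_ofReal hx

lemma exists_lintegral_enorm_conv_sub_tail_le (A : 𝓢(Rd d, ℂ)) (x : Rd d) : ∃ C ≠ ∞, ∀ m,
    ∫⁻ y, ‖conv (A - tail m A) (𝓕⁻ (g y)) x‖ₑ ∂ν ≤
      ∫⁻ y, ‖conv A (𝓕⁻ (g y)) x‖ₑ ∂ν + C * (2 ^ m)⁻¹ := by
  obtain ⟨C₁, hC₁⟩ := exists_enorm_conv_le P n a hr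
  obtain ⟨C₂, hC₂⟩ := (seminormsBoundedBy_tail A).exists_weight_le (n + 1)
  set S := fun y => (∫⁻ z in Metric.ball a r, ‖𝓕⁻ (g y) z‖ₑ) + H y
  have htail (m : ℕ) (y : Y) : ‖conv (A - tail m A) (𝓕⁻ (g y)) x‖ₑ ≤
      ‖conv A (𝓕⁻ (g y)) x‖ₑ + C₁ * (1 + ‖x‖ₑ) ^ (n + 1) * (C₂ * (2 ^ m)⁻¹) * S y := by
    have hint (A : 𝓢(Rd d, ℂ)) := integrable_mul_fourierInv A (hg.integrable y) x
    have hsub : conv (A - tail m A) (𝓕⁻ (g y)) x =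
        conv A (𝓕⁻ (g y)) x - conv (tail m A) (𝓕⁻ (g y)) x := by
      simp only [conv_apply, _root_.sub_apply, sub_mul]
      exact integral_sub (hint A) (hint _)
    rw [hsub]
    refine enorm_sub_le.trans (add_le_add le_rfl ((hC₁ _ _ (hg.integrable y) (hg.blockBound y)
      (tail m A) x).trans ?_))
    gcongr
    simpa using hC₂ m
  refine ⟨C₁ * (1 + ‖x‖ₑ) ^ (n + 1) * C₂ * ∫⁻ y, S y ∂ν,
    ENNReal.mul_ne_top (by finiteness) hS, fun m => (lintegral_mono (htail m)).trans_eq ?_⟩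
  have hmeas : Measurable fun y => ‖conv A (𝓕⁻ (g y)) x‖ₑ := by
    simp only [conv_fourierInv A (hg.integrable _)]
    exact (measurable_fourierInv (measurable_mul_uncurry hg.measurable
      (𝓕 A).continuous.measurable)).of_uncurry_right.enorm
  rw [lintegral_add_left hmeas, lintegral_const_mul' _ _ (by finiteness)]
  ring

end

theorem enorm_conv_integral_le [NeZero d] [SFinite ν] (hg : TemperedFamily P n ν g H)
    (hhigh : HighLocallyBounded ν g) (A : 𝓢(Rd d, ℂ)) (x : Rd d) :
    ‖conv A (fun z => ∫ y, 𝓕⁻ (g y) z ∂ν) x‖ₑ ≤ ∫⁻ y, ‖conv A (𝓕⁻ (g y)) x‖ₑ ∂ν := by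
  have hmeas := measurable_fourierInv hg.measurable
  by_cases hfin : volume {x | ∫⁻ y, ‖𝓕⁻ (g y) x‖ₑ ∂ν ≠ ∞} = 0
  · have hzero : ∀ᵐ z, ∫ y, 𝓕⁻ (g y) (x - z) ∂ν = 0 := by
      have := (Measure.measurePreserving_sub_left volume x).quasiMeasurePreserving.ae
        (show ∀ᵐ z, ∫⁻ y, ‖𝓕⁻ (g y) z‖ₑ ∂ν = ∞ by simpa [ae_iff] using hfin)
      filter_upwards [this] with z hz using integral_undef fun hint => hint.2.ne hz
    rw [conv_apply, integral_eq_zero_of_ae (by filter_upwards [hzero] with z hz using by simp [hz]),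
      enorm_zero]
    exact zero_le
  obtain ⟨a, r, hr, hS⟩ := hg.exists_lintegral_ball_ne_top hhigh hfin
  obtain ⟨C, hC, htail⟩ := hg.exists_lintegral_enorm_conv_sub_tail_le hr hS A x
  refine enorm_conv_le_of_forall_sub_tail
    hmeas.stronglyMeasurable.integral_prod_left'.aestronglyMeasurable hC fun m => ?_
  obtain ⟨B, hB, hGB⟩ := hg.exists_lintegral_enorm_le hr hS hhigh (‖x‖ + 2 ^ (m + 1))
  exact (enorm_conv_integral_le_of_eq_zero (fun z hz => sub_tail_eq_zero m A hz) hmeas hB hGB).trans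
    (htail m)

end TemperedFamily

end TemperedFamilies

section PoissonFamilies

variable {ν : Measure ℝ} {d : ℕ} {P : LPData d} {n : ℕ} {g : ℝ → Rd d → ℂ} {H : ℝ → ℝ≥0∞}

/-- The harmonic extensions at time `t` of a family of functions living on the time slices `y`, on
the Fourier side. -/
def poissonFamily (g : ℝ → Rd d → ℂ) (t y : ℝ) (η : Rd d) : ℂ := poisson ‖t - y‖₊ η * g y η

lemma TemperedFamily.exists_poissonFamily (hg : TemperedFamily P n ν g H) :
    ∃ C : ℝ≥0, ∀ t, TemperedFamily P n ν (poissonFamily g t) fun y => C * H y := by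
  obtain ⟨C, hC⟩ := exists_block_poisson_le d
  refine ⟨C, fun t => ⟨?_, fun y => integrable_poisson_mul (hg.integrable y) (NNReal.coe_nonneg _),
    fun y => (hC P 0 _ _ (hg.integrable y)).2 n _ (hg.blockBound y), ?_⟩⟩
  · have : Measurable fun q : ℝ × Rd d => poisson (‖t - q.1‖₊ : ℝ) q.2 :=
      continuous_uncurry_poisson.measurable.comp
        (by fun_prop : Measurable fun q : ℝ × Rd d => ((‖t - q.1‖₊ : ℝ), q.2))
    exact this.mul hg.measurable
  · rw [lintegral_const_mul' _ _ ENNReal.coe_ne_top]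
    exact ENNReal.mul_ne_top ENNReal.coe_ne_top hg.lintegral_ne_top

/-- The inverse Fourier transforms of the family are bounded on each ball, uniformly over the
family. -/
def UniformlyLocallyBounded (g : ℝ → Rd d → ℂ) : Prop :=
  ∀ R : ℝ, ∃ M : ℝ≥0, ∀ y x, ‖x‖ ≤ R → ‖𝓕⁻ (g y) x‖ₑ ≤ M

lemma UniformlyLocallyBounded.exists_setLIntegral_ball_le (hg : UniformlyLocallyBounded g)
    (a : Rd d) (r : ℝ) : ∃ V ≠ ∞, ∀ y, ∫⁻ z in Metric.ball a r, ‖𝓕⁻ (g y) z‖ₑ ≤ V := by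
  obtain ⟨M, hM⟩ := hg (‖a‖ + r)
  refine ⟨M * volume (Metric.ball a r),
    ENNReal.mul_ne_top ENNReal.coe_ne_top measure_ball_lt_top.ne, fun y => ?_⟩
  rw [← setLIntegral_const]
  refine setLIntegral_mono' measurableSet_ball fun z hz =>
    hM y z (norm_lt_of_mem_ball hz).le

lemma tsum_lintegral_inv_one_add_mul_sq_ne_top (t : ℝ) :
    ∑' k : ℕ, ∫⁻ y : ℝ, (((1 + 2 ^ k * ‖t - y‖₊) ^ 2)⁻¹ : ℝ≥0) ≠ ∞ := by
  refine ne_top_of_le_ne_top ?_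
    (ENNReal.tsum_le_tsum fun k => lintegral_inv_one_add_mul_sq_le (by positivity) t)
  simp only [ENNReal.coe_mul, ENNReal.tsum_mul_left]
  refine ENNReal.mul_ne_top ENNReal.coe_ne_top (ENNReal.tsum_coe_ne_top_iff_summable.2 ?_)
  simp only [← inv_pow]
  exact NNReal.summable_geometric (by norm_num)

lemma TemperedFamily.highLocallyBounded_poissonFamily [NeZero d] [IsFiniteMeasure ν]
    (hν : ν ≤ volume) (hg : TemperedFamily P n ν g H) (hbdd : UniformlyLocallyBounded g) (t : ℝ) :
    HighLocallyBounded ν (poissonFamily g t) := by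
  intro R
  obtain ⟨M, hM⟩ := hbdd (R + 2)
  obtain ⟨V, hV, hlocal⟩ := hbdd.exists_setLIntegral_ball_le 0 1
  obtain ⟨C, hC⟩ := exists_enorm_high_poisson_le P n 0 one_pos
  set D := fun y => ∑' k : ℕ, ((((1 + 2 ^ k * ‖t - y‖₊) ^ 2)⁻¹ : ℝ≥0) : ℝ≥0∞)
  have hD : ∫⁻ y, D y ∂ν ≠ ∞ := by
    rw [lintegral_tsum fun k => by fun_prop]
    exact ne_top_of_le_ne_top (tsum_lintegral_inv_one_add_mul_sq_ne_top t)
      (ENNReal.tsum_le_tsum fun k => lintegral_mono' hν le_rfl)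
  set E := C * (1 + ENNReal.ofReal R) ^ (n + 1)
  have hE : E ≠ ∞ := by finiteness
  refine ⟨C * M * (∫⁻ y, D y ∂ν) + E * (V * ν .univ + ∫⁻ y, H y ∂ν), ?_, fun x hx => ?_⟩
  · have := hg.lintegral_ne_top
    finiteness
  have hMx (y : ℝ) (z : Rd d) (hz : ‖z‖ < 2) : ‖𝓕⁻ (g y) (x - z)‖ₑ ≤ M :=
    hM y _ ((norm_sub_le x z).trans (by linarith))
  have hxR : ‖x‖ₑ ≤ ENNReal.ofReal R := by
    rw [← ofReal_norm]
    exact ENNReal.ofReal_le_ofReal hx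
  calc _ ≤ ∫⁻ y, (C * M * D y + E * (V + H y)) ∂ν := by
        refine lintegral_mono fun y => (hC (g y) (H y) M (hg.integrable y) (hg.blockBound y)
          ‖t - y‖₊ x (hMx y)).trans (add_le_add le_rfl ?_)
        gcongr
        · simp only [E]
          gcongr
        · exact hlocal y
    _ = _ := by
        rw [lintegral_add_left (by fun_prop), lintegral_const_mul' _ _ (by finiteness),
          lintegral_const_mul' _ _ hE, lintegral_add_left measurable_const, lintegral_const]

theorem TemperedFamily.enorm_LP_integral_poissonFamily_le [NeZero d] [IsFiniteMeasure ν]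
    (hν : ν ≤ volume) (hg : TemperedFamily P n ν g H) (hbdd : UniformlyLocallyBounded g) (t : ℝ)
    (j : ℤ) (x : Rd d) :
    ‖LP P j (fun z => ∫ y, 𝓕⁻ (poissonFamily g t y) z ∂ν) x‖ₑ ≤
      ∫⁻ y, ‖block P j (poissonFamily g t y) x‖ₑ ∂ν := by
  obtain ⟨C, hC⟩ := hg.exists_poissonFamily
  have := (hC t).enorm_conv_integral_le (hg.highLocallyBounded_poissonFamily hν hbdd t)
    (dilate j P.φ) x
  simpa only [LP_eq_conv, conv_dilate_fourierInv P ((hC t).integrable _)] using this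

end PoissonFamilies

section Bernstein

lemma enorm_conv_le_mul_eLpNorm {E : Type*} [NormedAddCommGroup E] [InnerProductSpace ℝ E]
    [FiniteDimensional ℝ E] [MeasurableSpace E] [BorelSpace E] (A : 𝓢(E, ℂ)) {f : E → ℂ}
    (hf : Continuous f) {M : ℝ≥0∞} (hM0 : M ≠ 0) (hM : M ≠ ∞) (hsup : ∀ z, ‖A z‖ₑ ≤ M)
    (hint : ∫⁻ z, ‖A z‖ₑ ≤ M) {p : ℝ≥0∞} (hp : 1 ≤ p) (x : E) :
    ‖conv A f x‖ₑ ≤ M * eLpNorm f p := by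
  have hAm : Measurable fun z => ‖A z‖ₑ := A.continuous.enorm.measurable
  have hfm : Measurable fun z => ‖f (x - z)‖ₑ :=
    (hf.comp (continuous_const.sub continuous_id)).enorm.measurable
  have htrans : eLpNorm (fun z => ‖f (x - z)‖ₑ) p volume = eLpNorm f p volume :=
    (eLpNorm_enorm fun z => f (x - z)).trans (eLpNorm_comp_measurePreserving
      hf.aestronglyMeasurable (Measure.measurePreserving_sub_left volume x))
  have hmass : ∫⁻ z, M⁻¹ * ‖A z‖ₑ ≤ 1 := by
    rw [lintegral_const_mul _ hAm, mul_comm, ← div_eq_mul_inv]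
    exact ENNReal.div_le_of_le_mul (by rwa [one_mul])
  have hle : ∫⁻ z, M⁻¹ * ‖A z‖ₑ * ‖f (x - z)‖ₑ ≤ eLpNorm f p := by
    refine (lintegral_mul_le_rpow_mul_eLpNorm (hAm.const_mul _) (fun z => ?_) hmass hfm
      hp).trans_eq ?_
    · rw [mul_comm, ← div_eq_mul_inv]
      exact ENNReal.div_le_of_le_mul (by simpa using hsup z)
    · rw [ENNReal.one_rpow, one_mul, htrans]
  refine (enorm_conv_le A f x).trans (le_of_eq_of_le ?_ (mul_le_mul_right hle M))
  rw [← lintegral_const_mul' _ _ hM]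
  refine lintegral_congr fun z => ?_
  rw [← mul_assoc, ← mul_assoc, ENNReal.mul_inv_cancel hM0 hM, one_mul]

lemma exists_enorm_dilate_le {E : Type*} [NormedAddCommGroup E] [InnerProductSpace ℝ E]
    (A : 𝓢(E, ℂ)) : ∃ B : ℝ≥0, ∀ (k : ℤ) (z : E),
      ‖dilate k A z‖ₑ ≤ 2 ^ (Module.finrank ℝ E * k.natAbs) * B := by
  refine ⟨(SchwartzMap.seminorm ℂ 0 0 A).toNNReal, fun k z => ?_⟩
  have hpow : (2 : ℝ) ^ (k * Module.finrank ℝ E) ≤ 2 ^ (Module.finrank ℝ E * k.natAbs) := by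
    rw [← zpow_natCast]
    refine zpow_le_zpow_right₀ one_le_two ?_
    push_cast
    rw [mul_comm]
    gcongr
    exact le_abs_self k
  calc ‖dilate k A z‖ₑ = ENNReal.ofReal (2 ^ (k * Module.finrank ℝ E) * ‖A ((2 : ℝ) ^ k • z)‖) := by
        rw [← ofReal_norm, dilate_apply, norm_mul, norm_zpow, Complex.norm_ofNat]
    _ ≤ ENNReal.ofReal (2 ^ (Module.finrank ℝ E * k.natAbs) * SchwartzMap.seminorm ℂ 0 0 A) := by
        gcongr
        exact A.norm_le_seminorm ℂ _
    _ = _ := by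
        rw [ENNReal.ofReal_mul (by positivity), ENNReal.ofReal_pow zero_le_two,
          ENNReal.ofReal_ofNat]
        rfl

variable (d : ℕ)

theorem exists_enorm_block_le_mul_eLpNorm : ∃ C : ℝ≥0, ∀ (P : LPData d) (k : ℤ) (w : Rd d → ℂ)
    (p : ℝ≥0∞), Integrable w → 1 ≤ p → ∀ x,
      ‖block P k w x‖ₑ ≤ 2 ^ (d * k.natAbs) * (C * eLpNorm (block P k w) p volume) := by
  obtain ⟨κ, hκ⟩ := exists_fourier_eq (E := Rd d) (f := 1) fun η _ => contDiffAt_const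
  obtain ⟨B, hB⟩ := exists_enorm_dilate_le κ
  rw [finrank_euclideanSpace_fin] at hB
  lift ∫⁻ z, ‖κ z‖ₑ to ℝ≥0 using lintegral_enorm_ne_top κ with J hJ
  refine ⟨B + J + 1, fun P k w p hw hp x => ?_⟩
  have hrep : conv (dilate k κ) (block P k w) = block P k w := by
    rw [← block_mul_of_fourier_eq P hw (m := 1) fun η hη => by
      rw [fourier_dilate, hκ _ (mem_annulus_of_symbol_ne_zero P hη)]; rfl]
    simp
  have h1 : (1 : ℝ≥0∞) ≤ 2 ^ (d * k.natAbs) := one_le_pow₀ one_le_two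
  rw [← mul_assoc, ← congrFun hrep x]
  refine enorm_conv_le_mul_eLpNorm (dilate k κ) (continuous_block P hw k) (by positivity)
    (by finiteness) (fun z => (hB k z).trans ?_) ?_ hp x
  · gcongr
    simp [add_assoc]
  · rw [lintegral_enorm_dilate, ← hJ]
    refine le_trans ?_ (le_mul_of_one_le_left' h1)
    exact_mod_cast le_add_self.trans le_self_add

end Bernstein

section TemperedOfBesov

variable {Y : Type*} [MeasurableSpace Y] {ν : Measure Y} {d : ℕ} {g : Y → Rd d → ℂ}

lemma measurable_eLpNorm_block (P : LPData d) (hg : Measurable (Function.uncurry g)) (k : ℤ)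
    (p : ℝ≥0∞) : Measurable fun y => eLpNorm (block P k (g y)) p volume := by
  have hb : Measurable (Function.uncurry fun y => block P k (g y)) :=
    measurable_fourierInv (measurable_mul_uncurry hg (𝓕 (dilate k P.φ)).continuous.measurable)
  have hn : Measurable (Function.uncurry fun y x => ‖block P k (g y) x‖ₑ) := hb.enorm
  simpa only [eLpNorm_enorm] using measurable_eLpNorm_section (μ := volume) hn p

lemma exists_temperedFamily_of_lintegral_le (P : LPData d) (hg : Measurable (Function.uncurry g))
    (hint : ∀ y, Integrable (g y)) {p : ℝ≥0∞} (hp : 1 ≤ p) {m : ℕ} {B : ℝ≥0∞} (hB : B ≠ ∞)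
    (hle : ∀ k, ∫⁻ y, eLpNorm (block P k (g y)) p volume ∂ν ≤ 2 ^ (m * k.natAbs) * B) :
    ∃ H, TemperedFamily P (d + (m + 1)) ν g H := by
  obtain ⟨C, hC⟩ := exists_enorm_block_le_mul_eLpNorm d
  set a := fun (k : ℤ) y => eLpNorm (block P k (g y)) p volume
  have ham (k : ℤ) : Measurable (a k) := measurable_eLpNorm_block P hg k p
  refine ⟨fun y => C * ∑' k : ℤ, (2 ^ ((m + 1) * k.natAbs))⁻¹ * a k y, hg, hint,
    fun y k x => ?_, ?_⟩
  · calc ‖block P k (g y) x‖ₑ ≤ 2 ^ (d * k.natAbs) * (C * a k y) := hC P k (g y) p (hint y) hp x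
      _ = 2 ^ ((d + (m + 1)) * k.natAbs) * (C * ((2 ^ ((m + 1) * k.natAbs))⁻¹ * a k y)) := by
          rw [add_mul, pow_add, mul_assoc, mul_left_comm (C : ℝ≥0∞),
            ENNReal.mul_inv_cancel_left (by positivity) (by finiteness)]
      _ ≤ _ := by
          gcongr
          exact ENNReal.le_tsum (f := fun k : ℤ => (2 ^ ((m + 1) * k.natAbs))⁻¹ * a k y) k
  · rw [lintegral_const_mul' _ _ ENNReal.coe_ne_top,
      lintegral_tsum fun k => ((ham k).const_mul _).aemeasurable]
    refine ENNReal.mul_ne_top ENNReal.coe_ne_top (ne_top_of_le_ne_top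
      (by finiteness : 4 * B ≠ ∞) ?_)
    calc ∑' k : ℤ, ∫⁻ y, (2 ^ ((m + 1) * k.natAbs))⁻¹ * a k y ∂ν
        ≤ ∑' k : ℤ, ((2 : ℝ≥0∞) ^ k.natAbs)⁻¹ * B := by
          refine ENNReal.tsum_le_tsum fun k => ?_
          rw [lintegral_const_mul _ (ham k)]
          refine (mul_le_mul_right (hle k) _).trans_eq ?_
          rw [add_mul, one_mul, add_comm, pow_add, ENNReal.mul_inv (by simp) (by simp), mul_assoc,
            ENNReal.inv_mul_cancel_left (by positivity) (by finiteness)]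
      _ ≤ 4 * B := by
          rw [ENNReal.tsum_mul_right]
          gcongr
          exact tsum_inv_two_pow_natAbs_le

end TemperedOfBesov

section CheminLerner

variable {d : ℕ} {g : ℝ → Rd d → ℂ} {s : ℝ} {p r q : ℝ≥0∞} {K : Set ℝ}

lemma le_ellNorm (hr : 1 ≤ r) (a : ℤ → ℝ≥0∞) (k : ℤ) : a k ≤ ellNorm r a := by
  rw [ellNorm_eq_eLpNorm_count hr]
  exact enorm_le_eLpNorm_count a k (one_pos.trans_le hr).ne'

lemma LqLp_LP_fourierInv (P : LPData d) (hint : ∀ y, Integrable (g y)) (hq : 1 ≤ q) (k : ℤ) :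
    LqLp q p (fun t => LP P k (𝓕⁻ (g t))) =
      eLpNorm (fun y => eLpNorm (block P k (g y)) p volume) q (volume.restrict (Set.Ioi 0)) := by
  simp only [LqLp_eq_eLpNorm hq, LP_fourierInv P (hint _)]

lemma one_le_two_pow_mul_ofReal_rpow (s : ℝ) (k : ℤ) :
    1 ≤ 2 ^ (⌈|s|⌉₊ * k.natAbs) * ENNReal.ofReal (2 ^ (s * k)) := by
  have hs : -(s * k) ≤ ⌈|s|⌉₊ * k.natAbs := by
    rw [Nat.cast_natAbs, Int.cast_abs]
    calc -(s * k) ≤ |s| * |(k : ℝ)| := by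
          rw [← abs_mul]
          exact neg_le_abs _
      _ ≤ _ := by
          gcongr
          exact Nat.le_ceil _
  rw [← ENNReal.ofReal_ofNat 2, ← ENNReal.ofReal_pow zero_le_two,
    ← ENNReal.ofReal_mul (by positivity), ENNReal.one_le_ofReal, ← Real.rpow_natCast,
    ← Real.rpow_add two_pos]
  refine Real.one_le_rpow one_le_two ?_
  push_cast
  linarith

lemma exists_temperedFamily_of_CL_ne_top (P : LPData d) (hg : Measurable (Function.uncurry g))
    (hint : ∀ y, Integrable (g y)) (hK : IsCompact K) (hK0 : K ⊆ Set.Ioi 0)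
    (hp : 1 ≤ p) (hr : 1 ≤ r) (hq : 1 ≤ q) (hfin : CL P s q p r (fun y => 𝓕⁻ (g y)) ≠ ∞) :
    ∃ n H, TemperedFamily P n (volume.restrict K) g H := by
  set Z := CL P s q p r (fun y => 𝓕⁻ (g y))
  have hKfin : volume K ≠ ∞ := hK.measure_lt_top.ne
  have hexp := one_sub_inv_toReal_nonneg hq
  refine ⟨_, exists_temperedFamily_of_lintegral_le P hg hint hp (m := ⌈|s|⌉₊)
    (B := Z * volume K ^ (1 - q.toReal⁻¹)) (by finiteness) fun k => ?_⟩
  set a := fun y => eLpNorm (block P k (g y)) p volume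
  have hZ : ENNReal.ofReal (2 ^ (s * k)) * eLpNorm a q (volume.restrict (Set.Ioi 0)) ≤ Z := by
    rw [← LqLp_LP_fourierInv P hint hq]
    exact le_ellNorm hr (fun j => ENNReal.ofReal (2 ^ (s * j)) *
      LqLp q p fun t => LP P j (𝓕⁻ (g t))) k
  calc ∫⁻ y in K, a y = eLpNorm a 1 (volume.restrict K) := by
        simp [eLpNorm_one_eq_lintegral_enorm]
    _ ≤ eLpNorm a q (volume.restrict K) * volume K ^ (1 - q.toReal⁻¹) := by
        simpa using eLpNorm_le_eLpNorm_mul_rpow_measure_univ hq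
          (measurable_eLpNorm_block P hg k p).aestronglyMeasurable (μ := volume.restrict K)
    _ ≤ eLpNorm a q (volume.restrict (Set.Ioi 0)) * volume K ^ (1 - q.toReal⁻¹) := by
        gcongr
    _ ≤ 2 ^ (⌈|s|⌉₊ * k.natAbs) * (ENNReal.ofReal (2 ^ (s * k)) *
          eLpNorm a q (volume.restrict (Set.Ioi 0))) * volume K ^ (1 - q.toReal⁻¹) := by
        rw [← mul_assoc]
        gcongr
        exact le_mul_of_one_le_left' (one_le_two_pow_mul_ofReal_rpow s k)
    _ ≤ _ := by
        rw [mul_assoc]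
        gcongr

end CheminLerner

section BlockEstimate

variable {d : ℕ} {P : LPData d} {n : ℕ} {g : ℝ → Rd d → ℂ} {H : ℝ → ℝ≥0∞} {K : Set ℝ}

lemma eLpNorm_lintegral_poisson_decay_le (j : ℤ) {a : ℝ → ℝ≥0∞} (ha : Measurable a)
    {q q₁ : ℝ≥0∞} (hq : 1 ≤ q) (hqq : q ≤ q₁) :
    eLpNorm (fun t => ∫⁻ y in Set.Ioi 0, (((1 + 2 ^ j * ‖t - y‖₊) ^ 2)⁻¹ : ℝ≥0) * a y) q₁
        (volume.restrict (Set.Ioi 0)) ≤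
      (NNReal.pi * (2 ^ j)⁻¹ : ℝ≥0) ^ (1 - q.toReal⁻¹ + q₁.toReal⁻¹) *
        eLpNorm a q (volume.restrict (Set.Ioi 0)) := by
  have hrow (t : ℝ) : ∫⁻ y in Set.Ioi 0, (((1 + 2 ^ j * ‖t - y‖₊) ^ 2)⁻¹ : ℝ≥0) ≤
      (NNReal.pi * (2 ^ j)⁻¹ : ℝ≥0) :=
    (lintegral_mono' Measure.restrict_le_self le_rfl).trans
      (lintegral_inv_one_add_mul_sq_le (by positivity) t)
  refine eLpNorm_lintegral_mul_le (by fun_prop) (fun t y => ?_) (ENNReal.coe_ne_zero.2 ?_)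
    ENNReal.coe_ne_top hrow (fun y => ?_) ha hq hqq
  · exact ENNReal.coe_le_one_iff.2 (inv_le_one_of_one_le₀ (one_le_pow₀ le_self_add))
  · exact mul_ne_zero NNReal.pi_ne_zero (by positivity)
  · simpa only [← nndist_eq_nnnorm, nndist_comm _ y] using hrow y

variable (d) in
theorem exists_LqLp_integral_poissonFamily_le [NeZero d] : ∃ C : ℝ≥0, ∀ (P : LPData d) (n : ℕ)
    (g : ℝ → Rd d → ℂ) (H : ℝ → ℝ≥0∞) (K : Set ℝ), IsCompact K → K ⊆ Set.Ioi 0 →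
    TemperedFamily P n (volume.restrict K) g H → UniformlyLocallyBounded g →
    ∀ p q q₁ : ℝ≥0∞, 1 ≤ p → 1 ≤ q → q ≤ q₁ → ∀ j : ℤ,
      LqLp q₁ p (fun t => LP P j fun x => ∫ y in K, 𝓕⁻ (poissonFamily g t y) x) ≤
        (NNReal.pi * (2 ^ j)⁻¹ : ℝ≥0) ^ (1 - q.toReal⁻¹ + q₁.toReal⁻¹) *
          (C * LqLp q p fun t => LP P j (𝓕⁻ (g t))) := by
  obtain ⟨C, hC⟩ := exists_block_poisson_le d
  refine ⟨C, fun P n g H K hK hK0 hg hbdd p q q₁ hp hq hqq j => ?_⟩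
  have : IsFiniteMeasure (volume.restrict K) := ⟨by simpa using hK.measure_lt_top⟩
  rw [LqLp_LP_fourierInv P hg.integrable hq, LqLp_eq_eLpNorm (hq.trans hqq)]
  set a := fun y => eLpNorm (block P j (g y)) p volume
  have ha : Measurable a := measurable_eLpNorm_block P hg.measurable j p
  have hslice (t : ℝ) : eLpNorm (LP P j fun x => ∫ y in K, 𝓕⁻ (poissonFamily g t y) x) p volume ≤
      ∫⁻ y in Set.Ioi 0, (((1 + 2 ^ j * ‖t - y‖₊) ^ 2)⁻¹ : ℝ≥0) * (C * a y) := by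
    obtain ⟨C', hC'⟩ := hg.exists_poissonFamily
    have hm : Measurable (Function.uncurry fun y x => ‖block P j (poissonFamily g t y) x‖ₑ) :=
      (measurable_fourierInv (measurable_mul_uncurry (hC' t).measurable
        (𝓕 (dilate j P.φ)).continuous.measurable)).enorm
    calc _ ≤ eLpNorm (fun x => ∫⁻ y in K, ‖block P j (poissonFamily g t y) x‖ₑ) p volume :=
          eLpNorm_mono_enorm fun x =>
            hg.enorm_LP_integral_poissonFamily_le Measure.restrict_le_self hbdd t j x
      _ ≤ ∫⁻ y in K, eLpNorm (block P j (poissonFamily g t y)) p volume := by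
          simpa only [eLpNorm_enorm] using eLpNorm_lintegral_le hm hp
      _ ≤ ∫⁻ y in Set.Ioi 0, (((1 + 2 ^ j * ‖t - y‖₊) ^ 2)⁻¹ : ℝ≥0) * (C * a y) :=
          lintegral_mono' (Measure.restrict_mono hK0 le_rfl) fun y =>
            (hC P j ‖t - y‖₊ (g y) (hg.integrable y)).1 p hp
  calc _ ≤ _ := eLpNorm_mono_enorm hslice
    _ ≤ _ := eLpNorm_lintegral_poisson_decay_le j (ha.const_mul _) hq hqq
    _ ≤ _ := by
        gcongr
        exact eLpNorm_le_nnreal_smul_eLpNorm_of_ae_le_mul' (.of_forall fun y => le_rfl) q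

end BlockEstimate

section Source

variable {d : ℕ} {F : ℝ → Rd d → ℂ} {K : Set ℝ}

lemma integrable_FT_iff {f : Rd d → ℂ} : Integrable (FT f) ↔ Integrable (𝓕 f) := by
  rw [funext (FT_eq_fourier f)]
  exact integrable_comp_smul_iff volume _ (inv_ne_zero Real.two_pi_pos.ne')

lemma integrable_FT_schwartzMap (f : 𝓢(Rd d, ℂ)) : Integrable (FT f) := by
  rw [integrable_FT_iff, ← SchwartzMap.fourier_coe]
  exact (𝓕 f).integrable

lemma integrable_of_sliceSchwartz (hF : SliceSchwartz F) (t : ℝ) (ht : 0 < t) :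
    Integrable (F t) :=
  (hF.2 t ht).elim fun f hf => hf ▸ f.integrable

lemma integrable_FT_of_sliceSchwartz (hF : SliceSchwartz F) (t : ℝ) (ht : 0 < t) :
    Integrable (FT (F t)) :=
  (hF.2 t ht).elim fun f hf => hf ▸ integrable_FT_schwartzMap f

lemma continuousOn_uncurry (hF : ContinuousOn (fun z : Rd d × ℝ => F z.2 z.1) (.univ ×ˢ .Ioi 0))
    (hK0 : K ⊆ Set.Ioi 0) : ContinuousOn (Function.uncurry F) (K ×ˢ Set.univ) :=
  hF.comp (f := Prod.swap) continuous_swap.continuousOn fun _ hz => ⟨trivial, hK0 hz.1⟩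

lemma measurable_uncurry_of_eq_zero (hK : MeasurableSet K)
    (hF : ContinuousOn (Function.uncurry F) (K ×ˢ Set.univ)) (hFK : ∀ t ∉ K, F t = 0) :
    Measurable (Function.uncurry F) := by
  classical
  have hpiece : (K ×ˢ (Set.univ : Set (Rd d))).piecewise (Function.uncurry F) 0 =
      Function.uncurry F := by
    rw [Set.piecewise_eq_indicator, Set.indicator_eq_self]
    intro z hz
    by_contra h
    exact hz (congrFun (hFK z.1 fun hzK => h ⟨hzK, trivial⟩) z.2)
  exact hpiece ▸ hF.measurable_piecewise continuousOn_const (hK.prod .univ)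

lemma measurable_fourier (hF : Measurable (Function.uncurry F)) :
    Measurable (Function.uncurry fun y => 𝓕 (F y)) := by
  have heq : (Function.uncurry fun y => 𝓕 (F y)) =
      (Function.uncurry fun y => 𝓕⁻ (F y)) ∘ fun z => (z.1, -z.2) := by
    ext z
    change 𝓕 (F z.1) z.2 = 𝓕⁻ (F z.1) (-z.2)
    rw [Real.fourierInv_eq_fourier_neg, neg_neg]
  rw [heq]
  exact (measurable_fourierInv hF).comp (measurable_fst.prodMk measurable_snd.neg)

lemma exists_enorm_le_of_eq_zero (hK : IsCompact K)
    (hF : ContinuousOn (Function.uncurry F) (K ×ˢ Set.univ)) (hFK : ∀ t ∉ K, F t = 0) (R : ℝ) :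
    ∃ M : ℝ≥0, ∀ y x, ‖x‖ ≤ R → ‖F y x‖ₑ ≤ M := by
  obtain ⟨M, hM⟩ := (hK.prod (isCompact_closedBall (0 : Rd d) R)).exists_bound_of_continuousOn
    (hF.mono (Set.prod_mono le_rfl (Set.subset_univ _)))
  refine ⟨M.toNNReal, fun y x hx => ?_⟩
  by_cases hy : y ∈ K
  · rw [← ofReal_norm]
    exact ENNReal.ofReal_le_ofReal (hM (y, x) ⟨hy, by simpa using hx⟩)
  · simp [hFK y hy]

lemma poisson_eq_fourierInv (f : Rd d → ℂ) (τ : ℝ) (x : Rd d) :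
    (((2 * Real.pi) ^ d : ℝ) : ℂ)⁻¹ * ∫ ξ : Rd d, cexp (I * (↑(⟪x, ξ⟫) : ℂ)) *
      cexp (-(↑(τ * ‖ξ‖) : ℂ)) * FT f ξ = 𝓕⁻ (fun η => poisson τ η * 𝓕 f η) x := by
  have hsub := Measure.integral_comp_smul volume (fun ξ : Rd d =>
    cexp (I * (↑(⟪x, ξ⟫) : ℂ)) * cexp (-(↑(τ * ‖ξ‖) : ℂ)) * FT f ξ) (2 * Real.pi)
  rw [finrank_euclideanSpace_fin, abs_of_pos (by positivity), Complex.real_smul, ofReal_inv] at hsub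
  rw [← hsub, fourierInv_apply]
  refine integral_congr_ae (.of_forall fun η => ?_)
  simp only
  rw [FT_eq_fourier, inv_smul_smul₀ Real.two_pi_pos.ne', poisson, norm_smul,
    Real.norm_of_nonneg Real.two_pi_pos.le, inner_smul_right, real_inner_comm x η, mul_assoc,
    ofReal_exp, ← ofReal_neg]
  congr 2
  · push_cast
    ring_nf
  · ring_nf

end Source

section Exponents

lemma ofReal_two_rpow_mul_rpow_le (s : ℝ) {α β : ℝ} (hβα : β ≤ α) (j : ℤ) :
    ENNReal.ofReal (2 ^ ((s + β) * j)) * (NNReal.pi * (2 ^ j)⁻¹ : ℝ≥0) ^ (1 - α + β) ≤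
      NNReal.pi * ENNReal.ofReal (2 ^ ((s + α - 1) * j)) := by
  have hconv : ((NNReal.pi * (2 ^ j)⁻¹ : ℝ≥0) : ℝ≥0∞) =
      ENNReal.ofReal (Real.pi * 2 ^ (-(j : ℝ))) := by
    rw [← ENNReal.ofReal_coe_nnreal, Real.rpow_neg two_pos.le, Real.rpow_intCast]
    rfl
  have hpi : Real.pi ^ (1 - α + β) ≤ Real.pi := by
    simpa using Real.rpow_le_rpow_of_exponent_le (y := 1 - α + β) (z := 1)
      (one_le_two.trans Real.two_le_pi) (by linarith)
  rw [hconv, ENNReal.ofReal_rpow_of_pos (by positivity), ← ENNReal.ofReal_coe_nnreal,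
    ← ENNReal.ofReal_mul (by positivity), ← ENNReal.ofReal_mul (by positivity)]
  refine ENNReal.ofReal_le_ofReal ?_
  calc (2 : ℝ) ^ ((s + β) * j) * (Real.pi * 2 ^ (-(j : ℝ))) ^ (1 - α + β)
      = Real.pi ^ (1 - α + β) * 2 ^ ((s + α - 1) * j) := by
        rw [Real.mul_rpow (by positivity) (by positivity), ← Real.rpow_mul two_pos.le,
          mul_left_comm, ← Real.rpow_add two_pos]
        ring_nf
    _ ≤ _ := by
        rw [NNReal.coe_real_pi]
        gcongr

end Exponents

section DuhamelIntegral

variable {d : ℕ} {F : ℝ → Rd d → ℂ} {K : Set ℝ}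

/-- The solution `u(x, t) = ∫_0^∞ e^{-|t-y||∇|} F(x, y) dy` of the theorem, curried as `u t x`. -/
def duhamelIntegral (F : ℝ → Rd d → ℂ) (t : ℝ) (x : Rd d) : ℂ :=
  ∫ y in Set.Ioi (0 : ℝ), (((2 * Real.pi) ^ d : ℝ) : ℂ)⁻¹ *
    ∫ ξ : Rd d, cexp (I * (↑(⟪x, ξ⟫) : ℂ)) * cexp (-(↑(|t - y| * ‖ξ‖) : ℂ)) * FT (F y) ξ

lemma duhamelIntegral_eq (hK0 : K ⊆ Set.Ioi 0) (hFK : ∀ t ∉ K, F t = 0) :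
    duhamelIntegral F = fun t x => ∫ y in K, 𝓕⁻ (poissonFamily (fun y => 𝓕 (F y)) t y) x := by
  ext t x
  rw [duhamelIntegral, setIntegral_eq_of_subset_of_forall_sdiff_eq_zero measurableSet_Ioi hK0]
  · exact integral_congr_ae (.of_forall fun y => poisson_eq_fourierInv (F y) |t - y| x)
  · intro y hy
    simp [hFK y hy.2, FT]

lemma integrable_fourier (hF : ∀ t, 0 < t → Integrable (FT (F t))) (hK0 : K ⊆ Set.Ioi 0)
    (hFK : ∀ t ∉ K, F t = 0) (t : ℝ) : Integrable (𝓕 (F t)) := by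
  rw [← integrable_FT_iff]
  by_cases ht : t ∈ K
  · exact hF t (hK0 ht)
  · rw [hFK t ht]
    exact integrable_FT_schwartzMap 0

lemma fourierInv_fourier_eq (hcont : ContinuousOn (Function.uncurry F) (K ×ˢ Set.univ))
    (hint : ∀ t, 0 < t → Integrable (F t)) (hfour : ∀ t, 0 < t → Integrable (FT (F t)))
    (hK0 : K ⊆ Set.Ioi 0) (hFK : ∀ t ∉ K, F t = 0) (t : ℝ) : 𝓕⁻ (𝓕 (F t)) = F t := by
  have hfour_t := integrable_fourier hfour hK0 hFK t
  by_cases ht : t ∈ K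
  · exact (hcont.comp_continuous (.prodMk_right t) fun _ => ⟨ht, trivial⟩).fourierInv_fourier_eq
      (hint t (hK0 ht)) hfour_t
  · rw [hFK t ht] at hfour_t ⊢
    exact continuous_zero.fourierInv_fourier_eq (integrable_zero _ _ _) hfour_t

lemma CL_le_mul_CL {P : LPData d} {s s₁ : ℝ} {q q₁ p r : ℝ≥0∞} {f g : ℝ → Rd d → ℂ} {c : ℝ≥0}
    (hr : 1 ≤ r)
    (h : ∀ j : ℤ, ENNReal.ofReal (2 ^ (s₁ * j)) * LqLp q₁ p (fun t => LP P j (g t)) ≤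
      c * (ENNReal.ofReal (2 ^ (s * j)) * LqLp q p fun t => LP P j (f t))) :
    CL P s₁ q₁ p r g ≤ c * CL P s q p r f := by
  rw [CL, CL, ellNorm_eq_eLpNorm_count hr, ellNorm_eq_eLpNorm_count hr]
  exact eLpNorm_le_nnreal_smul_eLpNorm_of_ae_le_mul' (.of_forall h) r

variable (d) in
theorem exists_CL_integral_poissonFamily_le [NeZero d] : ∃ C : ℝ≥0, 0 < C ∧ ∀ (P : LPData d)
    (g : ℝ → Rd d → ℂ) (K : Set ℝ), IsCompact K → K ⊆ Set.Ioi 0 →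
    Measurable (Function.uncurry g) → (∀ y, Integrable (g y)) → UniformlyLocallyBounded g →
    ∀ (s : ℝ) (p r q q₁ : ℝ≥0∞), 1 ≤ p → 1 ≤ r → 1 ≤ q → q ≤ q₁ →
      CL P (s + q₁.toReal⁻¹) q₁ p r (fun t x => ∫ y in K, 𝓕⁻ (poissonFamily g t y) x) ≤
        C * CL P (s + q.toReal⁻¹ - 1) q p r fun y => 𝓕⁻ (g y) := by
  obtain ⟨C, hC⟩ := exists_LqLp_integral_poissonFamily_le d
  refine ⟨NNReal.pi * (C + 1), by positivity [NNReal.pi_pos],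
    fun P g K hK hK0 hg hint hbdd s p r q q₁ hp hr hq hqq => ?_⟩
  by_cases hfin : CL P (s + q.toReal⁻¹ - 1) q p r (fun y => 𝓕⁻ (g y)) = ∞
  · rw [hfin, ENNReal.mul_top (by simp [NNReal.pi_ne_zero])]
    exact le_top
  obtain ⟨n, H, hH⟩ := exists_temperedFamily_of_CL_ne_top P hg hint hK hK0 hp hr hq hfin
  have hinv : q₁.toReal⁻¹ ≤ q.toReal⁻¹ := by
    simpa only [ENNReal.toReal_inv] using
      ENNReal.toReal_mono (by simpa using (one_pos.trans_le hq).ne') (ENNReal.inv_le_inv.2 hqq)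
  refine CL_le_mul_CL hr fun j => ?_
  set B := LqLp q p fun t => LP P j (𝓕⁻ (g t))
  calc _ ≤ ENNReal.ofReal (2 ^ ((s + q₁.toReal⁻¹) * j)) *
        ((NNReal.pi * (2 ^ j)⁻¹ : ℝ≥0) ^ (1 - q.toReal⁻¹ + q₁.toReal⁻¹) * (C * B)) := by
        gcongr
        exact hC P n g H K hK hK0 hH hbdd p q q₁ hp hq hqq j
    _ ≤ NNReal.pi * ENNReal.ofReal (2 ^ ((s + q.toReal⁻¹ - 1) * j)) * ((C + 1 : ℝ≥0) * B) := by
        rw [← mul_assoc]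
        refine mul_le_mul' (ofReal_two_rpow_mul_rpow_le s hinv j) ?_
        gcongr
        exact le_add_of_nonneg_right zero_le_one
    _ = _ := by
        push_cast
        ring

end DuhamelIntegral

end Duhamel

theorem duhamel_chemin_lerner_estimate_general (d : ℕ) (hd : 1 ≤ d) :
    ∃ C > (0 : ℝ), ∀ (P : LPData d) (F : ℝ → Rd d → ℂ),
      ContinuousOn (fun z : Rd d × ℝ => F z.2 z.1) (Set.univ ×ˢ Set.Ioi 0) →
      (∀ t, 0 < t → Integrable (F t)) → (∀ t, 0 < t → Integrable (FT (F t))) →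
      (∃ K : Set ℝ, IsCompact K ∧ K ⊆ Set.Ioi (0 : ℝ) ∧ ∀ t ∉ K, F t = 0) →
      ∀ s : ℝ, ∀ p r q q₁ : ℝ≥0∞, 1 ≤ p → 1 ≤ r → 1 ≤ q → q ≤ q₁ →
      CL P (s + (1 / q₁).toReal) q₁ p r (Duhamel.duhamelIntegral F) ≤
        ENNReal.ofReal C * CL P (s + (1 / q).toReal - 1) q p r F := by
  have : NeZero d := ⟨by lia⟩
  obtain ⟨C, hC0, hC⟩ := Duhamel.exists_CL_integral_poissonFamily_le d
  refine ⟨C, hC0, ?_⟩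
  rintro P F hF hint hfour ⟨K, hK, hK0, hFK⟩ s p r q q₁ hp hr hq hqq
  have hcont := Duhamel.continuousOn_uncurry hF hK0
  have hmeas := Duhamel.measurable_uncurry_of_eq_zero hK.measurableSet hcont hFK
  have hinv := Duhamel.fourierInv_fourier_eq hcont hint hfour hK0 hFK
  have hbdd : Duhamel.UniformlyLocallyBounded fun y => FourierTransform.fourier (F y) := fun R => by
    simpa only [hinv] using Duhamel.exists_enorm_le_of_eq_zero hK hcont hFK R
  have key := hC P _ K hK hK0 (Duhamel.measurable_fourier hmeas)
    (Duhamel.integrable_fourier hfour hK0 hFK) hbdd s p r q q₁ hp hr hq hqq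
  simpa only [hinv, Duhamel.duhamelIntegral_eq hK0 hFK, one_div, ENNReal.toReal_inv,
    ENNReal.ofReal_coe_nnreal] using key

/-- Duhamel-type maximal regularity estimate for the kernel
`e^{-|t-y||∇|}` in Chemin–Lerner spaces, with a gain of one derivative:
`‖u‖_{L̃^{q₁}(Ḃ^{s+1/q₁}_{p,r})} ≤ C ‖F‖_{L̃^{q}(Ḃ^{s+1/q-1}_{p,r})}`. -/
theorem duhamel_chemin_lerner_estimate (d : ℕ) (hd : 1 ≤ d) (P : LPData d) :
    ∃ C > (0:ℝ), ∀ F : ℝ → Rd d → ℂ, SliceSchwartz F →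
      (∃ K : Set ℝ, IsCompact K ∧ K ⊆ Set.Ioi (0:ℝ) ∧ ∀ t ∉ K, F t = 0) →
      ∀ s : ℝ, ∀ p r q q₁ : ℝ≥0∞, 1 ≤ p → 1 ≤ r → 1 ≤ q → q ≤ q₁ →
      CL P (s + (1/q₁).toReal) q₁ p r
          (fun t x => ∫ y in Set.Ioi (0:ℝ),
            (((2 * Real.pi) ^ d : ℝ) : ℂ)⁻¹ *
              ∫ ξ : Rd d, Complex.exp (Complex.I * (↑(⟪x, ξ⟫) : ℂ)) *
                Complex.exp (-(↑(|t - y| * ‖ξ‖) : ℂ)) * FT (F y) ξ)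
        ≤ ENNReal.ofReal C * CL P (s + (1/q).toReal - 1) q p r F := by
  obtain ⟨C, hC0, hC⟩ := duhamel_chemin_lerner_estimate_general d hd
  exact ⟨C, hC0, fun F hF => hC P F hF.1 (Duhamel.integrable_of_sliceSchwartz hF)
    (Duhamel.integrable_FT_of_sliceSchwartz hF)⟩
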